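/- arXiv:0903.0386 — 6 statements merged into one kernel-verified Lean document; each statement's English description precedes it below -/
import Mathlib

section
/- (James) Let M be an even nondegenerate lattice of signature (t₊, t₋) and let L be an even unimodular lattice of signature (l₊, l₋). If t₊ + t₋ ≤ min{l₊, l₋} − 1, then a primitive embedding of M into L exists, and any two primitive embeddings of M into L differ by composition with an automorphism of L. -/
open Matrix

/-- The number of positive eigenvalues of an integer matrix, viewed as a real
symmetric matrix (0 if the real matrix is not Hermitian). -/
noncomputable def sigPlus {n : ℕ} (G : Matrix (Fin n) (Fin n) ℤ) : ℕ :=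
  if h : (G.map ((↑·) : ℤ → ℝ)).IsHermitian then
    Nat.card {i : Fin n // 0 < h.eigenvalues i}
  else 0

/-- The number of negative eigenvalues of an integer matrix, viewed as a real
symmetric matrix (0 if the real matrix is not Hermitian). -/
noncomputable def sigMinus {n : ℕ} (G : Matrix (Fin n) (Fin n) ℤ) : ℕ :=
  if h : (G.map ((↑·) : ℤ → ℝ)).IsHermitian then
    Nat.card {i : Fin n // h.eigenvalues i < 0}
  else 0

/-- An embedding of the lattice `(ℤ^m, M)` into the lattice `(ℤ^n, G)`:
an injective ℤ-linear map respecting the bilinear forms. -/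
def IsLatticeEmbedding {m n : ℕ} (M : Matrix (Fin m) (Fin m) ℤ)
    (G : Matrix (Fin n) (Fin n) ℤ) (T : Matrix (Fin n) (Fin m) ℤ) : Prop :=
  Function.Injective T.mulVec ∧
    ∀ x y : Fin m → ℤ, T.mulVec x ⬝ᵥ G.mulVec (T.mulVec y) = x ⬝ᵥ M.mulVec y

/-- A primitive embedding: an embedding whose cokernel `ℤ^n / T(ℤ^m)` is
torsion-free, i.e. if a nonzero multiple of `v` lies in the image then so does `v`. -/
def IsPrimitiveLatticeEmbedding {m n : ℕ} (M : Matrix (Fin m) (Fin m) ℤ)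
    (G : Matrix (Fin n) (Fin n) ℤ) (T : Matrix (Fin n) (Fin m) ℤ) : Prop :=
  IsLatticeEmbedding M G T ∧
    ∀ (v : Fin n → ℤ) (k : ℤ), k ≠ 0 → (∃ x, T.mulVec x = k • v) → ∃ x, T.mulVec x = v

/-- An automorphism of the lattice `(ℤ^n, G)`: a matrix in `GL(n, ℤ)`
preserving the Gram matrix. -/
def IsLatticeAut {n : ℕ} (G S : Matrix (Fin n) (Fin n) ℤ) : Prop :=
  IsUnit S.det ∧ Sᵀ * G * S = G

/-!
The unimodular lattice `L` contains `min l₊ l₋` mutually orthogonal hyperbolic planes. An orthogonal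
basis of `L ⊗ ℚ` has a class in the Witt group of `ℚ`, which by Milnor's induction over the primes
is determined, up to multiples of `⟨1⟩`, by its residues at all primes. Unimodularity makes these
residues vanish, so `L ⊗ ℚ` is Witt equivalent to a multiple of `⟨1⟩` and has an isotropic subspace
of dimension `min l₊ l₋`. Its intersection with `L` is a primitive isotropic sublattice; by
unimodularity a basis of it has a dual family, which evenness allows to be made isotropic.

Let `e i`, `f i` be bases of `m` such planes, leaving one more plane to spare, and write
`M = U + Uᵀ` with `U` lower triangular. The vectors `e i + ∑ j, U i j • f j` have Gram matrix `M`,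
and they span a primitive sublattice because they are dual to the `f i`. Conversely, the image of a
basis under any primitive embedding also has a dual family. Eichler transvections, with the spare
plane providing room for a Euclidean algorithm on coordinates, move these images one at a time to
the vectors above. Hence any two primitive embeddings differ by an automorphism of `L`.
-/

namespace James

open QuadraticMap

section Transvections

variable {R V : Type*} [CommRing R] [AddCommGroup V] [Module R V] {Q : QuadraticForm R V}
  {W : Submodule R V}

/-- The group of linear automorphisms preserving the quadratic form `Q` and fixing the submodule
`W` pointwise. -/
def isometriesFixing (Q : QuadraticForm R V) (W : Submodule R V) : Subgroup (V ≃ₗ[R] V) where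
  carrier := {g | (∀ x, Q (g x) = Q x) ∧ ∀ w ∈ W, g w = w}
  one_mem' := ⟨fun _ => rfl, fun _ _ => rfl⟩
  mul_mem' := fun {g h} hg hh =>
    ⟨fun x => (hg.1 (h x)).trans (hh.1 x), fun w hw => by
      rw [LinearEquiv.mul_apply, hh.2 w hw, hg.2 w hw]⟩
  inv_mem' := fun {g} hg =>
    ⟨fun x => by
      rw [← hg.1 (g⁻¹ x)]
      exact congrArg Q (g.apply_symm_apply x),
    fun w hw => (congrArg g.symm (hg.2 w hw)).symm.trans (g.symm_apply_apply w)⟩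

theorem isometriesFixing_anti {W' : Submodule R V} (h : W ≤ W') :
    isometriesFixing Q W' ≤ isometriesFixing Q W :=
  fun _ hg => ⟨hg.1, fun w hw => hg.2 w (h hw)⟩

theorem polar_apply_apply_of_mem_isometriesFixing {g : V ≃ₗ[R] V}
    (hg : g ∈ isometriesFixing Q W) (x y : V) : polar Q (g x) (g y) = polar Q x y := by
  simp only [polar, ← map_add, hg.1]

/-- The Eichler transvection attached to an isotropic vector `u` and a vector `x` orthogonal to
`u`. -/
def eichler (Q : QuadraticForm R V) (u x : V) : V →ₗ[R] V :=
  LinearMap.id - (Q.polarBilin u).smulRight x + (Q.polarBilin x).smulRight u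
    - Q x • (Q.polarBilin u).smulRight u

theorem eichler_apply (u x y : V) :
    eichler Q u x y = y - polar Q u y • x + polar Q x y • u - (Q x * polar Q u y) • u := by
  simp [eichler, mul_smul]

theorem polar_eichler (u x y s : V) :
    polar Q (eichler Q u x y) s = polar Q y s - polar Q u y * polar Q x s
      + polar Q x y * polar Q u s - Q x * polar Q u y * polar Q u s := by
  simp [eichler_apply, polar_sub_left, polar_add_left, polar_smul_left]

variable {u x : V}

theorem map_eichler (hu : Q u = 0) (hux : polar Q u x = 0) (y : V) :
    Q (eichler Q u x y) = Q y := by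
  have hadd (a b : V) : Q (a + b) = Q a + Q b + polar Q a b := by simp [polar]
  have h : eichler Q u x y = y + (polar Q x y - Q x * polar Q u y) • u + -(polar Q u y • x) := by
    rw [eichler_apply]
    module
  rw [h, hadd, hadd]
  simp only [QuadraticMap.map_neg, QuadraticMap.map_smul, hu, polar_smul_right, polar_add_left,
    polar_smul_left, polar_neg_right, polar_comm Q y, hux, smul_eq_mul]
  ring

theorem eichler_neg_eichler (hu : Q u = 0) (hux : polar Q u x = 0) (y : V) :
    eichler Q u (-x) (eichler Q u x y) = y := by
  have huy : polar Q u (eichler Q u x y) = polar Q u y := by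
    rw [polar_comm, polar_eichler, polar_self, hu, polar_comm Q x, hux, polar_comm Q y]
    simp
  have hxy : polar Q x (eichler Q u x y) = polar Q x y - 2 * Q x * polar Q u y := by
    rw [polar_comm, polar_eichler, polar_self, hux, polar_comm Q y]
    simp only [nsmul_eq_mul, Nat.cast_ofNat]
    ring
  rw [eichler_apply, QuadraticMap.map_neg, polar_neg_left, huy, hxy, eichler_apply]
  module

theorem exists_mem_isometriesFixing_eq_eichler (hu : Q u = 0) (hux : polar Q u x = 0)
    (huW : u ∈ W.orthogonalBilin Q.polarBilin) (hxW : x ∈ W.orthogonalBilin Q.polarBilin) :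
    ∃ g ∈ isometriesFixing Q W, ∀ y, g y = eichler Q u x y := by
  refine ⟨LinearEquiv.ofLinearMap (eichler Q u x) (eichler Q u (-x)) ?_ ?_,
    ⟨map_eichler hu hux, fun w hw => ?_⟩, fun _ => rfl⟩
  · ext y
    simpa using eichler_neg_eichler (x := -x) hu (by rw [polar_neg_right, hux, neg_zero]) y
  · ext y
    exact eichler_neg_eichler hu hux y
  · have hwu : polar Q u w = 0 := (polar_comm Q u w).trans (huW w hw)
    have hwx : polar Q x w = 0 := (polar_comm Q x w).trans (hxW w hw)
    simp [eichler_apply, hwu, hwx]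

end Transvections

section HyperbolicFamilies

variable {R V ι : Type*} [CommRing R] [AddCommGroup V] [Module R V] {Q : QuadraticForm R V}

/-- Mutually orthogonal hyperbolic planes: `e i` and `f i` are isotropic vectors spanning a
hyperbolic plane, and planes with different indices are orthogonal. -/
structure IsHyperbolicFamily (Q : QuadraticForm R V) (e f : ι → V) : Prop where
  map_left : ∀ i, Q (e i) = 0
  map_right : ∀ i, Q (f i) = 0
  polar_left : ∀ i j, polar Q (e i) (e j) = 0
  polar_right : ∀ i j, polar Q (f i) (f j) = 0
  polar_self : ∀ i, polar Q (e i) (f i) = 1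
  polar_ne : ∀ i j, i ≠ j → polar Q (e i) (f j) = 0

namespace IsHyperbolicFamily

variable {e f : ι → V}

theorem comp {κ : Type*} (h : IsHyperbolicFamily Q e f) {φ : κ → ι} (hφ : φ.Injective) :
    IsHyperbolicFamily Q (e ∘ φ) (f ∘ φ) where
  map_left i := h.map_left (φ i)
  map_right i := h.map_right (φ i)
  polar_left i j := h.polar_left (φ i) (φ j)
  polar_right i j := h.polar_right (φ i) (φ j)
  polar_self i := h.polar_self (φ i)
  polar_ne i j hij := h.polar_ne (φ i) (φ j) (hφ.ne hij)

theorem pair (h : IsHyperbolicFamily Q e f) {i j : ι} (hij : i ≠ j) :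
    IsHyperbolicFamily Q ![e i, e j] ![f i, f j] := by
  convert h.comp (φ := ![i, j])
    (by simpa [Function.Injective, Fin.forall_fin_two] using ⟨hij, hij.symm⟩)
    using 1 <;> ext k <;> fin_cases k <;> rfl

theorem swap_snd {e f : Fin 2 → V} (h : IsHyperbolicFamily Q e f) :
    IsHyperbolicFamily Q ![e 0, f 1] ![f 0, e 1] := by
  obtain ⟨he, hf, hee, hff, hef, hne⟩ := h
  constructor <;>
    simp [Fin.forall_fin_two, he, hf, hee, hff, hef, hne, polar_comm Q (f _) (e _)]

end IsHyperbolicFamily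

end HyperbolicFamilies

section Orbits

variable {R V : Type*} [AddCommGroup V]

section CommRing

variable [CommRing R] [Module R V] {Q : QuadraticForm R V} {W : Submodule R V} {e f : Fin 2 → V}

theorem exists_polar_right_zero_sub (h : IsHyperbolicFamily Q e f)
    (he : ∀ i, e i ∈ W.orthogonalBilin Q.polarBilin)
    (hf : ∀ i, f i ∈ W.orthogonalBilin Q.polarBilin) (t : R) (w : V) :
    ∃ g ∈ isometriesFixing Q W, polar Q (g w) (f 0) = polar Q w (f 0) - t * polar Q w (f 1) ∧
      polar Q (g w) (f 1) = polar Q w (f 1) := by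
  have hfe : polar Q (f 1) (e 0) = 0 := by rw [polar_comm, h.polar_ne 0 1 (by decide)]
  obtain ⟨g, hg, hgy⟩ := exists_mem_isometriesFixing_eq_eichler (h.map_right 1)
    (x := t • e 0) (by simp [polar_smul_right, hfe]) (hf 1) (Submodule.smul_mem _ t (he 0))
  refine ⟨g, hg, ?_, ?_⟩ <;> rw [hgy, polar_eichler] <;>
    simp [polar_smul_left, QuadraticMap.map_smul, h.polar_self, h.polar_right, h.map_left,
      h.polar_ne 0 1 (by decide), polar_comm Q w, mul_comm]

theorem exists_polar_right_one_add (h : IsHyperbolicFamily Q e f)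
    (he : ∀ i, e i ∈ W.orthogonalBilin Q.polarBilin) {x : V}
    (hx : x ∈ W.orthogonalBilin Q.polarBilin) (hxe : polar Q x (e 1) = 0)
    (w : V) :
    ∃ g ∈ isometriesFixing Q W,
      polar Q (g w) (f 0) = polar Q w (f 0) - polar Q w (e 1) * polar Q x (f 0) ∧
      polar Q (g w) (f 1) = polar Q w (f 1) + polar Q x w
        - polar Q w (e 1) * (polar Q x (f 1) + Q x) := by
  have hef : polar Q (e 1) (f 0) = 0 := h.polar_ne 1 0 (by decide)
  obtain ⟨g, hg, hgy⟩ := exists_mem_isometriesFixing_eq_eichler (h.map_left 1)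
    (by rw [polar_comm, hxe]) (he 1) hx
  refine ⟨g, hg, ?_, ?_⟩ <;> rw [hgy, polar_eichler] <;>
    simp only [h.polar_self, hef, polar_comm Q w] <;> ring
theorem exists_polar_right_one_add_mul (h : IsHyperbolicFamily Q e f)
    (he : ∀ i, e i ∈ W.orthogonalBilin Q.polarBilin)
    (hf : ∀ i, f i ∈ W.orthogonalBilin Q.polarBilin) (t : R) (w : V) :
    ∃ g ∈ isometriesFixing Q W, polar Q (g w) (f 0) = polar Q w (f 0) ∧
      polar Q (g w) (f 1) = polar Q w (f 1) + t * polar Q w (f 0) := by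
  have hfe : polar Q (f 0) (e 1) = 0 := by rw [polar_comm, h.polar_ne 1 0 (by decide)]
  obtain ⟨g, hg, hg₀, hg₁⟩ := exists_polar_right_one_add h he (Submodule.smul_mem _ t (hf 0))
    (by simp [polar_smul_left, hfe]) w
  refine ⟨g, hg, ?_, ?_⟩
  · simp [hg₀, polar_smul_left, h.polar_right]
  · simp [hg₁, polar_smul_left, QuadraticMap.map_smul, h.map_right, h.polar_right,
      polar_comm Q w]

theorem exists_polar_right_zero_eq_one (h : IsHyperbolicFamily Q e f)
    (he : ∀ i, e i ∈ W.orthogonalBilin Q.polarBilin)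
    (hf : ∀ i, f i ∈ W.orthogonalBilin Q.polarBilin) {w : V} (hw : IsUnit (polar Q w (f 0))) :
    ∃ g ∈ isometriesFixing Q W, polar Q (g w) (f 0) = 1 := by
  obtain ⟨a, ha⟩ := hw.exists_left_inv
  obtain ⟨g₁, hg₁, hw₁, hw₁'⟩ := exists_polar_right_one_add_mul h he hf
    ((polar Q w (f 0) - 1 - polar Q w (f 1)) * a) w
  obtain ⟨g₂, hg₂, hw₂, -⟩ := exists_polar_right_zero_sub h he hf 1 (g₁ w)
  refine ⟨g₂ * g₁, mul_mem hg₂ hg₁, ?_⟩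
  rw [LinearEquiv.mul_apply, hw₂, hw₁, hw₁', mul_assoc, ha]
  ring

end CommRing

section EuclideanDomain

variable [EuclideanDomain R] [Module R V] {Q : QuadraticForm R V} {W : Submodule R V}
  {e f : Fin 2 → V}

theorem exists_polar_right_zero_dvd (h : IsHyperbolicFamily Q e f)
    (he : ∀ i, e i ∈ W.orthogonalBilin Q.polarBilin)
    (hf : ∀ i, f i ∈ W.orthogonalBilin Q.polarBilin) (w : V) :
    ∃ g ∈ isometriesFixing Q W, polar Q (g w) (f 0) ∣ polar Q w (f 0) ∧
      polar Q (g w) (f 0) ∣ polar Q w (f 1) := by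
  classical
  suffices H : ∀ a b : R, ∀ w, (polar Q w (f 0) = a ∧ polar Q w (f 1) = b) ∨
      (polar Q w (f 0) = b ∧ polar Q w (f 1) = a) →
      ∃ g ∈ isometriesFixing Q W, polar Q (g w) (f 0) ∣ a ∧ polar Q (g w) (f 0) ∣ b from
    H _ _ w (.inl ⟨rfl, rfl⟩)
  intro a b
  induction a, b using EuclideanDomain.GCD.induction with
  | H0 b =>
    rintro w (⟨hw₀, hw₁⟩ | ⟨hw₀, -⟩)
    · obtain ⟨g, hg, hgw, -⟩ := exists_polar_right_zero_sub h he hf (-1) w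
      refine ⟨g, hg, dvd_zero _, ?_⟩
      simp [hgw, hw₀, hw₁]
    · exact ⟨1, one_mem _, dvd_zero _, hw₀.dvd⟩
  | H1 a b _ ih =>
    have hmod : b + -(b / a) * a = b % a := by
      rw [EuclideanDomain.mod_eq_sub_mul_div]
      ring
    have of_mod {w : V} {g₁ : V ≃ₗ[R] V} (hg₁ : g₁ ∈ isometriesFixing Q W)
        (hw : (polar Q (g₁ w) (f 0) = b % a ∧ polar Q (g₁ w) (f 1) = a) ∨
          (polar Q (g₁ w) (f 0) = a ∧ polar Q (g₁ w) (f 1) = b % a)) :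
        ∃ g ∈ isometriesFixing Q W, polar Q (g w) (f 0) ∣ a ∧ polar Q (g w) (f 0) ∣ b := by
      obtain ⟨g₂, hg₂, hb, ha⟩ := ih (g₁ w) hw
      exact ⟨g₂ * g₁, mul_mem hg₂ hg₁, ha, (EuclideanDomain.dvd_mod_iff ha).1 hb⟩
    rintro w (⟨hw₀, hw₁⟩ | ⟨hw₀, hw₁⟩)
    · obtain ⟨g, hg, hg₀, hg₁⟩ := exists_polar_right_one_add_mul h he hf (-(b / a)) w
      exact of_mod hg (.inr ⟨hg₀.trans hw₀, by rw [hg₁, hw₀, hw₁, hmod]⟩)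
    · obtain ⟨g, hg, hg₀, hg₁⟩ := exists_polar_right_zero_sub h he hf (b / a) w
      exact of_mod hg (.inl ⟨by rw [hg₀, hw₀, hw₁, ← hmod]; ring, hg₁.trans hw₁⟩)

/-- The coordinate `polar Q v s` is minimal for divisibility among the coordinates `polar Q _ s` on
the orbit of `v` under the isometries fixing `W`. -/
def IsOrbitMinimal (Q : QuadraticForm R V) (W : Submodule R V) (s v : V) : Prop :=
  ∀ g ∈ isometriesFixing Q W, polar Q (g v) s ∣ polar Q v s → polar Q v s ∣ polar Q (g v) s

theorem exists_isOrbitMinimal (Q : QuadraticForm R V) (W : Submodule R V) (s w : V) :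
    ∃ g ∈ isometriesFixing Q W, IsOrbitMinimal Q W s (g w) := by
  obtain ⟨_, ⟨g, hg, rfl⟩, hmin⟩ := (wellFounded_dvdNotUnit (α := R)).has_min
    ((fun g : V ≃ₗ[R] V => polar Q (g w) s) '' isometriesFixing Q W) ⟨_, 1, one_mem _, rfl⟩
  refine ⟨g, hg, fun g' hg' hdvd => by_contra fun hnot => ?_⟩
  exact hmin _ ⟨g' * g, mul_mem hg' hg, rfl⟩ (dvdNotUnit_of_dvd_of_not_dvd hdvd hnot)

namespace IsOrbitMinimal

theorem apply {s v : V} (hv : IsOrbitMinimal Q W s v) {g : V ≃ₗ[R] V}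
    (hg : g ∈ isometriesFixing Q W) (hgv : polar Q (g v) s = polar Q v s) :
    IsOrbitMinimal Q W s (g v) := by
  intro g' hg'
  rw [hgv]
  exact hv (g' * g) (mul_mem hg' hg)

theorem dvd_polar_right_one (h : IsHyperbolicFamily Q e f)
    (he : ∀ i, e i ∈ W.orthogonalBilin Q.polarBilin)
    (hf : ∀ i, f i ∈ W.orthogonalBilin Q.polarBilin) {v : V}
    (hv : IsOrbitMinimal Q W (f 0) v) : polar Q v (f 0) ∣ polar Q v (f 1) := by
  obtain ⟨g, hg, hg₀, hg₁⟩ := exists_polar_right_zero_dvd h he hf v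
  exact (hv g hg hg₀).trans hg₁

theorem exists_polar_left_one_eq_zero (h : IsHyperbolicFamily Q e f)
    (he : ∀ i, e i ∈ W.orthogonalBilin Q.polarBilin)
    (hf : ∀ i, f i ∈ W.orthogonalBilin Q.polarBilin) {v : V}
    (hv : IsOrbitMinimal Q W (f 0) v) :
    ∃ g ∈ isometriesFixing Q W, IsOrbitMinimal Q W (f 0) (g v) ∧ polar Q (g v) (e 1) = 0 := by
  have he' : ∀ i, ![e 0, f 1] i ∈ W.orthogonalBilin Q.polarBilin :=
    Fin.forall_fin_two.2 ⟨he 0, hf 1⟩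
  have hf' : ∀ i, ![f 0, e 1] i ∈ W.orthogonalBilin Q.polarBilin :=
    Fin.forall_fin_two.2 ⟨hf 0, he 1⟩
  obtain ⟨k, hk⟩ : polar Q v (f 0) ∣ polar Q v (e 1) := dvd_polar_right_one h.swap_snd he' hf' hv
  obtain ⟨g, hg, hf₀, he₁⟩ := exists_polar_right_one_add_mul h.swap_snd he' hf' (-k) v
  refine ⟨g, hg, hv.apply hg hf₀, he₁.trans ?_⟩
  simp only [Matrix.cons_val_zero, Matrix.cons_val_one, hk]
  ring

theorem dvd_polar (h : IsHyperbolicFamily Q e f)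
    (he : ∀ i, e i ∈ W.orthogonalBilin Q.polarBilin)
    (hf : ∀ i, f i ∈ W.orthogonalBilin Q.polarBilin) {v : V}
    (hv : IsOrbitMinimal Q W (f 0) v) (hve : polar Q v (e 1) = 0) {s : V}
    (hs : s ∈ W.orthogonalBilin Q.polarBilin) : polar Q v (f 0) ∣ polar Q v s := by
  set x := s - polar Q s (e 1) • f 1 with hx
  have hxW : x ∈ W.orthogonalBilin Q.polarBilin :=
    Submodule.sub_mem _ hs (Submodule.smul_mem _ _ (hf 1))
  have hxe : polar Q x (e 1) = 0 := by
    simp [hx, polar_sub_left, polar_smul_left, polar_comm Q (f 1), h.polar_self]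
  obtain ⟨g, hg, hg₀, hg₁⟩ := exists_polar_right_one_add h he hxW hxe v
  rw [hve, zero_mul, sub_zero] at hg₀ hg₁
  have hdvd := dvd_polar_right_one h he hf (hv.apply hg hg₀)
  rw [hg₀, hg₁, dvd_add_right (dvd_polar_right_one h he hf hv), polar_comm Q x] at hdvd
  rw [show s = x + polar Q s (e 1) • f 1 by simp [hx], polar_add_right, polar_smul_right]
  exact dvd_add hdvd ((dvd_polar_right_one h he hf hv).mul_left _)

end IsOrbitMinimal

theorem exists_forall_polar_right_zero_dvd_polar (h : IsHyperbolicFamily Q e f)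
    (he : ∀ i, e i ∈ W.orthogonalBilin Q.polarBilin)
    (hf : ∀ i, f i ∈ W.orthogonalBilin Q.polarBilin) (w : V) :
    ∃ g ∈ isometriesFixing Q W, ∀ s ∈ W.orthogonalBilin Q.polarBilin,
      polar Q (g w) (f 0) ∣ polar Q (g w) s := by
  obtain ⟨g₁, hg₁, hmin₁⟩ := exists_isOrbitMinimal Q W (f 0) w
  obtain ⟨g₂, hg₂, hmin₂, hv⟩ := hmin₁.exists_polar_left_one_eq_zero h he hf
  exact ⟨g₂ * g₁, mul_mem hg₂ hg₁, fun s hs => hmin₂.dvd_polar h he hf hv hs⟩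

theorem exists_polar_right_zero_eq_one_of_polar_eq_one {P : Submodule R V} (hPW : P ≤ W)
    (hW : Codisjoint W (W.orthogonalBilin Q.polarBilin)) (h : IsHyperbolicFamily Q e f)
    (he : ∀ i, e i ∈ W.orthogonalBilin Q.polarBilin)
    (hf : ∀ i, f i ∈ W.orthogonalBilin Q.polarBilin) {w z : V}
    (hz : z ∈ P.orthogonalBilin Q.polarBilin) (hwz : polar Q w z = 1) :
    ∃ g ∈ isometriesFixing Q P, polar Q (g w) (f 0) = 1 := by
  have hWP : W.orthogonalBilin Q.polarBilin ≤ P.orthogonalBilin Q.polarBilin :=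
    Submodule.orthogonalBilin_le hPW
  obtain ⟨g₁, hg₁, hdvd⟩ := exists_forall_polar_right_zero_dvd_polar h he hf w
  obtain ⟨x, z', hx, hz', hxz⟩ := Submodule.codisjoint_iff_exists_add_eq.1 hW (g₁ z)
  have hxP : x ∈ P.orthogonalBilin Q.polarBilin := by
    rw [eq_sub_of_add_eq hxz]
    refine Submodule.sub_mem _ (fun p hp => ?_) (hWP hz')
    rw [← hg₁.2 p (hPW hp)]
    exact (polar_apply_apply_of_mem_isometriesFixing hg₁ p z).trans (hz p hp)
  obtain ⟨g₂, hg₂, hf₀, hf₁⟩ :=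
    exists_polar_right_one_add h (fun i => hWP (he i)) hxP (he 1 x hx) (g₁ w)
  rw [show polar Q x (f 0) = 0 from hf 0 x hx, mul_zero, sub_zero] at hf₀
  obtain ⟨g₃, hg₃, hd₀, hd₁⟩ := exists_polar_right_zero_dvd h (fun i => hWP (he i))
    (fun i => hWP (hf i)) (g₂ (g₁ w))
  rw [hf₀] at hd₀
  have hunit : polar Q (g₁ w) z' + polar Q (g₁ w) x = 1 := by
    rw [← polar_add_right, add_comm, hxz, ← hwz]
    exact polar_apply_apply_of_mem_isometriesFixing hg₁ w z
  rw [hf₁, dvd_sub_left ((hd₀.trans (hdvd _ (he 1))).mul_right _),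
    dvd_add_right (hd₀.trans (hdvd _ (hf 1))), polar_comm Q x,
    ← dvd_add_right (hd₀.trans (hdvd _ hz')), hunit] at hd₁
  obtain ⟨g₄, hg₄, h₄⟩ := exists_polar_right_zero_eq_one h (fun i => hWP (he i))
    (fun i => hWP (hf i)) (isUnit_of_dvd_one hd₁)
  have hgP := mul_mem hg₄ (mul_mem hg₃ (mul_mem hg₂ (isometriesFixing_anti hPW hg₁)))
  exact ⟨_, hgP, h₄⟩

theorem exists_isometry_apply_eq {P : Submodule R V} (hPW : P ≤ W)
    (hW : Codisjoint W (W.orthogonalBilin Q.polarBilin)) (h : IsHyperbolicFamily Q e f)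
    (he : ∀ i, e i ∈ W.orthogonalBilin Q.polarBilin)
    (hf : ∀ i, f i ∈ W.orthogonalBilin Q.polarBilin) {w t z : V} (hQ : Q w = Q t)
    (hwt : w - t ∈ P.orthogonalBilin Q.polarBilin) (ht : polar Q t (f 0) = 1)
    (hz : z ∈ P.orthogonalBilin Q.polarBilin) (hwz : polar Q w z = 1) :
    ∃ g ∈ isometriesFixing Q P, g w = t := by
  obtain ⟨g₁, hg₁, hw₁⟩ :=
    exists_polar_right_zero_eq_one_of_polar_eq_one hPW hW h he hf hz hwz
  set y := g₁ w - t with hy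
  have hyP : y ∈ P.orthogonalBilin Q.polarBilin := by
    intro p hp
    have hp' : polar Q p (w - t) = 0 := hwt p hp
    have hgp : polar Q p (g₁ w) = polar Q p w := by
      rw [← polar_apply_apply_of_mem_isometriesFixing hg₁ p w, hg₁.2 p hp]
    rw [polarBilin_apply_apply, hy, polar_sub_right, hgp, ← polar_sub_right, hp']
  obtain ⟨g₂, hg₂, hg₂y⟩ := exists_mem_isometriesFixing_eq_eichler (h.map_right 0) (x := y)
    (by rw [hy, polar_sub_right, polar_comm, hw₁, polar_comm, ht, sub_self])
    (Submodule.orthogonalBilin_le hPW (hf 0)) hyP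
  have hyw : polar Q y (g₁ w) = Q y := by
    have hQt : Q (g₁ w) = Q t := (hg₁.1 w).trans hQ
    have hyt : Q (y + t) = Q y + Q t + polar Q y t := by simp [polar]
    rw [show g₁ w = y + t by simp [hy]] at hQt ⊢
    rw [polar_add_right, polar_self, two_smul]
    linear_combination hQt - hyt
  refine ⟨g₂ * g₁, mul_mem hg₂ hg₁, ?_⟩
  rw [LinearEquiv.mul_apply, hg₂y, eichler_apply, polar_comm Q (f 0), hw₁, hyw]
  simp [hy]

end EuclideanDomain

end Orbits

section StandardVectors

variable {R V ι : Type*} [CommRing R]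

theorem exists_lowerTriangular_add_transpose_eq [LinearOrder ι] {M : Matrix ι ι R} (hM : M.IsSymm)
    {c : ι → R} (hc : ∀ i, M i i = 2 * c i) :
    ∃ U : Matrix ι ι R, U + Uᵀ = M ∧ (∀ i, U i i = c i) ∧ ∀ i j, i < j → U i j = 0 := by
  refine ⟨Matrix.of fun i j => if j < i then M i j else if i = j then c i else 0, ?_, by simp, ?_⟩
  · ext i j
    rcases lt_trichotomy i j with hij | rfl | hij
    · simp [hij, hij.not_gt, hij.ne, hM.apply i j]
    · simp [hc, two_mul]
    · simp [hij, hij.not_gt, hij.ne]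
  · intro i j hij
    simp [hij.not_gt, hij.ne]

theorem exists_quadraticForm_polar_eq_dotProduct_mulVec [Fintype ι] {M : Matrix ι ι R}
    (hM : M.IsSymm) (hd : ∀ i, 2 ∣ M i i) :
    ∃ Q : QuadraticForm R (ι → R), ∀ x y, polar Q x y = x ⬝ᵥ M *ᵥ y := by
  classical
  choose c hc using hd
  obtain ⟨_, -⟩ := exists_wellFoundedLT ι
  obtain ⟨U, hU, -⟩ := exists_lowerTriangular_add_transpose_eq hM hc
  refine ⟨LinearMap.BilinMap.toQuadraticMap (Matrix.toLinearMap₂' R U), fun x y => ?_⟩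
  rw [LinearMap.BilinMap.polar_toQuadraticMap, Matrix.toLinearMap₂'_apply',
    Matrix.toLinearMap₂'_apply', ← hU, add_mulVec, dotProduct_add, dotProduct_mulVec y,
    ← mulVec_transpose, dotProduct_comm (Uᵀ *ᵥ y)]

variable [AddCommGroup V] [Module R V] {Q : QuadraticForm R V}

theorem mem_orthogonalBilin_span {s : Set V} {x : V} (hx : ∀ y ∈ s, polar Q y x = 0) :
    x ∈ (Submodule.span R s).orthogonalBilin Q.polarBilin := by
  have hs : Submodule.span R s ≤ LinearMap.ker (Q.polarBilin.flip x) := Submodule.span_le.2 hx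
  exact fun y hy => hs hy

theorem map_sum_smul_eq_zero {v : ι → V} (hv : ∀ i, Q (v i) = 0)
    (hvv : ∀ i j, polar Q (v i) (v j) = 0) {s : Finset ι} {c : ι → R} :
    Q (∑ i ∈ s, c i • v i) = 0 := by
  classical
  induction s using Finset.induction_on with
  | empty => simp
  | insert i s hi ih =>
    rw [Finset.sum_insert hi, QuadraticMap.map_add Q, ih, QuadraticMap.map_smul, hv,
      ← polarBilin_apply_apply, map_sum]
    simp [hvv]

namespace IsHyperbolicFamily

variable {e f : ι → V}

theorem polar_eq_ite [DecidableEq ι] (h : IsHyperbolicFamily Q e f) (i j : ι) :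
    polar Q (e i) (f j) = if i = j then 1 else 0 := by
  split_ifs with hij
  · exact hij ▸ h.polar_self i
  · exact h.polar_ne i j hij

theorem mem_orthogonalBilin_span_image (h : IsHyperbolicFamily Q e f) {s : Set ι} {i : ι}
    (hi : i ∉ s) : e i ∈ (Submodule.span R (e '' s ∪ f '' s)).orthogonalBilin Q.polarBilin ∧
      f i ∈ (Submodule.span R (e '' s ∪ f '' s)).orthogonalBilin Q.polarBilin := by
  constructor <;> refine mem_orthogonalBilin_span ?_ <;> rintro _ (⟨j, hj, rfl⟩ | ⟨j, hj, rfl⟩)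
  · exact h.polar_left j i
  · exact (polar_comm ..).trans (h.polar_ne i j fun hij => hi (hij ▸ hj))
  · exact h.polar_ne j i fun hij => hi (hij ▸ hj)
  · exact h.polar_right j i

theorem codisjoint_span_image_orthogonalBilin (h : IsHyperbolicFamily Q e f) (s : Finset ι) :
    Codisjoint (Submodule.span R (e '' s ∪ f '' s))
      ((Submodule.span R (e '' s ∪ f '' s)).orthogonalBilin Q.polarBilin) := by
  classical
  set W := Submodule.span R (e '' s ∪ f '' s)
  rw [Submodule.codisjoint_iff_exists_add_eq]
  intro v
  set a := ∑ i ∈ s, (polar Q v (f i) • e i + polar Q v (e i) • f i) with ha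
  have haW : a ∈ W := Submodule.sum_mem _ fun i hi => Submodule.add_mem _
    (Submodule.smul_mem _ _ (Submodule.subset_span (.inl ⟨i, hi, rfl⟩)))
    (Submodule.smul_mem _ _ (Submodule.subset_span (.inr ⟨i, hi, rfl⟩)))
  refine ⟨a, v - a, haW, mem_orthogonalBilin_span ?_, add_sub_cancel a v⟩
  rintro _ (⟨j, hj, rfl⟩ | ⟨j, hj, rfl⟩) <;> rw [Finset.mem_coe] at hj <;>
    rw [polar_sub_right, ← polarBilin_apply_apply, ← polarBilin_apply_apply _ _ a, ha, map_sum]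
  · simp [polar_add_right, polar_smul_right, h.polar_left, h.polar_eq_ite, hj, polar_comm Q v]
  · simp [polar_add_right, polar_smul_right, h.polar_right, h.polar_eq_ite, hj, polar_comm Q v,
      polar_comm Q (f j) (e _)]

theorem exists_of_isotropic [Finite ι] [DecidableEq ι] {e y : ι → V} (heQ : ∀ i, Q (e i) = 0)
    (he : ∀ i j, polar Q (e i) (e j) = 0)
    (hey : ∀ i j, polar Q (e i) (y j) = if i = j then 1 else 0) :
    ∃ f, IsHyperbolicFamily Q e f := by
  have := Fintype.ofFinite ι
  obtain ⟨_, -⟩ := exists_wellFoundedLT ι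
  obtain ⟨U, hU, hUd, -⟩ := exists_lowerTriangular_add_transpose_eq
    (M := Matrix.of fun i j => polar Q (y i) (y j)) (c := fun i => Q (y i))
    (by ext i j; exact polar_comm ..) (by simp)
  set b : ι → V := fun i => ∑ k, -U i k • e k with hb
  have heb (i j : ι) : polar Q (e i) (b j) = 0 := by
    rw [← polarBilin_apply_apply, hb, map_sum]
    simp [he]
  have hyb (i j : ι) : polar Q (y i) (b j) = -U j i := by
    rw [← polarBilin_apply_apply, hb, map_sum]
    simp [polar_comm Q (y i), hey]
  have hbb (i j : ι) : polar Q (b i) (b j) = 0 := by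
    have hbe (k : ι) : polar Q (b j) (e k) = 0 := (polar_comm ..).trans (heb k j)
    rw [polar_comm, ← polarBilin_apply_apply, hb, map_sum, ← hb]
    simp [hbe]
  have hyy (i j : ι) : polar Q (y i) (y j) = U i j + U j i := (congr_fun₂ hU i j).symm
  refine ⟨fun i => y i + b i, heQ, fun i => ?_, he, fun i j => ?_, fun i => ?_,
    fun i j hij => ?_⟩
  · rw [QuadraticMap.map_add Q, hyb, map_sum_smul_eq_zero heQ he, hUd]
    ring
  · rw [polar_add_left, polar_add_right, polar_add_right, hyy, hyb, hbb, polar_comm Q (b i), hyb]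
    ring
  · simp [polar_add_right, hey, heb]
  · simp [polar_add_right, hey, heb, hij]

end IsHyperbolicFamily

/-- Vectors whose Gram matrix is `U + Uᵀ`, built from hyperbolic planes with basis `e`, `f`. -/
def standardVector [Fintype ι] (e f : ι → V) (U : Matrix ι ι R) (i : ι) : V :=
  e i + ∑ j, U i j • f j

namespace IsHyperbolicFamily

variable {e f : ι → V} [Fintype ι]

theorem polar_standardVector_right [DecidableEq ι] (h : IsHyperbolicFamily Q e f)
    (U : Matrix ι ι R) (i j : ι) :
    polar Q (standardVector e f U i) (f j) = if i = j then 1 else 0 := by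
  rw [standardVector, polar_add_left, h.polar_eq_ite, ← polarBilin_apply_apply Q (∑ k, _), map_sum]
  simp [h.polar_right]

theorem polar_left_standardVector (h : IsHyperbolicFamily Q e f) (U : Matrix ι ι R) (i j : ι) :
    polar Q (e i) (standardVector e f U j) = U j i := by
  classical
  rw [standardVector, polar_add_right, h.polar_left, ← polarBilin_apply_apply Q _ (∑ k, _), map_sum]
  simp [h.polar_eq_ite]

theorem polar_standardVector (h : IsHyperbolicFamily Q e f) (U : Matrix ι ι R) (i j : ι) :
    polar Q (standardVector e f U i) (standardVector e f U j) = (U + Uᵀ) i j := by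
  classical
  nth_rewrite 2 [standardVector]
  rw [polar_add_right, polar_comm, h.polar_left_standardVector,
    ← polarBilin_apply_apply Q _ (∑ k, _), map_sum]
  simp [h.polar_standardVector_right]

theorem map_standardVector (h : IsHyperbolicFamily Q e f) (U : Matrix ι ι R) (i : ι) :
    Q (standardVector e f U i) = U i i := by
  have hei := h.polar_left_standardVector U i i
  rw [standardVector, polar_add_right, h.polar_left, zero_add] at hei
  rw [standardVector, QuadraticMap.map_add Q, h.map_left, hei,
    map_sum_smul_eq_zero h.map_right h.polar_right]
  simp

theorem standardVector_mem_span_image [LinearOrder ι] {U : Matrix ι ι R}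
    (hU : ∀ i j, i < j → U i j = 0) {s : Set ι} (hs : IsLowerSet s) {i : ι} (hi : i ∈ s) :
    standardVector e f U i ∈ Submodule.span R (e '' s ∪ f '' s) := by
  refine Submodule.add_mem _ (Submodule.subset_span (.inl ⟨i, hi, rfl⟩))
    (Submodule.sum_mem _ fun j _ => ?_)
  rcases lt_or_ge i j with hij | hij
  · simp [hU i j hij]
  · exact Submodule.smul_mem _ _ (Submodule.subset_span (.inr ⟨j, hs hij hi, rfl⟩))

end IsHyperbolicFamily

end StandardVectors

section Transitivity

variable {R V : Type*} [EuclideanDomain R] [AddCommGroup V] [Module R V] {Q : QuadraticForm R V}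

namespace IsHyperbolicFamily

variable {m : ℕ} {e f : Option (Fin m) → V} {U : Matrix (Fin m) (Fin m) R}

theorem exists_isometry_apply_eq_standardVector_of_lt (h : IsHyperbolicFamily Q e f)
    (hU : ∀ i j, i < j → U i j = 0) {v z : Fin m → V} (hv : ∀ i, Q (v i) = U i i)
    (hvv : ∀ i j, polar Q (v i) (v j) = (U + Uᵀ) i j)
    (hvz : ∀ i j, polar Q (v i) (z j) = if i = j then 1 else 0) {k : Fin m}
    (hlt : ∀ i < k, v i = standardVector (e ∘ some) (f ∘ some) U i) :
    ∃ g ∈ isometriesFixing Q (Submodule.span R (v '' Set.Iio k)),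
      g (v k) = standardVector (e ∘ some) (f ∘ some) U k := by
  have hsome : IsHyperbolicFamily Q (e ∘ some) (f ∘ some) := h.comp (Option.some_injective _)
  set s : Set (Option (Fin m)) := some '' Set.Iio k with hs
  have hmem {i : Option (Fin m)} (hi : i ∉ s) := h.mem_orthogonalBilin_span_image hi
  have hk : some k ∉ s := by simp [hs]
  have hn : none ∉ s := by simp [hs]
  have hle : Submodule.span R (v '' Set.Iio k) ≤ Submodule.span R (e '' s ∪ f '' s) := by
    rw [Submodule.span_le]
    rintro _ ⟨i, hi, rfl⟩
    rw [hlt i hi, hs, ← Set.image_comp, ← Set.image_comp]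
    exact standardVector_mem_span_image hU (isLowerSet_Iio k) hi
  refine exists_isometry_apply_eq hle ?_ (h.pair (Option.some_ne_none k))
    (Fin.forall_fin_two.2 ⟨(hmem hk).1, (hmem hn).1⟩)
    (Fin.forall_fin_two.2 ⟨(hmem hk).2, (hmem hn).2⟩) ?_ ?_ ?_ (z := z k) ?_ ?_
  · simpa [hs] using h.codisjoint_span_image_orthogonalBilin ((Finset.Iio k).image some)
  · rw [hv, hsome.map_standardVector]
  · refine mem_orthogonalBilin_span ?_
    rintro _ ⟨i, hi, rfl⟩
    rw [polar_sub_right, hvv, hlt i hi, hsome.polar_standardVector, sub_self]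
  · simpa using hsome.polar_standardVector_right U k k
  · refine mem_orthogonalBilin_span ?_
    rintro _ ⟨i, hi, rfl⟩
    rw [hvz, if_neg hi.ne]
  · rw [hvz, if_pos rfl]

theorem exists_isometry_apply_eq_standardVector (h : IsHyperbolicFamily Q e f)
    (hU : ∀ i j, i < j → U i j = 0) {v z : Fin m → V} (hv : ∀ i, Q (v i) = U i i)
    (hvv : ∀ i j, polar Q (v i) (v j) = (U + Uᵀ) i j)
    (hvz : ∀ i j, polar Q (v i) (z j) = if i = j then 1 else 0) :
    ∃ g ∈ isometriesFixing Q ⊥, ∀ i, g (v i) = standardVector (e ∘ some) (f ∘ some) U i := by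
  suffices H : ∀ k ≤ m, ∃ g ∈ isometriesFixing Q ⊥, ∀ i : Fin m, (i : ℕ) < k →
      g (v i) = standardVector (e ∘ some) (f ∘ some) U i by
    obtain ⟨g, hg, hgv⟩ := H m le_rfl
    exact ⟨g, hg, fun i => hgv i i.2⟩
  intro k
  induction k with
  | zero => exact fun _ => ⟨1, one_mem _, fun i hi => absurd hi (Nat.not_lt_zero _)⟩
  | succ k ih =>
    intro hk
    obtain ⟨g₀, hg₀, hgv⟩ := ih (Nat.le_of_succ_le hk)
    have hpolar := polar_apply_apply_of_mem_isometriesFixing hg₀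
    obtain ⟨g, hg, hgk⟩ := h.exists_isometry_apply_eq_standardVector_of_lt hU
      (v := fun i => g₀ (v i)) (z := fun i => g₀ (z i)) (k := ⟨k, hk⟩)
      (fun i => (hg₀.1 _).trans (hv i)) (fun i j => (hpolar _ _).trans (hvv i j))
      (fun i j => (hpolar _ _).trans (hvz i j)) fun i hi => hgv i hi
    refine ⟨g * g₀, mul_mem (isometriesFixing_anti bot_le hg) hg₀, fun i hi => ?_⟩
    rcases Nat.lt_succ_iff_lt_or_eq.1 hi with hi | hi
    · rw [LinearEquiv.mul_apply, ← hgv i hi]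
      exact hg.2 _ (Submodule.subset_span ⟨i, hi, rfl⟩)
    · obtain rfl : i = ⟨k, hk⟩ := Fin.ext hi
      exact hgk

end IsHyperbolicFamily

end Transitivity

section WittSymbols

/-- A Witt symbol is a function satisfying, on nonzero arguments, the defining relations of
the classes of one-dimensional forms in a Witt group. Its values at `0` are unconstrained. -/
structure IsWittSymbol {R A : Type*} [CommRing R] [AddCommGroup A] (φ : R → A) : Prop where
  map_mul_sq (a b : R) : a ≠ 0 → b ≠ 0 → φ (a * b ^ 2) = φ a
  map_add_map_neg (a : R) : a ≠ 0 → φ a + φ (-a) = 0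
  map_add_map (a b : R) : a ≠ 0 → b ≠ 0 → a + b ≠ 0 → φ a + φ b = φ (a + b) + φ (a * b * (a + b))

/-- The relators making `FreeAbelianGroup.of` a Witt symbol. -/
def wittRelators (R : Type*) [CommRing R] : Set (FreeAbelianGroup R) :=
  open FreeAbelianGroup renaming of → c in
  {x | (∃ a b, a ≠ 0 ∧ b ≠ 0 ∧ x = c (a * b ^ 2) - c a) ∨ (∃ a, a ≠ 0 ∧ x = c a + c (-a)) ∨
    ∃ a b, a ≠ 0 ∧ b ≠ 0 ∧ a + b ≠ 0 ∧ x = c a + c b - (c (a + b) + c (a * b * (a + b)))}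

/-- The target of the universal Witt symbol on `R`. Over a field of characteristic not two, the
classes of nonzero elements generate a copy of the Witt group, and the class of `0` is a free
generator; for other rings this is only a presented group. -/
abbrev WittGroup (R : Type*) [CommRing R] : Type _ :=
  FreeAbelianGroup R ⧸ AddSubgroup.closure (wittRelators R)

/-- The class of the one-dimensional form `⟨a⟩`: the universal Witt symbol. -/
def wittClass {R : Type*} [CommRing R] (a : R) : WittGroup R :=
  QuotientAddGroup.mk (FreeAbelianGroup.of a)

theorem isWittSymbol_wittClass (R : Type*) [CommRing R] :
    IsWittSymbol (wittClass : R → WittGroup R) where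
  map_mul_sq a b ha hb := by
    rw [← sub_eq_zero, wittClass, wittClass, ← QuotientAddGroup.mk_sub,
      QuotientAddGroup.eq_zero_iff]
    exact AddSubgroup.subset_closure (.inl ⟨a, b, ha, hb, rfl⟩)
  map_add_map_neg a ha := by
    rw [wittClass, wittClass, ← QuotientAddGroup.mk_add, QuotientAddGroup.eq_zero_iff]
    exact AddSubgroup.subset_closure (.inr (.inl ⟨a, ha, rfl⟩))
  map_add_map a b ha hb hab := by
    rw [← sub_eq_zero]
    simp only [wittClass, ← QuotientAddGroup.mk_add, ← QuotientAddGroup.mk_sub]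
    rw [QuotientAddGroup.eq_zero_iff]
    exact AddSubgroup.subset_closure (.inr (.inr ⟨a, b, ha, hb, hab, rfl⟩))

namespace IsWittSymbol

variable {R A : Type*} [CommRing R] [AddCommGroup A] {φ : R → A}

/-- The homomorphism out of the presented Witt group induced by a Witt symbol. -/
def lift (h : IsWittSymbol φ) : WittGroup R →+ A :=
  QuotientAddGroup.lift _ (FreeAbelianGroup.lift φ) <| by
    rw [AddSubgroup.closure_le]
    rintro _ (⟨a, b, ha, hb, rfl⟩ | ⟨a, ha, rfl⟩ | ⟨a, b, ha, hb, hab, rfl⟩)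
    · simp [h.map_mul_sq a b ha hb]
    · simpa using h.map_add_map_neg a ha
    · simp [h.map_add_map a b ha hb hab]

theorem lift_wittClass (h : IsWittSymbol φ) (a : R) : h.lift (wittClass a) = φ a := by
  simp [lift, wittClass]

theorem comp_ringHom (h : IsWittSymbol φ) {S : Type*} [CommRing S] {i : S →+* R}
    (hi : Function.Injective i) : IsWittSymbol (φ ∘ i) := by
  have hne {a : S} (ha : a ≠ 0) : i a ≠ 0 := (map_ne_zero_iff i hi).2 ha
  refine ⟨fun a b ha hb => ?_, fun a ha => ?_, fun a b ha hb hab => ?_⟩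
  · simpa using h.map_mul_sq _ _ (hne ha) (hne hb)
  · simpa using h.map_add_map_neg _ (hne ha)
  · simpa using h.map_add_map _ _ (hne ha) (hne hb) (by simpa using hne hab)

theorem sub_eq_sub [IsDomain R] (h : IsWittSymbol φ) {x m r l : R} (hx : x ≠ 0) (hm : m ≠ 0)
    (hr : r ≠ 0) (hl : l ≠ 0) (hrl : r + x * l ≠ 0) :
    φ (x * m * (r + x * l)) - φ (x * m * r) = φ (m * l) - φ (m * r * l * (r + x * l)) := by
  have hadd := h.map_add_map (x * m * r) (m * l * x ^ 2) (by simp [*]) (by simp [*])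
    (by rw [show x * m * r + m * l * x ^ 2 = x * m * (r + x * l) by ring]; simp [*])
  rw [show x * m * r + m * l * x ^ 2 = x * m * (r + x * l) by ring,
    show x * m * r * (m * l * x ^ 2) * (x * m * (r + x * l)) =
      m * r * l * (r + x * l) * (x ^ 2 * m) ^ 2 by ring,
    h.map_mul_sq _ _ (by simp [*]) hx, h.map_mul_sq _ _ (by simp [*]) (by simp [*])] at hadd
  rw [sub_eq_sub_iff_add_eq_add, ← hadd, add_comm]

end IsWittSymbol

end WittSymbols

section Residues

/-- The second residue of the form `⟨a⟩` at `p`: the class of `u` modulo `p` if `a = p ^ e * u` with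
`e` odd and `u` prime to `p`, and `0` if `e` is even. -/
noncomputable def residueSymbol (p : ℕ) (a : ℤ) : WittGroup (ZMod p) :=
  open Classical in
  if Odd (padicValInt p a) then wittClass ((a / (p : ℤ) ^ padicValInt p a : ℤ) : ZMod p) else 0

variable {p : ℕ} [Fact p.Prime]

theorem intCast_zmod_ne_zero {u : ℤ} (hu : ¬(p : ℤ) ∣ u) : (u : ZMod p) ≠ 0 := by
  rwa [Ne, ZMod.intCast_zmod_eq_zero_iff_dvd]

theorem exists_not_dvd_and_eq_pow_mul {a : ℤ} (ha : a ≠ 0) :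
    ∃ (e : ℕ) (u : ℤ), ¬(p : ℤ) ∣ u ∧ a = p ^ e * u :=
  WfDvdMonoid.max_power_factor ha (Nat.prime_iff_prime_int.1 Fact.out).irreducible

theorem residueSymbol_pow_mul (e : ℕ) {u : ℤ} (hu : ¬(p : ℤ) ∣ u) :
    residueSymbol p (p ^ e * u) = if Odd e then wittClass (u : ZMod p) else 0 := by
  have hp : (p : ℤ) ^ e ≠ 0 := pow_ne_zero _ (Nat.cast_ne_zero.2 (NeZero.ne p))
  have hpe : padicValInt p ((p : ℤ) ^ e) = e := by
    rw [← Nat.cast_pow, padicValInt.of_nat, padicValNat.prime_pow]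
  have hv : padicValInt p (p ^ e * u) = e := by
    rw [padicValInt.mul hp (by rintro rfl; exact hu (dvd_zero _)),
      padicValInt.eq_zero_of_not_dvd hu, hpe,
      add_zero]
  rw [residueSymbol, hv, Int.mul_ediv_cancel_left _ hp]

theorem residueSymbol_map_add_map_of_lt {e f : ℕ} {u w : ℤ} (hu : ¬(p : ℤ) ∣ u)
    (hw : ¬(p : ℤ) ∣ w) (hef : e < f) :
    residueSymbol p (p ^ e * u) + residueSymbol p (p ^ f * w) =
      residueSymbol p (p ^ e * u + p ^ f * w) +
        residueSymbol p (p ^ e * u * (p ^ f * w) * (p ^ e * u + p ^ f * w)) := by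
  have hp : Prime (p : ℤ) := Nat.prime_iff_prime_int.1 Fact.out
  obtain ⟨k, rfl⟩ := Nat.exists_eq_add_of_lt hef
  set t := u + (p : ℤ) ^ (k + 1) * w with ht
  have htu : (t : ZMod p) = u := by simp [ht]
  have htp : ¬(p : ℤ) ∣ t := fun h => intCast_zmod_ne_zero hu
    (htu.symm.trans ((ZMod.intCast_zmod_eq_zero_iff_dvd t p).2 h))
  have huwt : ¬(p : ℤ) ∣ u * w * t := hp.not_dvd_mul (hp.not_dvd_mul hu hw) htp
  rw [show (p : ℤ) ^ e * u + p ^ (e + k + 1) * w = p ^ e * t by rw [ht]; ring,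
    show (p : ℤ) ^ e * u * (p ^ (e + k + 1) * w) * (p ^ e * t) =
      p ^ (e + k + 1 + 2 * e) * (u * w * t) by ring,
    residueSymbol_pow_mul _ hu, residueSymbol_pow_mul _ hw, residueSymbol_pow_mul _ htp,
    residueSymbol_pow_mul _ huwt, htu]
  have hodd : Odd (e + k + 1 + 2 * e) ↔ Odd (e + k + 1) := by simp [Nat.odd_add]
  have hclass : wittClass ((u * w * t : ℤ) : ZMod p) = wittClass (w : ZMod p) := by
    rw [Int.cast_mul, Int.cast_mul, htu, mul_right_comm, ← pow_two, mul_comm]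
    exact (isWittSymbol_wittClass _).map_mul_sq _ _ (intCast_zmod_ne_zero hw)
      (intCast_zmod_ne_zero hu)
  simp only [hodd, hclass]

theorem wittClass_add_wittClass_of_add_eq_zero {K : Type*} [Field K] {u w t : K} (hu : u ≠ 0)
    (ht : t ≠ 0) (huw : u + w = 0) : wittClass u + wittClass w = 0 ∧
      wittClass t + wittClass (u * w * t) = 0 := by
  have hφ := isWittSymbol_wittClass K
  obtain rfl : w = -u := (neg_eq_of_add_eq_zero_right huw).symm
  refine ⟨hφ.map_add_map_neg u hu, ?_⟩
  rw [show u * -u * t = -t * u ^ 2 by ring, hφ.map_mul_sq _ _ (neg_ne_zero.2 ht) hu]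
  exact hφ.map_add_map_neg t ht

theorem residueSymbol_map_add_map_of_eq (e : ℕ) {u w : ℤ} (hu : ¬(p : ℤ) ∣ u) (hw : ¬(p : ℤ) ∣ w)
    (huw : u + w ≠ 0) :
    residueSymbol p (p ^ e * u) + residueSymbol p (p ^ e * w) =
      residueSymbol p (p ^ e * u + p ^ e * w) +
        residueSymbol p (p ^ e * u * (p ^ e * w) * (p ^ e * u + p ^ e * w)) := by
  have hp : Prime (p : ℤ) := Nat.prime_iff_prime_int.1 Fact.out
  obtain ⟨k, t, ht, hk⟩ := exists_not_dvd_and_eq_pow_mul (p := p) huw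
  have huwt : ¬(p : ℤ) ∣ u * w * t := hp.not_dvd_mul (hp.not_dvd_mul hu hw) ht
  rw [← mul_add, hk, ← mul_assoc, ← pow_add,
    show (p : ℤ) ^ e * u * (p ^ e * w) * (p ^ (e + k) * t) =
      p ^ (e + k + 2 * e) * (u * w * t) by ring,
    residueSymbol_pow_mul _ hu, residueSymbol_pow_mul _ hw, residueSymbol_pow_mul _ ht,
    residueSymbol_pow_mul _ huwt]
  have hodd : Odd (e + k + 2 * e) ↔ Odd (e + k) := by simp [Nat.odd_add]
  have hcast : (u : ZMod p) + w = p ^ k * t := by exact_mod_cast congrArg (Int.cast : ℤ → ZMod p) hk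
  have hu' := intCast_zmod_ne_zero hu
  have ht' := intCast_zmod_ne_zero ht
  simp only [hodd, Int.cast_mul]
  rcases k.eq_zero_or_pos with rfl | hk
  · rw [pow_zero, one_mul] at hcast
    have hadd := (isWittSymbol_wittClass (ZMod p)).map_add_map u w hu' (intCast_zmod_ne_zero hw)
      (hcast ▸ ht')
    rw [hcast] at hadd
    rw [add_zero]
    split_ifs
    · exact hadd
    · rfl
  · rw [CharP.cast_eq_zero, zero_pow hk.ne', zero_mul] at hcast
    obtain ⟨huw', huwt'⟩ := wittClass_add_wittClass_of_add_eq_zero hu' ht' hcast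
    split_ifs <;> simp [huw', huwt']

theorem isWittSymbol_residueSymbol (p : ℕ) [Fact p.Prime] : IsWittSymbol (residueSymbol p) := by
  have hp : Prime (p : ℤ) := Nat.prime_iff_prime_int.1 Fact.out
  have hφ := isWittSymbol_wittClass (ZMod p)
  refine ⟨fun a b ha hb => ?_, fun a ha => ?_, fun a b ha hb hab => ?_⟩ <;>
    obtain ⟨e, u, hu, rfl⟩ := exists_not_dvd_and_eq_pow_mul (p := p) ha
  · obtain ⟨f, w, hw, rfl⟩ := exists_not_dvd_and_eq_pow_mul (p := p) hb
    rw [show (p : ℤ) ^ e * u * (p ^ f * w) ^ 2 = p ^ (e + 2 * f) * (u * w ^ 2) by ring,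
      residueSymbol_pow_mul _ hu,
      residueSymbol_pow_mul _ (hp.not_dvd_mul hu (mt hp.dvd_of_dvd_pow hw)),
      Int.cast_mul, Int.cast_pow,
      hφ.map_mul_sq _ _ (intCast_zmod_ne_zero hu) (intCast_zmod_ne_zero hw)]
    simp [Nat.odd_add]
  · rw [← mul_neg, residueSymbol_pow_mul _ hu, residueSymbol_pow_mul _ (by rwa [dvd_neg]),
      Int.cast_neg]
    split_ifs
    · exact hφ.map_add_map_neg _ (intCast_zmod_ne_zero hu)
    · exact add_zero 0
  · obtain ⟨f, w, hw, rfl⟩ := exists_not_dvd_and_eq_pow_mul (p := p) hb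
    rcases lt_trichotomy e f with hef | rfl | hef
    · exact residueSymbol_map_add_map_of_lt hu hw hef
    · exact residueSymbol_map_add_map_of_eq e hu hw fun h => hab (by rw [← mul_add, h, mul_zero])
    · rw [add_comm (residueSymbol p _), residueSymbol_map_add_map_of_lt hw hu hef,
        add_comm ((p : ℤ) ^ f * w), mul_comm ((p : ℤ) ^ f * w)]

end Residues

section SmoothFiltration

/-- The nonzero integers all of whose prime divisors are less than `N`. -/
def smoothIntegers (N : ℕ) : Submonoid ℤ where
  carrier := {n | n.natAbs ∈ N.smoothNumbers}
  one_mem' := Nat.mem_smoothNumbers.2 (by simp)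
  mul_mem' := fun {a b} ha hb => by
    simpa only [Set.mem_ofPred_eq, Int.natAbs_mul] using Nat.mul_mem_smoothNumbers ha hb

/-- The subgroup of the presented Witt group of `ℤ` generated by the classes of `N`-smooth
integers. -/
def smoothWittGroup (N : ℕ) : AddSubgroup (WittGroup ℤ) :=
  AddSubgroup.closure (wittClass '' smoothIntegers N)

theorem wittClass_mem_smoothWittGroup {N : ℕ} {n : ℤ} (hn : n ∈ smoothIntegers N) :
    wittClass n ∈ smoothWittGroup N :=
  AddSubgroup.subset_closure ⟨n, hn, rfl⟩

theorem ne_zero_of_mem_smoothIntegers {N : ℕ} {n : ℤ} (hn : n ∈ smoothIntegers N) : n ≠ 0 :=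
  Int.natAbs_ne_zero.1 (Nat.ne_zero_of_mem_smoothNumbers hn)

theorem mem_smoothIntegers_of_abs_lt {N : ℕ} {n : ℤ} (hn : n ≠ 0) (hnN : |n| < N) :
    n ∈ smoothIntegers N :=
  Nat.mem_smoothNumbers_of_lt (Int.natAbs_pos.2 hn) (by rwa [Int.abs_eq_natAbs, Nat.cast_lt] at hnN)

theorem neg_mem_smoothIntegers {N : ℕ} {n : ℤ} (hn : n ∈ smoothIntegers N) :
    -n ∈ smoothIntegers N := by
  simpa [smoothIntegers] using hn

theorem mem_smoothIntegers_of_dvd {N : ℕ} {a n : ℤ} (hn : n ∈ smoothIntegers N) (ha : a ∣ n) :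
    a ∈ smoothIntegers N :=
  Nat.mem_smoothNumbers_of_dvd hn (Int.natAbs_dvd_natAbs.2 ha)

theorem abs_lt_of_prime_of_mem_smoothIntegers {N : ℕ} {q : ℤ} (hq : Prime q)
    (hqN : q ∈ smoothIntegers N) : |q| < N := by
  rw [Int.abs_eq_natAbs, Nat.cast_lt]
  exact Nat.mem_smoothNumbers'.1 hqN _ (Int.prime_iff_natAbs_prime.1 hq) dvd_rfl

theorem exists_sum_wittClass_mem_smoothWittGroup {ι : Type*} [Fintype ι] {d : ι → ℤ}
    (hd : ∀ i, d i ≠ 0) : ∃ N, ∑ i, wittClass (d i) ∈ smoothWittGroup N := by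
  refine ⟨∑ i, (d i).natAbs + 1, AddSubgroup.sum_mem _ fun i _ =>
    wittClass_mem_smoothWittGroup (mem_smoothIntegers_of_abs_lt (hd i) ?_)⟩
  rw [Int.abs_eq_natAbs, Nat.cast_lt, Nat.lt_succ_iff]
  exact Finset.single_le_sum (fun i _ => Nat.zero_le (d i).natAbs) (Finset.mem_univ i)

theorem smoothWittGroup_zero : smoothWittGroup 0 = AddSubgroup.zmultiples (wittClass 1) := by
  refine le_antisymm ((AddSubgroup.closure_le _).2 ?_)
    (AddSubgroup.zmultiples_le_of_mem (wittClass_mem_smoothWittGroup (one_mem _)))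
  rintro _ ⟨n, hn, rfl⟩
  have hn1 : n.natAbs ∈ Nat.smoothNumbers 0 := hn
  rw [Nat.smoothNumbers_zero, Set.mem_singleton_iff] at hn1
  rcases Int.natAbs_eq_iff.1 hn1 with rfl | rfl
  · exact AddSubgroup.mem_zmultiples _
  · rw [SetLike.mem_coe, Nat.cast_one,
      ← neg_eq_of_add_eq_zero_right ((isWittSymbol_wittClass ℤ).map_add_map_neg 1 one_ne_zero)]
    exact AddSubgroup.neg_mem _ (AddSubgroup.mem_zmultiples _)

variable {p : ℕ} [Fact p.Prime]

theorem intCast_zmod_ne_zero_of_mem_smoothIntegers {n : ℤ} (hn : n ∈ smoothIntegers p) :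
    (n : ZMod p) ≠ 0 :=
  intCast_zmod_ne_zero fun h => lt_irrefl p
    (Nat.mem_smoothNumbers'.1 hn p Fact.out (Int.natCast_dvd.1 h))

theorem mem_smoothIntegers_of_pow_mul_mem {e : ℕ} {u : ℤ} (hu : ¬(p : ℤ) ∣ u)
    (h : p ^ e * u ∈ smoothIntegers (p + 1)) : u ∈ smoothIntegers p := by
  refine Nat.mem_smoothNumbers'.2 fun q hq hqu => ?_
  refine (Nat.lt_succ_iff.1 (Nat.mem_smoothNumbers'.1 (mem_smoothIntegers_of_dvd h
    (Dvd.intro_left _ rfl)) q hq hqu)).lt_of_ne ?_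
  rintro rfl
  exact hu (Int.natCast_dvd.2 hqu)

theorem wittClass_sub_wittClass_mem_smoothWittGroup_of_abs_lt {m a b r : ℤ}
    (hm : m ∈ smoothIntegers p) (ha : a ≠ 0) (hap : |a| < p) (hb : b ≠ 0) (hbp : |b| < p)
    (hr : r ≠ 0) (hrp : |r| < p) (h : (p : ℤ) ∣ a * b - r) :
    wittClass (p * m * (a * b)) - wittClass (p * m * r) ∈ smoothWittGroup p := by
  obtain ⟨l, hl⟩ := h
  rw [sub_eq_iff_eq_add'] at hl
  rcases eq_or_ne l 0 with rfl | hl0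
  · rw [hl, mul_zero, add_zero, sub_self]
    exact zero_mem _
  have hp : (0 : ℤ) < p := Nat.cast_pos.2 (NeZero.pos p)
  have hlp : |l| < p := by
    have hab : |a| * |b| ≤ (p - 1) * (p - 1) := by
      apply mul_le_mul <;> first | omega | positivity
    have hpl : (p : ℤ) * |l| ≤ |a| * |b| + |r| := by
      rw [← abs_mul a, hl, ← Nat.abs_cast, ← abs_mul, Nat.abs_cast]
      simpa using abs_sub (r + p * l) r
    exact lt_of_mul_lt_mul_left (a := (p : ℤ)) (by linarith) hp.le
  rw [hl, (isWittSymbol_wittClass ℤ).sub_eq_sub hp.ne'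
    (ne_zero_of_mem_smoothIntegers hm) hr hl0 (hl ▸ mul_ne_zero ha hb), ← hl]
  have hlS := mem_smoothIntegers_of_abs_lt hl0 hlp
  have hrS := mem_smoothIntegers_of_abs_lt hr hrp
  have habS := mul_mem (mem_smoothIntegers_of_abs_lt ha hap) (mem_smoothIntegers_of_abs_lt hb hbp)
  exact sub_mem (wittClass_mem_smoothWittGroup (mul_mem hm hlS))
    (wittClass_mem_smoothWittGroup (mul_mem (mul_mem (mul_mem hm hrS) hlS) habS))

theorem exists_abs_lt_and_dvd_sub {n : ℤ} (hn : ¬(p : ℤ) ∣ n) :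
    ∃ r : ℤ, r ≠ 0 ∧ |r| < p ∧ (p : ℤ) ∣ n - r := by
  have hp : (0 : ℤ) < p := Nat.cast_pos.2 (NeZero.pos p)
  refine ⟨n % p, fun h => hn (Int.dvd_of_emod_eq_zero h), ?_, Int.dvd_self_sub_emod⟩
  rw [abs_of_nonneg (Int.emod_nonneg _ hp.ne')]
  exact Int.emod_lt_of_pos _ hp

theorem wittClass_sub_wittClass_mem_smoothWittGroup {n : ℤ} (hn : n ∈ smoothIntegers p) :
    ∀ m ∈ smoothIntegers p, ∀ r : ℤ, r ≠ 0 → |r| < p → (p : ℤ) ∣ n - r →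
      wittClass (p * m * n) - wittClass (p * m * r) ∈ smoothWittGroup p := by
  have hp : (1 : ℤ) < p := Nat.one_lt_cast.2 (Fact.out : p.Prime).one_lt
  induction n using UniqueFactorizationMonoid.induction_on_prime with
  | h₁ => exact absurd rfl (ne_zero_of_mem_smoothIntegers hn)
  | h₂ u hu =>
    intro m hm r hr hrp h
    simpa using wittClass_sub_wittClass_mem_smoothWittGroup_of_abs_lt hm hu.ne_zero
      (by rwa [Int.isUnit_iff_abs_eq.1 hu]) one_ne_zero (by rwa [abs_one]) hr hrp (by simpa using h)
  | h₃ n q _ hq ih =>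
    intro m hm r hr hrp h
    have hqS := mem_smoothIntegers_of_dvd hn (dvd_mul_right q n)
    have hnS := mem_smoothIntegers_of_dvd hn (dvd_mul_left n q)
    obtain ⟨s, hs, hsp, hns⟩ := exists_abs_lt_and_dvd_sub (p := p) fun hpn =>
      intCast_zmod_ne_zero_of_mem_smoothIntegers hnS ((ZMod.intCast_zmod_eq_zero_iff_dvd n p).2 hpn)
    have hqs : (p : ℤ) ∣ q * s - r := by
      rw [show q * s - r = q * n - r - q * (n - s) by ring]
      exact dvd_sub h (dvd_mul_of_dvd_right hns q)
    have := add_mem (ih hnS (m * q) (mul_mem hm hqS) s hs hsp hns)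
      (wittClass_sub_wittClass_mem_smoothWittGroup_of_abs_lt hm hq.ne_zero
        (abs_lt_of_prime_of_mem_smoothIntegers hq hqS) hs hsp hr hrp hqs)
    simpa [mul_assoc] using this

/-- The class of `⟨p u⟩` modulo classes of `p`-smooth integers, which inverts the residue at `p` on
the classes of `(p + 1)`-smooth integers. -/
noncomputable def residueSection (p : ℕ) (u : ZMod p) : WittGroup ℤ ⧸ smoothWittGroup p :=
  QuotientAddGroup.mk (wittClass ((p : ℤ) * u.val))

theorem residueSection_intCast {n : ℤ} (hn : n ∈ smoothIntegers p) :
    residueSection p n = QuotientAddGroup.mk (wittClass (p * n)) := by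
  have hp : (p : ℤ) ≠ 0 := Nat.cast_ne_zero.2 (NeZero.ne p)
  have hpn : ¬(p : ℤ) ∣ n := fun h => intCast_zmod_ne_zero_of_mem_smoothIntegers hn
    ((ZMod.intCast_zmod_eq_zero_iff_dvd n p).2 h)
  rw [residueSection, ZMod.val_intCast, eq_comm, QuotientAddGroup.eq_iff_sub_mem]
  have hmod : |n % p| < p := by
    rw [abs_of_nonneg (Int.emod_nonneg _ hp)]
    exact Int.emod_lt_of_pos _ (Nat.cast_pos.2 (NeZero.pos p))
  simpa using wittClass_sub_wittClass_mem_smoothWittGroup hn 1 (one_mem _) (n % p)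
    (fun h => hpn (Int.dvd_of_emod_eq_zero h)) hmod Int.dvd_self_sub_emod

theorem exists_mem_smoothIntegers_intCast_eq {u : ZMod p} (hu : u ≠ 0) :
    ∃ a ∈ smoothIntegers p, (a : ZMod p) = u := by
  refine ⟨u.val, mem_smoothIntegers_of_abs_lt ?_ ?_, by simp⟩
  · rwa [Nat.cast_ne_zero, Ne, ZMod.val_eq_zero]
  · rw [Nat.abs_cast, Nat.cast_lt]
    exact ZMod.val_lt u

theorem exists_add_mem_smoothIntegers_intCast_eq {u w : ZMod p} (hu : u ≠ 0) (hw : w ≠ 0)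
    (huw : u + w ≠ 0) : ∃ a ∈ smoothIntegers p, ∃ b ∈ smoothIntegers p,
      a + b ∈ smoothIntegers p ∧ (a : ZMod p) = u ∧ (b : ZMod p) = w := by
  have hpos {x : ZMod p} (hx : x ≠ 0) : 0 < x.val :=
    Nat.pos_of_ne_zero ((ZMod.val_eq_zero x).not.2 hx)
  have hu0 := hpos hu
  have hw0 := hpos hw
  have hup := ZMod.val_lt u
  have hwp := ZMod.val_lt w
  have hne : u.val + w.val ≠ p := fun h => huw (by simpa using congrArg (Nat.cast : ℕ → ZMod p) h)
  have hmem {n : ℤ} (hn : n ≠ 0) (hlt : -(p : ℤ) < n) (hgt : n < p) : n ∈ smoothIntegers p :=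
    mem_smoothIntegers_of_abs_lt hn (abs_lt.2 ⟨hlt, hgt⟩)
  rcases lt_or_gt_of_ne hne with hlt | hgt
  · refine ⟨u.val, ?_, w.val, ?_, ?_, by simp, by simp⟩ <;> apply hmem <;> omega
  · refine ⟨u.val, ?_, w.val - p, ?_, ?_, by simp, by simp⟩ <;> apply hmem <;> omega

theorem isWittSymbol_residueSection : IsWittSymbol (residueSection p) := by
  have hφ := isWittSymbol_wittClass ℤ
  have hp : (p : ℤ) ≠ 0 := Nat.cast_ne_zero.2 (NeZero.ne p)
  have hp_mul {n : ℤ} (hn : n ∈ smoothIntegers p) : (p : ℤ) * n ≠ 0 :=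
    mul_ne_zero hp (ne_zero_of_mem_smoothIntegers hn)
  refine ⟨fun u w hu hw => ?_, fun u hu => ?_, fun u w hu hw huw => ?_⟩
  · obtain ⟨a, ha, rfl⟩ := exists_mem_smoothIntegers_intCast_eq hu
    obtain ⟨b, hb, rfl⟩ := exists_mem_smoothIntegers_intCast_eq hw
    rw [← Int.cast_pow, ← Int.cast_mul, residueSection_intCast (mul_mem ha (pow_mem hb 2)),
      residueSection_intCast ha, ← mul_assoc,
      hφ.map_mul_sq _ _ (hp_mul ha) (ne_zero_of_mem_smoothIntegers hb)]
  · obtain ⟨a, ha, rfl⟩ := exists_mem_smoothIntegers_intCast_eq hu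
    rw [← Int.cast_neg, residueSection_intCast ha,
      residueSection_intCast (neg_mem_smoothIntegers ha), ← QuotientAddGroup.mk_add, mul_neg,
      hφ.map_add_map_neg _ (hp_mul ha), QuotientAddGroup.mk_zero]
  · obtain ⟨a, ha, b, hb, hab, rfl, rfl⟩ := exists_add_mem_smoothIntegers_intCast_eq hu hw huw
    rw [← Int.cast_add, ← Int.cast_mul, ← Int.cast_mul, residueSection_intCast ha,
      residueSection_intCast hb, residueSection_intCast hab,
      residueSection_intCast (mul_mem (mul_mem ha hb) hab), ← QuotientAddGroup.mk_add,
      ← QuotientAddGroup.mk_add,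
      hφ.map_add_map _ _ (hp_mul ha) (hp_mul hb) (by rw [← mul_add]; exact hp_mul hab), ← mul_add,
      show (p : ℤ) * a * (p * b) * (p * (a + b)) = p * (a * b * (a + b)) * p ^ 2 by ring,
      hφ.map_mul_sq _ _ (hp_mul (mul_mem (mul_mem ha hb) hab)) hp]

theorem residueSection_lift_residueSymbol_lift {x : WittGroup ℤ}
    (hx : x ∈ smoothWittGroup (p + 1)) :
    isWittSymbol_residueSection.lift ((isWittSymbol_residueSymbol p).lift x) =
      QuotientAddGroup.mk x := by
  have hφ := isWittSymbol_wittClass ℤ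
  have hp : (p : ℤ) ≠ 0 := Nat.cast_ne_zero.2 (NeZero.ne p)
  induction hx using AddSubgroup.closure_induction with
  | zero => simp
  | add x y _ _ hx hy => rw [map_add, map_add, hx, hy, QuotientAddGroup.mk_add]
  | neg x _ hx => rw [map_neg, map_neg, hx, QuotientAddGroup.mk_neg]
  | mem x hx =>
    obtain ⟨n, hn, rfl⟩ := hx
    obtain ⟨e, u, hu, rfl⟩ := exists_not_dvd_and_eq_pow_mul (p := p)
      (ne_zero_of_mem_smoothIntegers hn)
    have huS := mem_smoothIntegers_of_pow_mul_mem hu hn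
    have hu0 := ne_zero_of_mem_smoothIntegers huS
    rw [IsWittSymbol.lift_wittClass, residueSymbol_pow_mul e hu]
    rcases e.even_or_odd' with ⟨k, rfl | rfl⟩
    · rw [if_neg (by simp), map_zero, eq_comm, QuotientAddGroup.eq_zero_iff, mul_comm, mul_comm 2,
        pow_mul, hφ.map_mul_sq _ _ hu0 (pow_ne_zero _ hp)]
      exact wittClass_mem_smoothWittGroup huS
    · rw [if_pos (by simp), IsWittSymbol.lift_wittClass, residueSection_intCast huS,
        show (p : ℤ) ^ (2 * k + 1) * u = p * u * (p ^ k) ^ 2 by ring,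
        hφ.map_mul_sq _ _ (mul_ne_zero hp hu0) (pow_ne_zero _ hp)]

theorem mem_smoothWittGroup_of_mem_succ {N : ℕ} {x : WittGroup ℤ}
    (hx : x ∈ smoothWittGroup (N + 1))
    (h : ∀ _ : Fact N.Prime, (isWittSymbol_residueSymbol N).lift x = 0) :
    x ∈ smoothWittGroup N := by
  by_cases hN : N.Prime
  · have : Fact N.Prime := ⟨hN⟩
    rw [← QuotientAddGroup.eq_zero_iff, ← residueSection_lift_residueSymbol_lift hx, h this,
      map_zero]
  · have hS : smoothIntegers (N + 1) = smoothIntegers N :=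
      SetLike.ext fun n => by
        rw [← SetLike.mem_coe]; simp [smoothIntegers, Nat.smoothNumbers_succ hN]
    rwa [smoothWittGroup, hS] at hx

theorem sum_wittClass_mem_zmultiples {ι : Type*} [Fintype ι] {d : ι → ℤ} (hd : ∀ i, d i ≠ 0)
    (h : ∀ p : ℕ, p.Prime → ∑ i, residueSymbol p (d i) = 0) :
    ∑ i, wittClass (d i) ∈ AddSubgroup.zmultiples (wittClass (1 : ℤ)) := by
  obtain ⟨N, hN⟩ := exists_sum_wittClass_mem_smoothWittGroup hd
  rw [← smoothWittGroup_zero]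
  induction N with
  | zero => exact hN
  | succ N ih =>
    refine ih (mem_smoothWittGroup_of_mem_succ hN fun hp => ?_)
    simpa [IsWittSymbol.lift_wittClass] using h N hp.out

end SmoothFiltration

section OrthogonalFamilies

variable {R V ι : Type*} [CommRing R] [AddCommGroup V] [Module R V]

/-- A family of pairwise orthogonal vectors of nonzero norm: an orthogonal basis of the rational
span of the family, without leaving the integral module. -/
structure IsOrthogonalFamily (B : V →ₗ[R] V →ₗ[R] R) (e : ι → V) : Prop where
  apply_eq_zero {i j : ι} : i ≠ j → B (e i) (e j) = 0
  apply_self_ne_zero (i : ι) : B (e i) (e i) ≠ 0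

theorem IsOrthogonalFamily.comp {κ : Type*} {B : V →ₗ[R] V →ₗ[R] R} {e : ι → V}
    (he : IsOrthogonalFamily B e) {σ : κ → ι} (hσ : Function.Injective σ) :
    IsOrthogonalFamily B (e ∘ σ) :=
  ⟨fun hij => he.apply_eq_zero (hσ.ne hij), fun i => he.apply_self_ne_zero (σ i)⟩

theorem IsOrthogonalFamily.apply_sum_smul [Fintype ι] {B : V →ₗ[R] V →ₗ[R] R} {e : ι → V}
    (he : IsOrthogonalFamily B e) (c : ι → R) :
    B (∑ k, c k • e k) (∑ k, c k • e k) = ∑ k, c k ^ 2 * B (e k) (e k) := by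
  simp only [map_sum, map_smul, LinearMap.sum_apply, LinearMap.smul_apply, smul_eq_mul]
  refine Finset.sum_congr rfl fun k _ => ?_
  rw [Finset.sum_eq_single k (fun l _ hlk => by
    rw [he.apply_eq_zero hlk, mul_zero])
    (by simp), ← mul_assoc, pow_two]

theorem IsOrthogonalFamily.mem_span_range_succ [IsDomain R] {n : ℕ} {B : V →ₗ[R] V →ₗ[R] R}
    {e : Fin (n + 1) → V} (he : IsOrthogonalFamily B e) {v : V}
    (hv : v ∈ Submodule.span R (Set.range e)) (h0 : B (e 0) v = 0) :
    v ∈ Submodule.span R (Set.range (e ∘ Fin.succ)) := by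
  obtain ⟨a, rfl⟩ := (Submodule.mem_span_range_iff_exists_fun R).1 hv
  rw [map_sum, Finset.sum_eq_single 0 (fun l _ hl => by
    rw [map_smul, he.apply_eq_zero hl.symm, smul_zero]) (by simp), map_smul, smul_eq_mul,
    mul_eq_zero, or_iff_left (he.apply_self_ne_zero 0)] at h0
  rw [Fin.sum_univ_succ, h0, zero_smul, zero_add]
  exact (Submodule.mem_span_range_iff_exists_fun R).2 ⟨_, rfl⟩

theorem mul_smul_mem_span_range {κ : Type*} {e : κ → V} {f : ι → V} {s t : R} {v : V}
    (he : ∀ k, t • e k ∈ Submodule.span R (Set.range f))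
    (hv : s • v ∈ Submodule.span R (Set.range e)) :
    (t * s) • v ∈ Submodule.span R (Set.range f) := by
  have hle : Submodule.span R (Set.range e) ≤
      (Submodule.span R (Set.range f)).comap (LinearMap.lsmul R V t) :=
    Submodule.span_le.2 (by rintro _ ⟨k, rfl⟩; exact he k)
  simpa [mul_smul, smul_comm t s] using hle hv

theorem sum_eq_sum_of_pair {A : Type*} [AddCommMonoid A] [Fintype ι] {f g : ι → A} {i j : ι}
    (hij : i ≠ j) (hpair : f i + f j = g i + g j)
    (hrest : ∀ k, k ≠ i → k ≠ j → f k = g k) :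
    ∑ k, f k = ∑ k, g k := by
  classical
  have hsplit (h : ι → A) : ∑ k, h k = h i + h j + ∑ k ∈ (Finset.univ.erase i).erase j, h k := by
    rw [add_assoc, Finset.add_sum_erase _ _ (by simp [hij.symm]),
      Finset.add_sum_erase _ _ (Finset.mem_univ i)]
  rw [hsplit f, hsplit g, hpair]
  refine congrArg _ (Finset.sum_congr rfl fun k hk => ?_)
  simp only [Finset.mem_erase, Finset.mem_univ, and_true] at hk
  exact hrest k hk.2 hk.1

theorem exists_forall_ne_eq_zero_or_exists_add_ne_zero [Fintype ι] [IsDomain R] [NeZero (2 : R)]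
    {q : ι → R} (hq : ∑ k, q k ≠ 0) :
    (∃ i, q i ≠ 0 ∧ ∀ k, k ≠ i → q k = 0) ∨
      ∃ i j, i ≠ j ∧ q i ≠ 0 ∧ q j ≠ 0 ∧ q i + q j ≠ 0 := by
  classical
  obtain ⟨i, -, hi⟩ := Finset.exists_ne_zero_of_sum_ne_zero hq
  by_cases hj : ∃ j, j ≠ i ∧ q j ≠ 0
  swap
  · exact .inl ⟨i, hi, by simpa using hj⟩
  obtain ⟨j, hji, hj⟩ := hj
  by_cases hij : q i + q j = 0
  swap
  · exact .inr ⟨i, j, hji.symm, hi, hj, hij⟩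
  obtain ⟨k, hki, hkj, hk⟩ : ∃ k, k ≠ i ∧ k ≠ j ∧ q k ≠ 0 := by
    by_contra! hrest
    refine hq ((sum_eq_sum_of_pair (g := 0) hji.symm (by simpa using hij) hrest).trans (by simp))
  by_cases hik : q i + q k = 0
  swap
  · exact .inr ⟨i, k, hki.symm, hi, hk, hik⟩
  refine .inr ⟨j, k, hkj.symm, hj, hk, fun hjk => ?_⟩
  have htwo : 2 * q i = 0 := by linear_combination hij + hik - hjk
  exact (mul_ne_zero two_ne_zero hi) htwo

variable [DecidableEq ι]

/-- The family obtained from `e` by the change of basis `e i ↦ x • e i + y • e j`,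
`e j ↦ (y * b) • e i - (x * a) • e j`, which preserves orthogonality when `e i` and `e j` are
orthogonal of norms `a` and `b`. -/
def rotatePair (B : V →ₗ[R] V →ₗ[R] R) (e : ι → V) (i j : ι) (x y : R) : ι → V :=
  Function.update (Function.update e i (x • e i + y • e j)) j
    ((y * B (e j) (e j)) • e i - (x * B (e i) (e i)) • e j)

variable {B : V →ₗ[R] V →ₗ[R] R} {e f : ι → V} {i j k : ι} {x y : R}

theorem rotatePair_left (hij : i ≠ j) : rotatePair B e i j x y i = x • e i + y • e j := by
  simp [rotatePair, hij]

theorem rotatePair_right :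
    rotatePair B e i j x y j = (y * B (e j) (e j)) • e i - (x * B (e i) (e i)) • e j := by
  simp [rotatePair]

theorem rotatePair_of_ne (hki : k ≠ i) (hkj : k ≠ j) : rotatePair B e i j x y k = e k := by
  simp [rotatePair, hki, hkj]

theorem smul_mem_span_rotatePair (hij : i ≠ j) (k : ι) :
    (x ^ 2 * B (e i) (e i) + y ^ 2 * B (e j) (e j)) • e k ∈
      Submodule.span R (Set.range (rotatePair B e i j x y)) := by
  have hmem (l : ι) : rotatePair B e i j x y l ∈
      Submodule.span R (Set.range (rotatePair B e i j x y)) := Submodule.subset_span ⟨l, rfl⟩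
  have hi := hmem i
  have hj := hmem j
  rw [rotatePair_left hij] at hi
  rw [rotatePair_right] at hj
  rcases eq_or_ne k i with rfl | hki
  · convert add_mem (Submodule.smul_mem _ (x * B (e k) (e k)) hi) (Submodule.smul_mem _ y hj)
      using 1
    module
  rcases eq_or_ne k j with rfl | hkj
  · convert sub_mem (Submodule.smul_mem _ (y * B (e k) (e k)) hi) (Submodule.smul_mem _ x hj)
      using 1
    module
  · have hk := hmem k
    rw [rotatePair_of_ne hki hkj] at hk
    exact Submodule.smul_mem _ _ hk

theorem sum_update_update_smul_rotatePair [Fintype ι] (c : ι → R) (hij : i ≠ j) :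
    ∑ k, Function.update (Function.update c i 1) j 0 k • rotatePair B e i j (c i) (c j) k =
      ∑ k, c k • e k := by
  refine sum_eq_sum_of_pair hij ?_ fun k hki hkj => ?_
  · simp [rotatePair_left hij, hij]
  · simp [rotatePair_of_ne hki hkj, hki, hkj]

namespace IsOrthogonalFamily

theorem apply_rotatePair_left (he : IsOrthogonalFamily B e) (hij : i ≠ j) :
    B (rotatePair B e i j x y i) (rotatePair B e i j x y i) =
      x ^ 2 * B (e i) (e i) + y ^ 2 * B (e j) (e j) := by
  simp only [rotatePair_left hij, map_add, map_smul, LinearMap.add_apply, LinearMap.smul_apply,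
    smul_eq_mul, he.apply_eq_zero hij, he.apply_eq_zero hij.symm]
  ring

theorem apply_rotatePair_right (he : IsOrthogonalFamily B e) (hij : i ≠ j) :
    B (rotatePair B e i j x y j) (rotatePair B e i j x y j) =
      B (e i) (e i) * B (e j) (e j) * (x ^ 2 * B (e i) (e i) + y ^ 2 * B (e j) (e j)) := by
  simp only [rotatePair_right, map_sub, map_smul, LinearMap.sub_apply, LinearMap.smul_apply,
    smul_eq_mul, he.apply_eq_zero hij, he.apply_eq_zero hij.symm]
  ring

variable [IsDomain R]

theorem rotatePair (he : IsOrthogonalFamily B e) (hB : B.IsSymm) (hij : i ≠ j)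
    (hxy : x ^ 2 * B (e i) (e i) + y ^ 2 * B (e j) (e j) ≠ 0) :
    IsOrthogonalFamily B (rotatePair B e i j x y) := by
  set w := James.rotatePair B e i j x y with hw
  have hwk (l : ι) (hli : l ≠ i) (hlj : l ≠ j) (k : ι) (hkl : k ≠ l) : B (w k) (w l) = 0 := by
    rw [hw, rotatePair_of_ne hli hlj]
    rcases eq_or_ne k i with rfl | hki
    · simp [rotatePair_left hij, he.apply_eq_zero hkl, he.apply_eq_zero hlj.symm]
    rcases eq_or_ne k j with rfl | hkj
    · simp [rotatePair_right, he.apply_eq_zero hkl, he.apply_eq_zero hli.symm]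
    · rw [rotatePair_of_ne hki hkj, he.apply_eq_zero hkl]
  have hwij : B (w i) (w j) = 0 := by
    simp only [hw, rotatePair_left hij, rotatePair_right, map_add, map_sub, map_smul,
      LinearMap.add_apply, LinearMap.smul_apply, smul_eq_mul, he.apply_eq_zero hij,
      he.apply_eq_zero hij.symm]
    ring
  have hsymm (k l : ι) : B (w k) (w l) = B (w l) (w k) := hB.eq _ _
  refine ⟨fun {k l} hkl => ?_, fun k => ?_⟩
  · by_cases hl : l ≠ i ∧ l ≠ j
    · exact hwk l hl.1 hl.2 k hkl
    by_cases hk : k ≠ i ∧ k ≠ j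
    · rw [hsymm, hwk k hk.1 hk.2 l hkl.symm]
    obtain ⟨rfl, rfl⟩ | ⟨rfl, rfl⟩ : k = i ∧ l = j ∨ k = j ∧ l = i := by grind
    · exact hwij
    · rw [hsymm, hwij]
  · rcases eq_or_ne k i with rfl | hki
    · rwa [he.apply_rotatePair_left hij]
    rcases eq_or_ne k j with rfl | hkj
    · rw [he.apply_rotatePair_right hij]
      exact mul_ne_zero (mul_ne_zero (he.apply_self_ne_zero i) (he.apply_self_ne_zero k)) hxy
    · rw [hw, rotatePair_of_ne hki hkj]
      exact he.apply_self_ne_zero k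

variable [Fintype ι] {A : Type*} [AddCommGroup A] {φ : R → A}

theorem sum_rotatePair (he : IsOrthogonalFamily B e) (hφ : IsWittSymbol φ) (hij : i ≠ j)
    (hx : x ≠ 0) (hy : y ≠ 0) (hxy : x ^ 2 * B (e i) (e i) + y ^ 2 * B (e j) (e j) ≠ 0) :
    ∑ k, φ (B (James.rotatePair B e i j x y k) (James.rotatePair B e i j x y k)) =
      ∑ k, φ (B (e k) (e k)) := by
  refine sum_eq_sum_of_pair hij ?_ fun k hki hkj => by rw [rotatePair_of_ne hki hkj]
  rw [he.apply_rotatePair_left hij, he.apply_rotatePair_right hij]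
  set a := B (e i) (e i)
  set b := B (e j) (e j)
  have ha : a ≠ 0 := he.apply_self_ne_zero i
  have hb : b ≠ 0 := he.apply_self_ne_zero j
  have hadd := hφ.map_add_map (x ^ 2 * a) (y ^ 2 * b) (by simp [*]) (by simp [*]) hxy
  rw [mul_comm (x ^ 2) a, hφ.map_mul_sq a x ha hx, mul_comm (y ^ 2) b, hφ.map_mul_sq b y hb hy,
    show a * x ^ 2 * (b * y ^ 2) * (a * x ^ 2 + b * y ^ 2) =
      a * b * (a * x ^ 2 + b * y ^ 2) * (x * y) ^ 2 by ring,
    hφ.map_mul_sq _ _ (by simp_all [mul_comm]) (by simp [*])] at hadd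
  rw [hadd, mul_comm a (x ^ 2), mul_comm b (y ^ 2)]

omit [DecidableEq ι] in
/-- Merging two coordinates of a vector shrinks its support; the merge is possible as long as two
coordinates remain, because the vector is anisotropic. -/
theorem exists_sum_smul_eq_smul [NeZero (2 : R)] (hB : B.IsSymm) (hφ : IsWittSymbol φ)
    (he : IsOrthogonalFamily B e) (c : ι → R)
    (hv : B (∑ k, c k • e k) (∑ k, c k • e k) ≠ 0) :
    ∃ e' : ι → V, IsOrthogonalFamily B e' ∧
      (∃ t : R, t ≠ 0 ∧ ∀ k, t • e k ∈ Submodule.span R (Set.range e')) ∧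
      ∑ k, φ (B (e' k) (e' k)) = ∑ k, φ (B (e k) (e k)) ∧
      ∃ i, ∃ t : R, t ≠ 0 ∧ ∑ k, c k • e k = t • e' i := by
  classical
  induction hs : Finset.card {k | c k ≠ 0} using Nat.strong_induction_on generalizing e c with
  | _ s ih =>
  rw [he.apply_sum_smul] at hv
  obtain ⟨i, hi, hi'⟩ | ⟨i, j, hij, hi, hj, hq⟩ :=
    exists_forall_ne_eq_zero_or_exists_add_ne_zero hv
  · have hc (k : ι) (hk : k ≠ i) : c k = 0 := by
      simpa [he.apply_self_ne_zero k] using hi' k hk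
    exact ⟨e, he, ⟨1, one_ne_zero, fun k => by
      simpa using Submodule.subset_span (Set.mem_range_self k)⟩, rfl,
      i, c i, by simpa using left_ne_zero_of_mul hi,
      Finset.sum_eq_single i (fun k _ hk => by rw [hc k hk, zero_smul]) (by simp)⟩
  have hci : c i ≠ 0 := by simpa using left_ne_zero_of_mul hi
  have hcj : c j ≠ 0 := by simpa using left_ne_zero_of_mul hj
  set c' := Function.update (Function.update c i 1) j 0 with hc'
  have hsum := sum_update_update_smul_rotatePair (B := B) (e := e) c hij
  have hlt : Finset.card {k | c' k ≠ 0} < s := by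
    rw [← hs]
    refine Finset.card_lt_card ((Finset.ssubset_iff_of_subset fun k => ?_).2 ⟨j, ?_⟩)
    · simp only [hc', Finset.mem_filter, Finset.mem_univ, true_and, Function.update_apply]
      grind
    · simp [hc', hcj]
  rw [← he.apply_sum_smul, ← hsum] at hv
  obtain ⟨e', he', ⟨t, ht, hspan⟩, hφe', hmult⟩ :=
    ih _ hlt (he.rotatePair hB hij hq) c' hv rfl
  refine ⟨e', he', ⟨t * _, mul_ne_zero ht hq, fun k => ?_⟩,
    hφe'.trans (he.sum_rotatePair hφ hij hci hcj hq), hsum ▸ hmult⟩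
  exact mul_smul_mem_span_range hspan (smul_mem_span_rotatePair hij k)

/-- Witt's chain argument: move the first vector of `f` into the family `e`, then pass to its
orthogonal complement. -/
theorem sum_eq_sum [NeZero (2 : R)] {n : ℕ} (hB : B.IsSymm) (hφ : IsWittSymbol φ)
    {e f : Fin n → V} (he : IsOrthogonalFamily B e) (hf : IsOrthogonalFamily B f)
    (hspan : ∃ t : R, t ≠ 0 ∧ ∀ k, t • f k ∈ Submodule.span R (Set.range e)) :
    ∑ k, φ (B (e k) (e k)) = ∑ k, φ (B (f k) (f k)) := by
  induction n with
  | zero => simp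
  | succ n ih =>
  obtain ⟨t, ht, hspan⟩ := hspan
  obtain ⟨c, hc⟩ := (Submodule.mem_span_range_iff_exists_fun R).1 (hspan 0)
  obtain ⟨e', he', ⟨u, hu, hspan'⟩, hsum, i, s, hs, hce'⟩ :=
    he.exists_sum_smul_eq_smul hB hφ c (by simp [hc, ht, hf.apply_self_ne_zero])
  set w := e' ∘ Equiv.swap 0 i with hw
  have hwO : IsOrthogonalFamily B w := he'.comp (Equiv.injective _)
  have hf0 : t • f 0 = s • w 0 := by simpa [hw, hc] using hce'
  have hsumw : ∑ k, φ (B (w k) (w k)) = ∑ k, φ (B (e k) (e k)) :=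
    (Equiv.sum_comp (Equiv.swap 0 i) fun k => φ (B (e' k) (e' k))).trans hsum
  have hspanw (k : Fin (n + 1)) : (u * t) • f k ∈ Submodule.span R (Set.range w) := by
    rw [hw, EquivLike.range_comp]
    exact mul_smul_mem_span_range hspan' (hspan k)
  have hnorm : φ (B (w 0) (w 0)) = φ (B (f 0) (f 0)) := by
    rw [← hφ.map_mul_sq _ s (hwO.apply_self_ne_zero 0) hs,
      ← hφ.map_mul_sq _ t (hf.apply_self_ne_zero 0) ht]
    have := congrArg (fun v => B v v) hf0
    simp only [map_smul, LinearMap.smul_apply, smul_eq_mul] at this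
    congr 1
    linear_combination -this
  rw [← hsumw, Fin.sum_univ_succ, Fin.sum_univ_succ, hnorm]
  refine congrArg _ (ih (hwO.comp (Fin.succ_injective n)) (hf.comp (Fin.succ_injective n))
    ⟨u * t, mul_ne_zero hu ht, fun k => ?_⟩)
  refine hwO.mem_span_range_succ (hspanw k.succ) ?_
  have hwf := congrArg (fun v => B v (f k.succ)) hf0
  simpa [hf.apply_eq_zero (Fin.succ_ne_zero k).symm, hs, hu, ht] using hwf.symm

end IsOrthogonalFamily

end OrthogonalFamilies

section Diagonalization

variable {R : Type*} [CommRing R]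

/-- Gram–Schmidt without division: `e 0` is made orthogonal to the other vectors by replacing
`e k` with `B (e 0) (e 0) • e k - B (e 0) (e k) • e 0`. -/
theorem exists_orthogonal_of_apply_mem {V : Type*} [AddCommGroup V] [Module R V] (𝔭 : Ideal R)
    [𝔭.IsPrime] {B : V →ₗ[R] V →ₗ[R] R} (hB : B.IsSymm) {n : ℕ} {e : Fin n → V}
    (he : ∀ i j, i ≠ j → B (e i) (e j) ∈ 𝔭) (he' : ∀ i, B (e i) (e i) ∉ 𝔭) :
    ∃ f : Fin n → V, (∀ i, f i ∈ Submodule.span R (Set.range e)) ∧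
      (∀ i j, i ≠ j → B (f i) (f j) = 0) ∧ ∀ i, B (f i) (f i) ∉ 𝔭 := by
  induction n with
  | zero => exact ⟨e, nofun, nofun, nofun⟩
  | succ n ih =>
  set a := B (e 0) (e 0) with ha
  set w : Fin n → V := fun k => a • e k.succ - B (e 0) (e k.succ) • e 0 with hw
  have hw0 (k : Fin n) : B (e 0) (w k) = 0 := by simp [hw, ← ha, mul_comm]
  have hww (k l : Fin n) : B (w k) (w l) =
      a * (a * B (e k.succ) (e l.succ) - B (e 0) (e k.succ) * B (e 0) (e l.succ)) := by
    conv_lhs => rw [hw]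
    simp only [map_sub, map_smul, LinearMap.sub_apply, LinearMap.smul_apply, smul_eq_mul, ← ha]
    rw [show B (e k.succ) (e 0) = B (e 0) (e k.succ) from hB.eq _ _]
    ring
  have h0 (k l : Fin n) : B (e 0) (e k.succ) * B (e 0) (e l.succ) ∈ 𝔭 :=
    𝔭.mul_mem_right _ (he _ _ (Fin.succ_ne_zero k).symm)
  obtain ⟨f, hfspan, hf, hf'⟩ := ih (e := w)
    (fun k l hkl => by
      rw [hww]
      exact 𝔭.mul_mem_left _ (sub_mem (𝔭.mul_mem_left _ (he _ _ (by simpa using hkl))) (h0 k l)))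
    (fun k => by
      rw [hww]
      exact 𝔭.primeCompl.mul_mem (he' 0) fun h => 𝔭.primeCompl.mul_mem (he' 0) (he' k.succ)
        (by simpa using add_mem h (h0 k k)))
  have hf0 (k : Fin n) : B (e 0) (f k) = 0 :=
    (Submodule.span_le (p := LinearMap.ker (B (e 0)))).2
      (by rintro _ ⟨k, rfl⟩; exact hw0 k) (hfspan k)
  have hle : Submodule.span R (Set.range w) ≤ Submodule.span R (Set.range e) := by
    rw [Submodule.span_le]
    rintro _ ⟨k, rfl⟩
    exact sub_mem (Submodule.smul_mem _ _ (Submodule.subset_span ⟨_, rfl⟩))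
      (Submodule.smul_mem _ _ (Submodule.subset_span ⟨_, rfl⟩))
  refine ⟨Fin.cons (e 0) f, Fin.cases (Submodule.subset_span ⟨0, rfl⟩) fun k => hle (hfspan k),
    ?_, Fin.cases (he' 0) hf'⟩
  refine Fin.cases (Fin.cases (by simp) fun l _ => hf0 l) fun k => Fin.cases (fun _ => ?_) ?_
  · exact (hB.eq _ _).trans (hf0 k)
  · exact fun l hkl => hf k l (by simpa using hkl)

theorem isSymm_toLinearMap₂' {n : ℕ} {G : Matrix (Fin n) (Fin n) R} (hG : G.IsSymm) :
    LinearMap.IsSymm (toLinearMap₂' R G) :=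
  ⟨fun x y => by
    rw [toLinearMap₂'_apply', toLinearMap₂'_apply', RingHom.id_apply, dotProduct_mulVec,
      dotProduct_comm, ← mulVec_transpose, hG]⟩

theorem exists_isOrthogonalFamily_of_det_ne_zero {K : Type*} [Field K] [NeZero (2 : K)] {n : ℕ}
    {G : Matrix (Fin n) (Fin n) K} (hG : G.IsSymm) (hdet : G.det ≠ 0) :
    ∃ v : Fin n → Fin n → K, IsOrthogonalFamily (toLinearMap₂' K G) v := by
  have : Invertible (2 : K) := invertibleOfNonzero two_ne_zero
  obtain ⟨v, hv⟩ := LinearMap.BilinForm.exists_orthogonal_basis (isSymm_toLinearMap₂' hG)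
  let c := finCongr (Module.finrank_fin_fun K (n := n)).symm
  exact ⟨v ∘ c, fun {i j} hij => hv (c.injective.ne hij), fun i =>
    hv.not_isOrtho_basis_self_of_separatingLeft
      (LinearMap.separatingLeft_toLinearMap₂'_of_det_ne_zero' hdet) (c i)⟩

theorem map_toLinearMap₂' {S : Type*} [CommRing S] (π : R →+* S) {n : ℕ}
    (G : Matrix (Fin n) (Fin n) R) (x y : Fin n → R) :
    π (toLinearMap₂' R G x y) = toLinearMap₂' S (G.map π) (π ∘ x) (π ∘ y) := by
  simp [toLinearMap₂'_apply', dotProduct, mulVec]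

/-- The vectors are lifts of an orthogonal basis over the residue field of `𝔭`. -/
theorem exists_apply_mem_of_det_notMem (𝔭 : Ideal R) [𝔭.IsPrime] (h2 : (2 : R) ∉ 𝔭) {n : ℕ}
    {G : Matrix (Fin n) (Fin n) R} (hG : G.IsSymm) (hdet : G.det ∉ 𝔭) :
    ∃ e : Fin n → Fin n → R, (∀ i j, i ≠ j → toLinearMap₂' R G (e i) (e j) ∈ 𝔭) ∧
      ∀ i, toLinearMap₂' R G (e i) (e i) ∉ 𝔭 := by
  let π := algebraMap R 𝔭.ResidueField
  have hπ {x : R} : π x = 0 ↔ x ∈ 𝔭 := Ideal.algebraMap_residueField_eq_zero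
  have : NeZero (2 : 𝔭.ResidueField) := ⟨by rwa [← map_ofNat π 2, Ne, hπ]⟩
  obtain ⟨v, hv⟩ := exists_isOrthogonalFamily_of_det_ne_zero (G := G.map π) (hG.map π)
    (by rwa [← RingHom.mapMatrix_apply, ← RingHom.map_det, Ne, hπ])
  obtain ⟨b, hb⟩ := IsLocalization.exist_integer_multiples_of_finite
    (nonZeroDivisors (R ⧸ 𝔭)) fun ij : Fin n × Fin n => v ij.1 ij.2
  have hlift (ij : Fin n × Fin n) : ∃ x : R, π x = algebraMap _ _ b.1 * v ij.1 ij.2 := by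
    obtain ⟨y, hy⟩ := hb ij
    obtain ⟨x, rfl⟩ := Ideal.Quotient.mk_surjective y
    exact ⟨x, by rw [← Algebra.smul_def]; exact hy⟩
  choose e he using hlift
  have he' (i : Fin n) : π ∘ (fun k => e (i, k)) = algebraMap _ 𝔭.ResidueField b.1 • v i :=
    funext fun k => he (i, k)
  refine ⟨fun i k => e (i, k), fun i j hij => ?_, fun i => ?_⟩
  · rw [← hπ, map_toLinearMap₂', he', he']
    simp [hv.apply_eq_zero hij]
  · rw [← hπ, map_toLinearMap₂', he']
    simpa using hv.apply_self_ne_zero i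

theorem exists_isOrthogonalFamily_of_det_notMem (𝔭 : Ideal R) [𝔭.IsPrime] (h2 : (2 : R) ∉ 𝔭)
    {n : ℕ} {G : Matrix (Fin n) (Fin n) R} (hG : G.IsSymm) (hdet : G.det ∉ 𝔭) :
    ∃ e : Fin n → Fin n → R, IsOrthogonalFamily (toLinearMap₂' R G) e ∧
      ∀ i, toLinearMap₂' R G (e i) (e i) ∉ 𝔭 := by
  obtain ⟨e, he, he'⟩ := exists_apply_mem_of_det_notMem 𝔭 h2 hG hdet
  obtain ⟨f, -, hf, hf'⟩ := exists_orthogonal_of_apply_mem 𝔭 (isSymm_toLinearMap₂' hG) he he'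
  exact ⟨f, ⟨hf _ _, fun i h => hf' i (h ▸ 𝔭.zero_mem)⟩, hf'⟩

variable {n : ℕ} {G : Matrix (Fin n) (Fin n) R} {e f : Fin n → Fin n → R}

theorem IsOrthogonalFamily.of_mul_mul_transpose_of (he : IsOrthogonalFamily (toLinearMap₂' R G) e) :
    Matrix.of e * G * (Matrix.of e)ᵀ = diagonal fun i => toLinearMap₂' R G (e i) (e i) := by
  ext i j
  have hij : (Matrix.of e * G * (Matrix.of e)ᵀ) i j = toLinearMap₂' R G (e i) (e j) := by
    rw [toLinearMap₂'_apply', dotProduct_mulVec]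
    rfl
  rw [hij, diagonal_apply]
  split_ifs with h
  · rw [h]
  · exact he.apply_eq_zero h

theorem IsOrthogonalFamily.prod_apply_self (he : IsOrthogonalFamily (toLinearMap₂' R G) e) :
    ∏ i, toLinearMap₂' R G (e i) (e i) = G.det * (Matrix.of e).det ^ 2 := by
  rw [← det_diagonal, ← he.of_mul_mul_transpose_of, det_mul, det_mul, det_transpose]
  ring

theorem IsOrthogonalFamily.det_of_ne_zero [IsDomain R]
    (he : IsOrthogonalFamily (toLinearMap₂' R G) e) : (Matrix.of e).det ≠ 0 := fun h =>
  Finset.prod_ne_zero_iff.2 (fun i _ => he.apply_self_ne_zero i) <| by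
    rw [he.prod_apply_self, h]
    ring

theorem det_smul_mem_span_range (e : Fin n → Fin n → R) (x : Fin n → R) :
    (Matrix.of e).det • x ∈ Submodule.span R (Set.range e) := by
  have : (Matrix.of e).det • x = (x ᵥ* (Matrix.of e).adjugate) ᵥ* Matrix.of e := by
    rw [vecMul_vecMul, adjugate_mul, vecMul_smul, vecMul_one]
  rw [this, vecMul_eq_sum]
  exact Submodule.sum_mem _ fun i _ => Submodule.smul_mem _ _ (Submodule.subset_span ⟨i, rfl⟩)

theorem IsWittSymbol.sum_eq_sum [IsDomain R] [NeZero (2 : R)] {A : Type*} [AddCommGroup A]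
    {φ : R → A} (hφ : IsWittSymbol φ) (hG : G.IsSymm)
    (he : IsOrthogonalFamily (toLinearMap₂' R G) e)
    (hf : IsOrthogonalFamily (toLinearMap₂' R G) f) :
    ∑ i, φ (toLinearMap₂' R G (e i) (e i)) = ∑ i, φ (toLinearMap₂' R G (f i) (f i)) :=
  IsOrthogonalFamily.sum_eq_sum (isSymm_toLinearMap₂' hG) hφ he hf
    ⟨_, he.det_of_ne_zero, fun k => det_smul_mem_span_range e (f k)⟩

end Diagonalization

section UnimodularForms

theorem residueSymbol_of_not_dvd {p : ℕ} [Fact p.Prime] {u : ℤ} (hu : ¬(p : ℤ) ∣ u) :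
    residueSymbol p u = 0 := by
  simpa using residueSymbol_pow_mul 0 hu

theorem residueSymbol_two_pow_mul (e : ℕ) {u : ℤ} (hu : ¬(2 : ℤ) ∣ u) :
    residueSymbol 2 (2 ^ e * u) = e • wittClass (1 : ZMod 2) := by
  have hcast : (u : ZMod 2) = 1 := ZMod.intCast_eq_one_iff_odd.2 (by
    rwa [← Int.not_even_iff_odd, even_iff_two_dvd])
  have htwo : 2 • wittClass (1 : ZMod 2) = 0 := by
    simpa [two_nsmul] using (isWittSymbol_wittClass (ZMod 2)).map_add_map_neg 1 one_ne_zero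
  refine (residueSymbol_pow_mul e hu).trans ?_
  rw [hcast]
  split_ifs with he
  · obtain ⟨k, rfl⟩ := he
    rw [add_nsmul, mul_nsmul, htwo, nsmul_zero, zero_add, one_nsmul]
  · obtain ⟨k, rfl⟩ := even_iff_exists_two_mul.1 (Nat.not_odd_iff_even.1 he)
    rw [mul_nsmul, htwo, nsmul_zero]

theorem residueSymbol_two_mul {x y : ℤ} (hx : x ≠ 0) (hy : y ≠ 0) :
    residueSymbol 2 (x * y) = residueSymbol 2 x + residueSymbol 2 y := by
  obtain ⟨e, u, hu, rfl⟩ := exists_not_dvd_and_eq_pow_mul (p := 2) hx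
  obtain ⟨f, w, hw, rfl⟩ := exists_not_dvd_and_eq_pow_mul (p := 2) hy
  rw [Nat.cast_ofNat] at *
  rw [show 2 ^ e * u * (2 ^ f * w) = 2 ^ (e + f) * (u * w) by ring, residueSymbol_two_pow_mul e hu,
    residueSymbol_two_pow_mul f hw, residueSymbol_two_pow_mul _ (Int.prime_two.not_dvd_mul hu hw),
    add_nsmul]

theorem residueSymbol_two_prod {ι : Type*} {s : Finset ι} {x : ι → ℤ} (hx : ∀ i ∈ s, x i ≠ 0) :
    residueSymbol 2 (∏ i ∈ s, x i) = ∑ i ∈ s, residueSymbol 2 (x i) := by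
  induction s using Finset.cons_induction with
  | empty => exact residueSymbol_of_not_dvd (u := 1) (by decide)
  | cons a s ha ih =>
    have hs : ∀ i ∈ s, x i ≠ 0 := fun i hi => hx i (Finset.mem_cons_of_mem hi)
    rw [Finset.prod_cons, Finset.sum_cons, residueSymbol_two_mul (hx a (Finset.mem_cons_self a s))
      (Finset.prod_ne_zero_iff.2 hs), ih hs]

/-- All residues vanish: at an odd prime, compare with a family which is orthogonal with unit
norms at that prime; at `2`, the residue only depends on the determinant. -/
theorem exists_isOrthogonalFamily_sum_wittClass_mem_zmultiples {n : ℕ}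
    {G : Matrix (Fin n) (Fin n) ℤ} (hG : G.IsSymm) (hdet : IsUnit G.det) :
    ∃ e : Fin n → Fin n → ℤ, IsOrthogonalFamily (toLinearMap₂' ℤ G) e ∧
      ∑ i, wittClass (toLinearMap₂' ℤ G (e i) (e i)) ∈
        AddSubgroup.zmultiples (wittClass (1 : ℤ)) := by
  obtain ⟨e, he, -⟩ := exists_isOrthogonalFamily_of_det_notMem ⊥ (by simp) hG
    (by simpa using hdet.ne_zero)
  refine ⟨e, he, sum_wittClass_mem_zmultiples he.apply_self_ne_zero fun p hp => ?_⟩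
  have : Fact p.Prime := ⟨hp⟩
  have hpdet : ¬(p : ℤ) ∣ G.det := fun h =>
    (Nat.prime_iff_prime_int.1 hp).not_isUnit (isUnit_of_dvd_unit h hdet)
  rcases hp.eq_two_or_odd' with rfl | hodd
  · rw [← residueSymbol_two_prod fun i _ => he.apply_self_ne_zero i, he.prod_apply_self,
      (isWittSymbol_residueSymbol 2).map_mul_sq _ _ hdet.ne_zero he.det_of_ne_zero,
      residueSymbol_of_not_dvd hpdet]
  · have : (Ideal.span {(p : ℤ)}).IsPrime := (Ideal.span_singleton_prime (by
      exact_mod_cast hp.ne_zero)).2 (Nat.prime_iff_prime_int.1 hp)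
    obtain ⟨f, hf, hf'⟩ := exists_isOrthogonalFamily_of_det_notMem (Ideal.span {(p : ℤ)})
      (by
        rw [Ideal.mem_span_singleton]
        exact_mod_cast fun h => hodd.not_two_dvd_nat ((Nat.prime_dvd_prime_iff_eq hp
          Nat.prime_two).1 h).symm.dvd)
      hG (by rwa [Ideal.mem_span_singleton])
    rw [(isWittSymbol_residueSymbol p).sum_eq_sum hG he hf]
    exact Finset.sum_eq_zero fun i _ => residueSymbol_of_not_dvd fun h =>
      hf' i (Ideal.mem_span_singleton.2 h)

end UnimodularForms

section NeutralForms

variable {K V V' : Type*} [Field K] [AddCommGroup V] [Module K V] [AddCommGroup V'] [Module K V']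
  {Q : QuadraticForm K V} {Q' : QuadraticForm K V'}

theorem neg_prod (Q : QuadraticForm K V) (Q' : QuadraticForm K V') :
    -(Q.prod Q') = (-Q).prod (-Q') := by
  ext x
  simp [add_comm]

theorem equivalent_neg (h : Q.Equivalent Q') : (-Q).Equivalent (-Q') := by
  obtain ⟨g⟩ := h
  exact ⟨⟨g.toLinearEquiv, fun x => by simp [g.map_app]⟩⟩

/-- A quadratic form with an isotropic subspace of at least half the dimension. Among the
nondegenerate forms these are the ones whose Witt class vanishes. -/
def IsNeutral (Q : QuadraticForm K V) : Prop :=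
  ∃ U : Submodule K V, (∀ x ∈ U, Q x = 0) ∧ Module.finrank K V ≤ 2 * Module.finrank K U

theorem IsNeutral.of_injective {W : Type*} [AddCommGroup W] [Module K W] (T : W →ₗ[K] V)
    (hT : Function.Injective T) (h : ∀ x, Q (T x) = 0)
    (hdim : Module.finrank K V ≤ 2 * Module.finrank K W) : IsNeutral Q :=
  ⟨LinearMap.range T, by rintro _ ⟨x, rfl⟩; exact h x, by
    rwa [LinearMap.finrank_range_of_inj hT]⟩

theorem IsNeutral.of_equivalent (h : IsNeutral Q) (hQ : Q.Equivalent Q') : IsNeutral Q' := by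
  obtain ⟨U, hU, hdim⟩ := h
  obtain ⟨g⟩ := hQ
  refine .of_injective (g.toLinearEquiv.toLinearMap ∘ₗ U.subtype)
    (g.injective.comp Subtype.val_injective) (fun x => ?_) (g.toLinearEquiv.finrank_eq ▸ hdim)
  exact (g.map_app x).trans (hU x x.2)

theorem IsNeutral.neg (h : IsNeutral Q) : IsNeutral (-Q) := by
  obtain ⟨U, hU, hdim⟩ := h
  exact ⟨U, fun x hx => by rw [_root_.neg_apply, hU x hx, neg_zero], hdim⟩

variable [FiniteDimensional K V] [FiniteDimensional K V']

theorem IsNeutral.prod (h : IsNeutral Q) (h' : IsNeutral Q') : IsNeutral (Q.prod Q') := by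
  obtain ⟨U, hU, hdim⟩ := h
  obtain ⟨U', hU', hdim'⟩ := h'
  refine .of_injective (U.subtype.prodMap U'.subtype)
    (Subtype.val_injective.prodMap Subtype.val_injective) (fun x => ?_) ?_
  · simp [hU _ x.1.2, hU' _ x.2.2]
  · rw [Module.finrank_prod, Module.finrank_prod]
    lia

theorem isNeutral_prod_neg (T : V' →ₗ[K] V) (hT : ∀ x, Q (T x) = Q' x)
    (hdim : Module.finrank K V ≤ Module.finrank K V') : IsNeutral (Q.prod (-Q')) :=
  .of_injective (T.prod LinearMap.id) (fun _ _ h => congrArg Prod.snd h) (by simp [hT]) (by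
    rw [Module.finrank_prod]
    lia)

theorem finrank_map_add_finrank_inf_ker {W : Type*} [AddCommGroup W] [Module K W] (f : V →ₗ[K] W)
    (U : Submodule K V) : Module.finrank K (U.map f) +
      Module.finrank K (U ⊓ LinearMap.ker f : Submodule K V) = Module.finrank K U := by
  rw [← LinearMap.finrank_range_add_finrank_ker (f.domRestrict U), LinearMap.range_domRestrict,
    LinearMap.ker_domRestrict, ← U.map_comap_subtype,
    ← ((LinearMap.ker f).comap U.subtype).equivMapOfInjective U.subtype
      U.injective_subtype |>.finrank_eq]

/-- The map `x ↦ B · x` from `U` to the dual of `N` has kernel `U ⊓ Nᗮ`, and its image annihilates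
`U ⊓ N`. -/
theorem finrank_add_finrank_inf_le {B : LinearMap.BilinForm K V} {U : Submodule K V}
    (hU : ∀ x ∈ U, ∀ y ∈ U, B x y = 0) (N : Submodule K V) :
    Module.finrank K U + Module.finrank K (N ⊓ U : Submodule K V) ≤
      Module.finrank K (U ⊓ N.orthogonalBilin B : Submodule K V) + Module.finrank K N := by
  let ρ : V →ₗ[K] Module.Dual K N := N.subtype.dualMap ∘ₗ B.flip
  have hker : LinearMap.ker ρ = N.orthogonalBilin B := by
    ext x
    simp [ρ, LinearMap.ext_iff]
  have hmap : U.map ρ ≤ (U.comap N.subtype).dualAnnihilator := by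
    rintro _ ⟨x, hx, rfl⟩
    exact (Submodule.mem_dualAnnihilator _).2 fun y hy => hU y hy x hx
  have hmap_finrank := Submodule.finrank_mono hmap
  have hrank := finrank_map_add_finrank_inf_ker ρ U
  have hannihilator := Subspace.finrank_add_finrank_dualAnnihilator_eq (U.comap N.subtype)
  rw [((U.comap N.subtype).equivMapOfInjective N.subtype N.injective_subtype).finrank_eq,
    N.map_comap_subtype] at hannihilator
  rw [hker] at hrank
  lia

/-- With `Δ` the diagonal of `V' × V'`, the image of `U ⊓ Δᗮ` in `V` is isotropic, and the kernel
is `U ⊓ Δ`. -/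
theorem IsNeutral.of_prod_prod_neg (hQ' : Q'.polarBilin.SeparatingLeft)
    (h : IsNeutral (Q.prod (Q'.prod (-Q')))) : IsNeutral Q := by
  obtain ⟨U, hU, hdim⟩ := h
  set T := Q.prod (Q'.prod (-Q')) with hT
  have hUB : ∀ x ∈ U, ∀ y ∈ U, T.polarBilin x y = 0 := fun x hx y hy => by
    rw [polarBilin_apply_apply, polar, hU _ hx, hU _ hy, hU _ (add_mem hx hy), sub_zero, sub_zero]
  let δ : V' →ₗ[K] V × V' × V' := .prod 0 (.prod .id .id)
  have hδ : Function.Injective δ := fun _ _ h => congrArg (fun x => x.2.1) h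
  have horth {x : V × V' × V'} (hx : x ∈ (LinearMap.range δ).orthogonalBilin T.polarBilin) :
      x.2.1 = x.2.2 := by
    refine sub_eq_zero.1 (hQ' _ fun y => ?_)
    have hxy := hx (δ y) ⟨y, rfl⟩
    simpa [hT, δ, polar_comm _ y, polar_neg, sub_eq_add_neg] using hxy
  have hker : (U ⊓ (LinearMap.range δ).orthogonalBilin T.polarBilin) ⊓
      LinearMap.ker (LinearMap.fst K V (V' × V')) ≤ LinearMap.range δ ⊓ U := fun x hx =>
    ⟨⟨x.2.1, Prod.ext hx.2.symm (Prod.ext rfl (horth hx.1.2))⟩, hx.1.1⟩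
  refine ⟨(U ⊓ (LinearMap.range δ).orthogonalBilin T.polarBilin).map (.fst K V (V' × V')), ?_, ?_⟩
  · rintro _ ⟨x, hx, rfl⟩
    simpa [hT, horth hx.2] using hU x hx.1
  · have hmap := finrank_map_add_finrank_inf_ker (.fst K V (V' × V'))
      (U ⊓ (LinearMap.range δ).orthogonalBilin T.polarBilin)
    have horth_finrank := finrank_add_finrank_inf_le hUB (LinearMap.range δ)
    have hker_finrank := Submodule.finrank_mono hker
    rw [LinearMap.finrank_range_of_inj hδ] at horth_finrank
    rw [Module.finrank_prod, Module.finrank_prod] at hdim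
    lia

end NeutralForms

section DiagonalForms

variable {K ι κ : Type*} [Field K] [Fintype ι] [Fintype κ] {a : ι → K} {b : κ → K}

theorem weightedSumSquares_sumElim_equivalent (a : ι → K) (b : κ → K) :
    (weightedSumSquares K (Sum.elim a b)).Equivalent
      ((weightedSumSquares K a).prod (weightedSumSquares K b)) :=
  ⟨⟨LinearEquiv.sumArrowLequivProdArrow ι κ K K, fun x => by
    simp [weightedSumSquares_apply, Fintype.sum_sum_type]⟩⟩

theorem weightedSumSquares_comp_equivalent (b : κ → K) (σ : ι ≃ κ) :
    (weightedSumSquares K (b ∘ σ)).Equivalent (weightedSumSquares K b) :=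
  ⟨⟨LinearEquiv.funCongrLeft K K σ.symm, fun x => by
    simp [weightedSumSquares_apply, ← σ.sum_comp]⟩⟩

theorem polar_weightedSumSquares (a x y : ι → K) :
    polar (weightedSumSquares K a) x y = 2 * ∑ i, a i * x i * y i := by
  simp only [polar, weightedSumSquares_apply, ← Finset.sum_sub_distrib, Finset.mul_sum]
  exact Finset.sum_congr rfl fun i _ => by simp; ring

theorem separatingLeft_polarBilin_weightedSumSquares [NeZero (2 : K)] (ha : ∀ i, a i ≠ 0) :
    (weightedSumSquares K a).polarBilin.SeparatingLeft := fun x hx => by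
  classical
  ext i
  simpa [polar_weightedSumSquares, Pi.single_apply, two_ne_zero, ha] using hx (Pi.single i 1)

theorem exists_equiv_of_sum_freeAbelianGroup_of_eq {X : Type*} {a : ι → X} {b : κ → X}
    (h : ∑ i, FreeAbelianGroup.of (a i) = ∑ j, FreeAbelianGroup.of (b j)) :
    ∃ σ : ι ≃ κ, b ∘ σ = a := by
  classical
  have hfiber (c : X) : Nonempty ({i // a i = c} ≃ {j // b j = c}) := by
    rw [← Fintype.card_eq, Fintype.card_subtype, Fintype.card_subtype]
    have := congrArg (FreeAbelianGroup.lift fun z => if z = c then (1 : ℤ) else 0) h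
    simpa only [map_sum, FreeAbelianGroup.lift_apply_of, Finset.sum_boole, Nat.cast_inj] using this
  exact ⟨Equiv.ofFiberEquiv fun c => (hfiber c).some, funext <| Equiv.ofFiberEquiv_map _⟩

theorem IsNeutral.prod_neg_prod_prod_neg {V₁ V₂ V₃ V₄ : Type*} [AddCommGroup V₁] [Module K V₁]
    [FiniteDimensional K V₁] [AddCommGroup V₂] [Module K V₂] [FiniteDimensional K V₂]
    [AddCommGroup V₃] [Module K V₃] [FiniteDimensional K V₃] [AddCommGroup V₄] [Module K V₄]
    [FiniteDimensional K V₄] {Q₁ : QuadraticForm K V₁} {Q₂ : QuadraticForm K V₂}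
    {Q₃ : QuadraticForm K V₃} {Q₄ : QuadraticForm K V₄} (h : IsNeutral (Q₁.prod (-Q₂)))
    (h' : IsNeutral (Q₃.prod (-Q₄))) : IsNeutral ((Q₁.prod Q₃).prod (-(Q₂.prod Q₄))) := by
  rw [neg_prod]
  exact (h.prod h').of_equivalent ⟨.prodProdProdComm _ _ _ _⟩

/-- The differences of formal sums `∑ [a i] - ∑ [b j]` with `a i`, `b j` nonzero such that the form
`⟨a i⟩ ⊥ ⟨-b j⟩` is neutral: a subgroup containing the relators of the Witt group, so that equality
of Witt classes yields isotropic subspaces. -/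
def neutralDifferences (K : Type*) [Field K] : AddSubgroup (FreeAbelianGroup K) where
  carrier := {x | ∃ (ι κ : Type) (_ : Fintype ι) (_ : Fintype κ) (a : ι → K) (b : κ → K),
    (∀ i, a i ≠ 0) ∧ (∀ j, b j ≠ 0) ∧
    x = ∑ i, FreeAbelianGroup.of (a i) - ∑ j, FreeAbelianGroup.of (b j) ∧
    IsNeutral ((weightedSumSquares K a).prod (-weightedSumSquares K b))}
  zero_mem' := ⟨Empty, Empty, inferInstance, inferInstance, nofun, nofun, nofun, nofun, by simp,
    isNeutral_prod_neg .id (fun _ => rfl) le_rfl⟩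
  add_mem' := by
    rintro _ _ ⟨ι, κ, _, _, a, b, ha, hb, rfl, h⟩ ⟨ι', κ', _, _, a', b', ha', hb', rfl, h'⟩
    refine ⟨ι ⊕ ι', κ ⊕ κ', inferInstance, inferInstance, Sum.elim a a', Sum.elim b b',
      Sum.rec ha ha', Sum.rec hb hb', ?_, (h.prod_neg_prod_prod_neg h').of_equivalent ?_⟩
    · simp only [Fintype.sum_sum_type, Sum.elim_inl, Sum.elim_inr]
      abel
    · exact (weightedSumSquares_sumElim_equivalent a a').symm.prod
        (equivalent_neg (weightedSumSquares_sumElim_equivalent b b').symm)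
  neg_mem' := by
    rintro _ ⟨ι, κ, _, _, a, b, ha, hb, rfl, h⟩
    refine ⟨κ, ι, inferInstance, inferInstance, b, a, hb, ha, by abel, ?_⟩
    have hneg := h.neg
    rw [neg_prod, neg_neg] at hneg
    exact hneg.of_equivalent ⟨.prodComm _ _⟩

theorem closure_wittRelators_le_neutralDifferences (K : Type*) [Field K] :
    AddSubgroup.closure (wittRelators K) ≤ neutralDifferences K := by
  rw [AddSubgroup.closure_le]
  rintro _ (⟨a, b, ha, hb, rfl⟩ | ⟨a, ha, rfl⟩ | ⟨a, b, ha, hb, hab, rfl⟩)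
  · refine ⟨Fin 1, Fin 1, inferInstance, inferInstance, ![a * b ^ 2], ![a], ?_, ?_, by simp,
      isNeutral_prod_neg (LinearMap.lsmul K _ b⁻¹) (fun x => ?_) le_rfl⟩
    · simp [ha, hb]
    · simp [ha]
    · simp only [LinearMap.lsmul_apply, weightedSumSquares_apply, Finset.univ_unique,
        Fin.default_eq_zero, cons_val_fin_one, Pi.smul_apply, smul_eq_mul, Finset.sum_singleton]
      field_simp
  · refine ⟨Fin 2, Fin 0, inferInstance, inferInstance, ![a, -a], ![], ?_, nofun, by simp,
      .of_injective (.prod (.pi fun _ => .id) 0) (W := K) (fun x y h => ?_) (fun x => ?_) ?_⟩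
    · simp [ha]
    · exact congrFun (congrArg Prod.fst h) 0
    · simp [weightedSumSquares_apply]
    · simp
  · refine ⟨Fin 2, Fin 2, inferInstance, inferInstance, ![a, b], ![a + b, a * b * (a + b)], ?_, ?_,
      by simp, isNeutral_prod_neg (toLin' !![1, b; 1, -a]) (fun x => ?_) le_rfl⟩
    · simp [ha, hb]
    · simp [ha, hb, hab]
    · simp only [weightedSumSquares_apply, Fin.sum_univ_two, toLin'_apply, mulVec, dotProduct,
        of_apply, cons_val_zero, cons_val_one, smul_eq_mul]
      ring

theorem isNeutral_of_sum_wittClass_eq [NeZero (2 : K)] {ι κ : Type} [Fintype ι] [Fintype κ]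
    {d : ι → K} {c : κ → K} (h : ∑ i, wittClass (d i) = ∑ j, wittClass (c j)) :
    IsNeutral ((weightedSumSquares K d).prod (-weightedSumSquares K c)) := by
  have hmem : ∑ i, FreeAbelianGroup.of (d i) - ∑ j, FreeAbelianGroup.of (c j) ∈
      AddSubgroup.closure (wittRelators K) := by
    rw [← QuotientAddGroup.eq_zero_iff, ← QuotientAddGroup.mk'_apply, map_sub, map_sum, map_sum]
    exact sub_eq_zero.2 h
  obtain ⟨α, β, _, _, a, b, -, hb, heq, hab⟩ := closure_wittRelators_le_neutralDifferences K hmem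
  obtain ⟨σ, hσ⟩ := exists_equiv_of_sum_freeAbelianGroup_of_eq
    (a := Sum.elim d b) (b := Sum.elim a c) (by
      simpa [Fintype.sum_sum_type] using sub_eq_sub_iff_add_eq_add.1 heq)
  have hequiv : ((weightedSumSquares K a).prod (weightedSumSquares K c)).Equivalent
      ((weightedSumSquares K d).prod (weightedSumSquares K b)) :=
    (weightedSumSquares_sumElim_equivalent a c).symm.trans <|
      (weightedSumSquares_comp_equivalent _ σ).symm.trans <|
        hσ ▸ weightedSumSquares_sumElim_equivalent d b
  have hneutral := hab.prod_neg_prod_prod_neg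
    (isNeutral_prod_neg (Q := weightedSumSquares K c) .id (fun _ => rfl) le_rfl)
  have hswap : IsNeutral (((weightedSumSquares K d).prod (weightedSumSquares K b)).prod
      ((-weightedSumSquares K c).prod (-weightedSumSquares K b))) :=
    hneutral.of_equivalent <| by
      rw [← neg_prod]
      exact hequiv.prod (equivalent_neg ⟨.prodComm _ _⟩)
  exact (hswap.of_equivalent ⟨.prodProdProdComm _ _ _ _⟩).of_prod_prod_neg
    (separatingLeft_polarBilin_weightedSumSquares hb)

end DiagonalForms

section IsotropicSubspaces

variable {K : Type*} [Field K] [LinearOrder K] [IsStrictOrderedRing K]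

/-- A negative definite `N` gives a negative definite `N × V'`, which meets the isotropic subspace
of `V × V'` trivially and so bounds its dimension from above; intersecting with `V` costs at most
`dim V'`. -/
theorem IsNeutral.exists_isotropic_of_posDef {V V' : Type*} [AddCommGroup V] [Module K V]
    [FiniteDimensional K V] [AddCommGroup V'] [Module K V'] [FiniteDimensional K V']
    {Q : QuadraticForm K V} {Q' : QuadraticForm K V'} (hQ' : Q'.PosDef)
    (h : IsNeutral (Q.prod (-Q'))) :
    ∃ W : Submodule K V, (∀ x ∈ W, Q x = 0) ∧ sigNeg Q ≤ Module.finrank K W := by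
  obtain ⟨U, hU, hdim⟩ := h
  obtain ⟨N, hN, hNneg⟩ := exists_finrank_eq_sigNeg_and_negDef Q
  let T : N × V' →ₗ[K] V × V' := N.subtype.prodMap .id
  have hT : Function.Injective T := Subtype.val_injective.prodMap Function.injective_id
  have hdisjoint : Disjoint (LinearMap.range T) U := by
    rw [Submodule.disjoint_def]
    rintro _ ⟨⟨⟨x, hx⟩, y⟩, rfl⟩ hxy
    change (x, y) ∈ U at hxy
    change (x, y) = 0
    have hQ : Q x = Q' y := by simpa [← sub_eq_add_neg, sub_eq_zero] using hU _ hxy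
    have hx0 : x = 0 := by
      by_contra hx0
      have hneg : 0 < -Q x := hNneg ⟨x, hx⟩ (by simpa using hx0)
      exact (neg_pos.1 hneg).not_ge (hQ ▸ hQ'.nonneg y)
    rw [hx0, map_zero] at hQ
    rw [hx0, hQ'.anisotropic y hQ.symm, Prod.mk_zero_zero]
  have hsum := Submodule.finrank_add_finrank_le_of_disjoint hdisjoint
  refine ⟨U.comap (.inl K V V'), fun x hx => by simpa using hU _ hx, ?_⟩
  have hsnd := finrank_map_add_finrank_inf_ker (.snd K V V') U
  have hmap := (U.map (.snd K V V')).finrank_le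
  rw [LinearMap.ker_snd, inf_comm, ← Submodule.map_comap_eq,
    ← ((U.comap _).equivMapOfInjective _ LinearMap.inl_injective).finrank_eq] at hsnd
  rw [LinearMap.finrank_range_of_inj hT, Module.finrank_prod, Module.finrank_prod, hN] at hsum
  rw [Module.finrank_prod] at hdim
  lia

theorem exists_isotropic_of_sum_wittClass_mem_zmultiples {ι : Type} [Fintype ι] {d : ι → K}
    (hd : ∀ i, d i ≠ 0) (h : ∑ i, wittClass (d i) ∈ AddSubgroup.zmultiples (wittClass (1 : K))) :
    ∃ W : Submodule K (ι → K), (∀ x ∈ W, weightedSumSquares K d x = 0) ∧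
      min (sigPos (weightedSumSquares K d)) (sigNeg (weightedSumSquares K d)) ≤
        Module.finrank K W := by
  have hcount (k : ℕ) : k • wittClass (1 : K) = ∑ _i : Fin k, wittClass (1 : K) := by simp
  have hposDef (k : ℕ) : (weightedSumSquares K fun _ : Fin k => (1 : K)).PosDef := by
    intro x hx
    obtain ⟨i, hi⟩ := Function.ne_iff.1 hx
    simpa [weightedSumSquares_apply] using
      Finset.sum_pos' (fun j _ => mul_self_nonneg (x j)) ⟨i, Finset.mem_univ i, mul_self_pos.2 hi⟩
  obtain ⟨k, hk : k • wittClass (1 : K) = ∑ i, wittClass (d i)⟩ := h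
  obtain ⟨k, rfl | rfl⟩ := k.eq_nat_or_neg
  · rw [natCast_zsmul, hcount] at hk
    obtain ⟨W, hW, hdim⟩ :=
      (isNeutral_of_sum_wittClass_eq hk.symm).exists_isotropic_of_posDef (hposDef k)
    exact ⟨W, hW, (min_le_right _ _).trans hdim⟩
  · have hneg : weightedSumSquares K (fun i => -d i) = -weightedSumSquares K d := by
      ext x
      simp [weightedSumSquares_apply]
    have hk' : ∑ i, wittClass (-d i) = ∑ _i : Fin k, wittClass (1 : K) := by
      have hd' (i : ι) : wittClass (-d i) = -wittClass (d i) :=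
        (neg_eq_of_add_eq_zero_right ((isWittSymbol_wittClass K).map_add_map_neg _ (hd i))).symm
      rw [Finset.sum_congr rfl fun i _ => hd' i, Finset.sum_neg_distrib, ← hk, neg_zsmul, neg_neg,
        natCast_zsmul, hcount]
    obtain ⟨W, hW, hdim⟩ :=
      (isNeutral_of_sum_wittClass_eq hk').exists_isotropic_of_posDef (hposDef k)
    rw [hneg, sigNeg_neg] at hdim
    exact ⟨W, fun x hx => neg_eq_zero.1 (by rw [← _root_.neg_apply, ← hneg, hW x hx]),
      (min_le_left _ _).trans hdim⟩

end IsotropicSubspaces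

section Signature

theorem equivalent_weightedSumSquares_of_mul_mul_transpose_eq {K : Type*} [Field K] {n : ℕ}
    {A P : Matrix (Fin n) (Fin n) K} {d : Fin n → K} (hP : P.det ≠ 0)
    (h : P * A * Pᵀ = diagonal d) : A.toQuadraticForm'.Equivalent (weightedSumSquares K d) := by
  have hPt : IsUnit Pᵀ.det := by rwa [det_transpose, isUnit_iff_ne_zero]
  refine .symm ⟨⟨Pᵀ.toLinearEquiv' (Pᵀ.invertibleOfIsUnitDet hPt), fun x => ?_⟩⟩
  have hdiag : x ⬝ᵥ (P * A * Pᵀ) *ᵥ x = ∑ i, d i * (x i * x i) := by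
    rw [h]
    simp only [mulVec_diagonal, dotProduct]
    exact Finset.sum_congr rfl fun i _ => by ring
  change toLinearMap₂' K A (Pᵀ *ᵥ x) (Pᵀ *ᵥ x) = weightedSumSquares K d x
  simp only [toLinearMap₂'_apply', weightedSumSquares_apply, smul_eq_mul, ← hdiag,
    ← mulVec_mulVec, dotProduct_mulVec x, ← mulVec_transpose]

theorem equivalent_weightedSumSquares_eigenvalues {n : ℕ} {A : Matrix (Fin n) (Fin n) ℝ}
    (hA : A.IsHermitian) :
    A.toQuadraticForm'.Equivalent (weightedSumSquares ℝ hA.eigenvalues) := by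
  refine equivalent_weightedSumSquares_of_mul_mul_transpose_eq
    (P := (hA.eigenvectorUnitary : Matrix (Fin n) (Fin n) ℝ)ᵀ) ?_ ?_
  · rw [det_transpose]
    exact (isUnit_det_of_left_inverse (Unitary.coe_star_mul_self hA.eigenvectorUnitary)).ne_zero
  · have := hA.conjStarAlgAut_star_eigenvectorUnitary
    rw [Unitary.conjStarAlgAut_star_apply] at this
    simpa [star_eq_conjTranspose] using this

variable {n : ℕ} {G : Matrix (Fin n) (Fin n) ℤ}

theorem IsOrthogonalFamily.equivalent_weightedSumSquares {e : Fin n → Fin n → ℤ}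
    (he : IsOrthogonalFamily (toLinearMap₂' ℤ G) e) (K : Type*) [Field K] [CharZero K] :
    (G.map (Int.cast : ℤ → K)).toQuadraticForm'.Equivalent
      (weightedSumSquares K fun i => (toLinearMap₂' ℤ G (e i) (e i) : K)) := by
  refine equivalent_weightedSumSquares_of_mul_mul_transpose_eq
    (P := (Matrix.of e).map (Int.cast : ℤ → K)) ?_ ?_
  · rw [← Int.cast_det]
    exact Int.cast_ne_zero.2 he.det_of_ne_zero
  · rw [← transpose_map, ← Matrix.map_mul_intCast, ← Matrix.map_mul_intCast,
      he.of_mul_mul_transpose_of, diagonal_map Int.cast_zero]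

theorem isHermitian_map_intCast (hG : G.IsSymm) : (G.map ((↑·) : ℤ → ℝ)).IsHermitian := by
  rw [IsHermitian, conjTranspose_eq_transpose_of_trivial, ← transpose_map, hG]

theorem sigPlus_eq_sigPos (hG : G.IsSymm) :
    sigPlus G = sigPos (G.map ((↑·) : ℤ → ℝ)).toQuadraticForm' := by
  have hA := isHermitian_map_intCast hG
  rw [sigPlus, dif_pos hA, (equivalent_weightedSumSquares_eigenvalues hA).sigPos_eq,
    QuadraticForm.sigPos_weightedSumSquares]
  rfl

theorem sigMinus_eq_sigNeg (hG : G.IsSymm) :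
    sigMinus G = sigNeg (G.map ((↑·) : ℤ → ℝ)).toQuadraticForm' := by
  have hA := isHermitian_map_intCast hG
  rw [sigMinus, dif_pos hA, (equivalent_weightedSumSquares_eigenvalues hA).sigNeg_eq,
    QuadraticForm.sigNeg_weightedSumSquares]
  rfl

theorem sigPlus_add_sigMinus (hG : G.IsSymm) (hdet : G.det ≠ 0) : sigPlus G + sigMinus G = n := by
  have hA := isHermitian_map_intCast hG
  have hne (i : Fin n) : hA.eigenvalues i ≠ 0 := fun h => hdet <| by
    have hprod := hA.det_eq_prod_eigenvalues
    rw [Finset.prod_eq_zero (Finset.mem_univ i) (by rw [h, RCLike.ofReal_zero])] at hprod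
    rwa [← Int.cast_det, Int.cast_eq_zero] at hprod
  have hcompl : {i | hA.eigenvalues i < 0} = {i | 0 < hA.eigenvalues i}ᶜ := by
    ext i
    simp [(hne i).le_iff_lt]
  rw [sigPlus, sigMinus, dif_pos hA, dif_pos hA]
  have hcard := Set.ncard_add_ncard_compl {i | 0 < hA.eigenvalues i}
  rw [← hcompl, Nat.card_fin] at hcard
  exact hcard

theorem exists_isotropic_of_isUnit_det (hG : G.IsSymm) (hdet : IsUnit G.det) :
    ∃ U : Submodule ℚ (Fin n → ℚ), (∀ x ∈ U, (G.map ((↑·) : ℤ → ℚ)).toQuadraticForm' x = 0) ∧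
      min (sigPlus G) (sigMinus G) ≤ Module.finrank ℚ U := by
  obtain ⟨e, he, hsum⟩ := exists_isOrthogonalFamily_sum_wittClass_mem_zmultiples hG hdet
  have hφ := (isWittSymbol_wittClass ℚ).comp_ringHom (Int.castRingHom ℚ).injective_int
  obtain ⟨k, hk : k • wittClass (1 : ℤ) = _⟩ := hsum
  obtain ⟨W, hW, hdim⟩ := exists_isotropic_of_sum_wittClass_mem_zmultiples (K := ℚ)
    (d := fun i => (toLinearMap₂' ℤ G (e i) (e i) : ℚ))
    (fun i => Int.cast_ne_zero.2 (he.apply_self_ne_zero i)) ⟨k, by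
      simpa [hφ.lift_wittClass] using congrArg hφ.lift hk⟩
  obtain ⟨g⟩ := (he.equivalent_weightedSumSquares ℚ).symm
  refine ⟨W.map g.toLinearEquiv.toLinearMap, ?_, ?_⟩
  · rintro _ ⟨x, hx, rfl⟩
    exact (g.map_app x).trans (hW x hx)
  · rw [LinearEquiv.finrank_map_eq]
    refine le_of_eq_of_le ?_ hdim
    rw [sigPlus_eq_sigPos hG, sigMinus_eq_sigNeg hG, (he.equivalent_weightedSumSquares ℝ).sigPos_eq,
      (he.equivalent_weightedSumSquares ℝ).sigNeg_eq]
    simp only [QuadraticForm.sigPos_weightedSumSquares, QuadraticForm.sigNeg_weightedSumSquares,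
      Int.cast_pos, Int.cast_lt_zero]

end Signature

section PrimitiveEmbeddings

theorem finrank_comap_restrictScalars {R K M V : Type*} [CommRing R] [IsDomain R] [Field K]
    [Algebra R K] [IsFractionRing R K] [AddCommGroup M] [Module R M] [AddCommGroup V] [Module R V]
    [Module K V] [IsScalarTower R K V] (f : M →ₗ[R] V) [IsLocalizedModule (nonZeroDivisors R) f]
    (U : Submodule K V) :
    Module.finrank R ((U.restrictScalars R).comap f) = Module.finrank K U := by
  set N := (U.restrictScalars R).comap f
  have hU : N.localized' K (nonZeroDivisors R) f = U :=
    (Submodule.localized'gi K (nonZeroDivisors R) f).l_u_eq U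
  rw [← hU, IsLocalization.finrank_eq K (nonZeroDivisors R) le_rfl,
    IsLocalizedModule.finrank_eq _ (N.toLocalized' K (nonZeroDivisors R) f) le_rfl]

theorem transpose_mul_mul_eq_iff {R ι κ : Type*} [CommRing R] [Fintype ι] [Fintype κ]
    {T : Matrix ι κ R} {G : Matrix ι ι R} {M : Matrix κ κ R} :
    Tᵀ * G * T = M ↔ ∀ x y, T *ᵥ x ⬝ᵥ G *ᵥ (T *ᵥ y) = x ⬝ᵥ M *ᵥ y := by
  classical
  have h (x y : κ → R) : T *ᵥ x ⬝ᵥ G *ᵥ (T *ᵥ y) = x ⬝ᵥ (Tᵀ * G * T) *ᵥ y := by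
    rw [← mulVec_mulVec, ← mulVec_mulVec, dotProduct_mulVec x, vecMul_transpose]
  refine ⟨fun hM x y => hM ▸ h x y, fun hM => ?_⟩
  ext i j
  simpa using (h (Pi.single i 1) (Pi.single j 1)).symm.trans (hM _ _)

theorem exists_mul_eq_one_of_projective_quotient_range {R ι κ : Type*} [CommRing R] [Fintype ι]
    [Fintype κ] [DecidableEq κ] {T : Matrix ι κ R}
    (hT : Function.Injective T.mulVecLin)
    [Module.Projective R ((ι → R) ⧸ LinearMap.range T.mulVecLin)] :
    ∃ Z : Matrix κ ι R, Z * T = 1 := by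
  classical
  obtain ⟨-, r, hr⟩ :=
    ((LinearMap.exact_map_mkQ_range T.mulVecLin).split_tfae'.out 0 1 rfl rfl).1
      ⟨hT, LinearMap.exists_rightInverse_of_surjective _ (Submodule.range_mkQ _)⟩
  refine ⟨LinearMap.toMatrix' r, ?_⟩
  rw [← LinearMap.toMatrix'_toLin' T, ← LinearMap.toMatrix'_comp, toLin'_apply', hr,
    LinearMap.toMatrix'_id]

variable {m n : ℕ} {M : Matrix (Fin m) (Fin m) ℤ} {G : Matrix (Fin n) (Fin n) ℤ}
  {T T' : Matrix (Fin n) (Fin m) ℤ}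

theorem isPrimitiveLatticeEmbedding_iff :
    IsPrimitiveLatticeEmbedding M G T ↔
      Tᵀ * G * T = M ∧ ∃ Z : Matrix (Fin m) (Fin n) ℤ, Z * T = 1 := by
  constructor
  · rintro ⟨⟨hinj, hform⟩, hprim⟩
    have : Module.IsTorsionFree ℤ ((Fin n → ℤ) ⧸ LinearMap.range T.mulVecLin) := by
      refine Module.isTorsionFree_iff_smul_eq_zero.2 fun k v hkv =>
        or_iff_not_imp_left.2 fun hk => ?_
      obtain ⟨v, rfl⟩ := Submodule.mkQ_surjective _ v
      rw [← map_smul, Submodule.mkQ_apply, Submodule.Quotient.mk_eq_zero] at hkv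
      exact (Submodule.Quotient.mk_eq_zero _).2 (hprim v k hk hkv)
    exact ⟨transpose_mul_mul_eq_iff.2 hform, exists_mul_eq_one_of_projective_quotient_range hinj⟩
  · rintro ⟨hgram, Z, hZ⟩
    have hZT (x : Fin m → ℤ) : Z *ᵥ (T *ᵥ x) = x := by rw [mulVec_mulVec, hZ, one_mulVec]
    refine ⟨⟨Function.LeftInverse.injective hZT, transpose_mul_mul_eq_iff.1 hgram⟩, ?_⟩
    rintro v k hk ⟨x, hx⟩
    refine ⟨Z *ᵥ v, smul_right_injective _ hk ?_⟩
    calc k • T *ᵥ (Z *ᵥ v) = T *ᵥ (Z *ᵥ (T *ᵥ x)) := by rw [hx, mulVec_smul, mulVec_smul]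
      _ = k • v := by rw [hZT, hx]

theorem exists_dual_of_isPrimitiveLatticeEmbedding (hdet : IsUnit G.det)
    (hT : IsPrimitiveLatticeEmbedding M G T) :
    ∃ z : Fin m → Fin n → ℤ, ∀ i j, T.col i ⬝ᵥ G *ᵥ z j = if i = j then 1 else 0 := by
  obtain ⟨-, Z, hZ⟩ := isPrimitiveLatticeEmbedding_iff.1 hT
  refine ⟨fun j => G⁻¹ *ᵥ Z j, fun i j => ?_⟩
  rw [mulVec_mulVec, mul_nonsing_inv _ hdet, one_mulVec, dotProduct_comm]
  exact (congr_fun₂ hZ j i).trans (by simp [one_apply, eq_comm])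

theorem exists_saturated_isotropic_of_isUnit_det (hG : G.IsSymm) (hdet : IsUnit G.det) :
    ∃ N : Submodule ℤ (Fin n → ℤ), (∀ x ∈ N, x ⬝ᵥ G *ᵥ x = 0) ∧
      (∀ x, ∀ k : ℤ, k ≠ 0 → k • x ∈ N → x ∈ N) ∧
      min (sigPlus G) (sigMinus G) ≤ Module.finrank ℤ N := by
  obtain ⟨U, hU, hdim⟩ := exists_isotropic_of_isUnit_det hG hdet
  let c : (Fin n → ℤ) →ₗ[ℤ] (Fin n → ℚ) := .pi fun i => Algebra.linearMap ℤ ℚ ∘ₗ .proj i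
  refine ⟨(U.restrictScalars ℤ).comap c, fun x hx => ?_, fun x k hk hx => ?_,
    hdim.trans_eq (finrank_comap_restrictScalars c U).symm⟩
  · have hcx : c x ⬝ᵥ G.map ((↑·) : ℤ → ℚ) *ᵥ c x = (x ⬝ᵥ G *ᵥ x : ℤ) := by
      simp [c, dotProduct, mulVec]
    rw [← Int.cast_eq_zero (α := ℚ), ← hcx, ← toLinearMap₂'_apply']
    exact hU _ hx
  · rw [Submodule.mem_comap, map_smul, Submodule.restrictScalars_mem,
      ← Int.cast_smul_eq_zsmul ℚ, U.smul_mem_iff (Int.cast_ne_zero.2 hk)] at hx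
    exact hx

theorem exists_isPrimitiveLatticeEmbedding_zero (hG : G.IsSymm) (hdet : IsUnit G.det) :
    ∃ (r : ℕ) (T : Matrix (Fin n) (Fin r) ℤ), min (sigPlus G) (sigMinus G) ≤ r ∧
      IsPrimitiveLatticeEmbedding (0 : Matrix (Fin r) (Fin r) ℤ) G T := by
  obtain ⟨N, hself, hsat, hdim⟩ := exists_saturated_isotropic_of_isUnit_det hG hdet
  have horth (x y : N) : (x : Fin n → ℤ) ⬝ᵥ G *ᵥ y = 0 := by
    have hxy := hself _ (N.add_mem x.2 y.2)
    have hcomm : (y : Fin n → ℤ) ⬝ᵥ G *ᵥ x = x ⬝ᵥ G *ᵥ y := by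
      rw [dotProduct_mulVec, ← mulVec_transpose, hG, dotProduct_comm]
    rw [mulVec_add, dotProduct_add, add_dotProduct, add_dotProduct, hself x x.2, hself y y.2,
      hcomm] at hxy
    linarith
  let b := Module.finBasis ℤ N
  let t := N.subtype ∘ₗ b.equivFun.symm.toLinearMap
  have ht : (LinearMap.toMatrix' t).mulVec = fun x => (b.equivFun.symm x : Fin n → ℤ) :=
    funext (LinearMap.toMatrix'_mulVec t)
  refine ⟨_, LinearMap.toMatrix' t, hdim, ?_⟩
  rw [IsPrimitiveLatticeEmbedding, IsLatticeEmbedding, ht]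
  refine ⟨⟨Subtype.val_injective.comp b.equivFun.symm.injective, fun x y => ?_⟩, ?_⟩
  · rw [horth, zero_mulVec, dotProduct_zero]
  · rintro v k hk ⟨x, hx⟩
    have hv : v ∈ N := hsat v k hk (hx ▸ Subtype.prop _)
    exact ⟨b.equivFun ⟨v, hv⟩, by simp⟩

variable {Q : QuadraticForm ℤ (Fin n → ℤ)}

theorem exists_isHyperbolicFamily (hQ : ∀ x y, polar Q x y = x ⬝ᵥ G *ᵥ y) (hG : G.IsSymm)
    (hdet : IsUnit G.det) {ι : Type*} [Fintype ι]
    (hι : Fintype.card ι ≤ min (sigPlus G) (sigMinus G)) :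
    ∃ e f : ι → Fin n → ℤ, IsHyperbolicFamily Q e f := by
  classical
  obtain ⟨r, T, hr, hT⟩ := exists_isPrimitiveLatticeEmbedding_zero hG hdet
  obtain ⟨φ⟩ := Function.Embedding.nonempty_of_card_le
    (hι.trans (hr.trans_eq (Fintype.card_fin r).symm))
  obtain ⟨z, hz⟩ := exists_dual_of_isPrimitiveLatticeEmbedding hdet hT
  have hcol (i j : Fin r) : polar Q (T.col i) (T.col j) = 0 := by
    rw [hQ]
    simpa using hT.1.2 (Pi.single i 1) (Pi.single j 1)
  refine ⟨fun i => T.col (φ i), IsHyperbolicFamily.exists_of_isotropic (y := fun i => z (φ i))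
    (fun i => ?_) (fun i j => hcol _ _) fun i j => ?_⟩
  · simpa using (polar_self Q (T.col (φ i))).symm.trans (hcol (φ i) (φ i))
  · rw [hQ, hz]
    simp

theorem IsHyperbolicFamily.isPrimitiveLatticeEmbedding_standardVector
    (hQ : ∀ x y, polar Q x y = x ⬝ᵥ G *ᵥ y) {e f : Fin m → Fin n → ℤ} (h : IsHyperbolicFamily Q e f)
    {U : Matrix (Fin m) (Fin m) ℤ} :
    IsPrimitiveLatticeEmbedding (U + Uᵀ) G (Matrix.of (standardVector e f U))ᵀ := by
  have happly (u v : Fin m → Fin n → ℤ) (i j : Fin m) :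
      (Matrix.of u * G * (Matrix.of v)ᵀ) i j = polar Q (u i) (v j) := by
    rw [hQ, Matrix.mul_assoc]
    rfl
  refine isPrimitiveLatticeEmbedding_iff.2 ⟨?_, (G * (Matrix.of f)ᵀ)ᵀ, ?_⟩
  · ext i j
    rw [transpose_transpose, happly, h.polar_standardVector]
  · rw [← transpose_mul, ← Matrix.mul_assoc, ← transpose_one]
    congr 1
    ext i j
    rw [happly, h.polar_standardVector_right, one_apply]

theorem IsHyperbolicFamily.exists_isometry_col_eq_standardVector (hdet : IsUnit G.det)
    (hQ : ∀ x y, polar Q x y = x ⬝ᵥ G *ᵥ y) {e f : Option (Fin m) → Fin n → ℤ}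
    (h : IsHyperbolicFamily Q e f) {U : Matrix (Fin m) (Fin m) ℤ} (hU : ∀ i j, i < j → U i j = 0)
    (hT : IsPrimitiveLatticeEmbedding (U + Uᵀ) G T) :
    ∃ g ∈ isometriesFixing Q ⊥, ∀ i, g (T.col i) = standardVector (e ∘ some) (f ∘ some) U i := by
  obtain ⟨z, hz⟩ := exists_dual_of_isPrimitiveLatticeEmbedding hdet hT
  have hcol (i j : Fin m) : polar Q (T.col i) (T.col j) = (U + Uᵀ) i j := by
    rw [hQ]
    simpa using hT.1.2 (Pi.single i 1) (Pi.single j 1)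
  refine h.exists_isometry_apply_eq_standardVector hU (fun i => ?_) hcol
    fun i j => (hQ _ _).trans (hz i j)
  have hself := (QuadraticMap.polar_self Q (T.col i)).symm.trans (hcol i i)
  rw [Matrix.add_apply, transpose_apply, two_nsmul] at hself
  linarith

theorem exists_isLatticeAut_mul_eq (hQ : ∀ x y, polar Q x y = x ⬝ᵥ G *ᵥ y)
    {g : (Fin n → ℤ) ≃ₗ[ℤ] (Fin n → ℤ)} (hg : g ∈ isometriesFixing Q ⊥)
    (h : ∀ i, g (T.col i) = T'.col i) : ∃ S, IsLatticeAut G S ∧ S * T = T' := by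
  have hS (x : Fin n → ℤ) : LinearMap.toMatrix' g.toLinearMap *ᵥ x = g x :=
    LinearMap.toMatrix'_mulVec _ x
  refine ⟨LinearMap.toMatrix' g.toLinearMap, ⟨?_, ?_⟩, ?_⟩
  · rw [LinearMap.det_toMatrix']
    exact g.isUnit_det'
  · refine transpose_mul_mul_eq_iff.2 fun x y => ?_
    rw [hS, hS, ← hQ, ← hQ, polar_apply_apply_of_mem_isometriesFixing hg]
  · refine ext_col fun i => ?_
    rw [← mulVec_single_one, ← mulVec_mulVec, mulVec_single_one, hS, h]

end PrimitiveEmbeddings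

end James

theorem james_embedding_general {m n : ℕ} {M : Matrix (Fin m) (Fin m) ℤ}
    {G : Matrix (Fin n) (Fin n) ℤ} (hMsymm : M.IsSymm) (hMeven : ∀ i, 2 ∣ M i i)
    (hGsymm : G.IsSymm) (hGeven : ∀ i, 2 ∣ G i i) (hGuni : IsUnit G.det)
    (h : m + 1 ≤ min (sigPlus G) (sigMinus G)) :
    (∃ T : Matrix (Fin n) (Fin m) ℤ, IsPrimitiveLatticeEmbedding M G T) ∧
      ∀ T T' : Matrix (Fin n) (Fin m) ℤ,
        IsPrimitiveLatticeEmbedding M G T → IsPrimitiveLatticeEmbedding M G T' →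
          ∃ S : Matrix (Fin n) (Fin n) ℤ, IsLatticeAut G S ∧ S * T = T' := by
  obtain ⟨Q, hQ⟩ := James.exists_quadraticForm_polar_eq_dotProduct_mulVec hGsymm hGeven
  obtain ⟨e, f, hef⟩ := James.exists_isHyperbolicFamily hQ hGsymm hGuni (ι := Option (Fin m))
    (by simpa using h)
  choose c hc using hMeven
  obtain ⟨U, rfl, -, hU⟩ := James.exists_lowerTriangular_add_transpose_eq hMsymm hc
  refine ⟨⟨_, (hef.comp (Option.some_injective _)).isPrimitiveLatticeEmbedding_standardVector hQ⟩,
    fun T T' hT hT' => ?_⟩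
  obtain ⟨g, hg, hgT⟩ := hef.exists_isometry_col_eq_standardVector hGuni hQ hU hT
  obtain ⟨g', hg', hgT'⟩ := hef.exists_isometry_col_eq_standardVector hGuni hQ hU hT'
  refine James.exists_isLatticeAut_mul_eq hQ (mul_mem (inv_mem hg') hg) fun i => ?_
  exact (congrArg g'.symm ((hgT i).trans (hgT' i).symm)).trans (g'.symm_apply_apply _)

/-- James' theorem: if `t₊ + t₋ ≤ min{l₊, l₋} − 1` then a primitive embedding of the
even nondegenerate lattice `M` into the even unimodular lattice `L` exists, and any two
primitive embeddings differ by composition with an automorphism of `L`. -/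
theorem james_embedding {m n : ℕ} (tp tm lp lm : ℕ)
    (M : Matrix (Fin m) (Fin m) ℤ) (G : Matrix (Fin n) (Fin n) ℤ)
    (hMsymm : M.IsSymm) (hMeven : ∀ i, 2 ∣ M i i) (hMnd : M.det ≠ 0)
    (hMsp : sigPlus M = tp) (hMsm : sigMinus M = tm)
    (hGsymm : G.IsSymm) (hGeven : ∀ i, 2 ∣ G i i) (hGuni : IsUnit G.det)
    (hGsp : sigPlus G = lp) (hGsm : sigMinus G = lm)
    (h : tp + tm + 1 ≤ min lp lm) :
    (∃ T : Matrix (Fin n) (Fin m) ℤ, IsPrimitiveLatticeEmbedding M G T) ∧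
      ∀ T T' : Matrix (Fin n) (Fin m) ℤ,
        IsPrimitiveLatticeEmbedding M G T → IsPrimitiveLatticeEmbedding M G T' →
          ∃ S : Matrix (Fin n) (Fin n) ℤ, IsLatticeAut G S ∧ S * T = T' := by
  subst hMsp hMsm hGsp hGsm
  rw [James.sigPlus_add_sigMinus hMsymm hMnd] at h
  exact james_embedding_general hMsymm hMeven hGsymm hGeven hGuni h
end

section
/- Let G be the Gram matrix of Γ^{3,19}. For every nonzero even integer ν and every positive integer d such that 2d² divides ν, there exists a vector v ∈ ℤ²² with vᵀGv = ν whose coordinates have greatest common divisor d; moreover, any two vectors v, w ∈ ℤ²² with vᵀGv = wᵀGw = ν and with the same coordinate gcd d are related by an automorphism of Γ^{3,19}, i.e. there is S ∈ GL(22,ℤ) with SᵀGS = G and Sv = w. Thus equivalence classes of vectors in Γ^{3,19} under automorphisms are uniquely identified by their norm and divisor. -/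
open Matrix

/-- The hyperbolic plane `U`, the rank-2 even unimodular lattice of signature (1,1). -/
def matU : Matrix (Fin 2) (Fin 2) ℤ := !![0, 1; 1, 0]

/-- The negative of the `E8` Cartan matrix: the Gram matrix of `E8(−1)`. -/
def matE8neg : Matrix (Fin 8) (Fin 8) ℤ :=
  -(!![2, 0, -1, 0, 0, 0, 0, 0;
       0, 2, 0, -1, 0, 0, 0, 0;
       -1, 0, 2, -1, 0, 0, 0, 0;
       0, -1, -1, 2, -1, 0, 0, 0;
       0, 0, 0, -1, 2, -1, 0, 0;
       0, 0, 0, 0, -1, 2, -1, 0;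
       0, 0, 0, 0, 0, -1, 2, -1;
       0, 0, 0, 0, 0, 0, -1, 2])

/-- Block-diagonal (orthogonal) sum of two integer Gram matrices. -/
def blockSum {a b : ℕ} (A : Matrix (Fin a) (Fin a) ℤ) (B : Matrix (Fin b) (Fin b) ℤ) :
    Matrix (Fin (a + b)) (Fin (a + b)) ℤ :=
  Matrix.reindex finSumFinEquiv finSumFinEquiv (Matrix.fromBlocks A 0 0 B)

/-- The Gram matrix of `Γ^{3,19} = U ⊕ U ⊕ U ⊕ E8(−1) ⊕ E8(−1)`. -/
def GammaGram : Matrix (Fin 22) (Fin 22) ℤ :=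
  blockSum matU (blockSum matU (blockSum matU (blockSum matE8neg matE8neg)))

/-! Write `Q` for the quadratic form with `Q v` half the norm of `v`, and let `(e₁, f₁)`, `(e₂, f₂)`
be standard bases of two orthogonal copies of `U`. Unimodularity means that a primitive vector pairs
to `1` with some vector, and Eichler's argument shows that every such `v` lies in the orbit of
`e₂ + Q v • f₂`. Indeed, choose `w` in the orbit of `v` whose pairing with `f₁` is minimal for
divisibility. The group `SL₂` acts on `U ⊕ U` by isometries and can replace this pairing by a
greatest common divisor of the pairings of `w` with `f₁` and `f₂`, or with `f₁` and `e₂`; by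
minimality it therefore divides the pairings with `e₂` and `f₂`, and a transvection along `f₁` makes
`w` orthogonal to the second plane. A transvection along `e₂` then makes the pairing with `f₂` equal
to `1`, and a last one along `f₂` reaches `e₂ + Q v • f₂`. An imprimitive vector is its divisor
times a primitive one, and `d • (e₁ + c • f₁)` has divisor `d` and norm `2 * d ^ 2 * c`. -/

section Isometries

open QuadraticMap

variable {R M : Type*} [CommRing R] [AddCommGroup M] [Module R M] {Q : QuadraticForm R M}

/-- `v` and `w` lie in the same orbit of the orthogonal group of the quadratic form `Q`. -/
def AreIsometric (Q : QuadraticForm R M) (v w : M) : Prop :=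
  ∃ g : Q.IsometryEquiv Q, g v = w

namespace AreIsometric

variable {u v w : M}

lemma refl (Q : QuadraticForm R M) (v : M) : AreIsometric Q v v :=
  ⟨.refl Q, rfl⟩

lemma symm (h : AreIsometric Q v w) : AreIsometric Q w v := by
  obtain ⟨g, rfl⟩ := h
  exact ⟨g.symm, g.symm_apply_apply v⟩

lemma trans (huv : AreIsometric Q u v) (hvw : AreIsometric Q v w) : AreIsometric Q u w := by
  obtain ⟨g, rfl⟩ := huv
  obtain ⟨h, rfl⟩ := hvw
  exact ⟨g.trans h, rfl⟩

lemma smul (h : AreIsometric Q v w) (c : R) : AreIsometric Q (c • v) (c • w) := by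
  obtain ⟨g, rfl⟩ := h
  exact ⟨g, map_smul g c v⟩

lemma map_eq (h : AreIsometric Q v w) : Q v = Q w := by
  obtain ⟨g, rfl⟩ := h
  exact (g.map_app v).symm

lemma exists_polar_eq (h : AreIsometric Q v w) (x : M) : ∃ y, polar Q y w = polar Q x v := by
  obtain ⟨g, rfl⟩ := h
  exact ⟨g x, by simp [polar, ← map_add]⟩

end AreIsometric

variable {e u : M}

/-- The Eichler transvection of `Q` attached to vectors `e` and `u`; it is an isometry when `e` is
isotropic and orthogonal to `u`. -/
def eichlerTransvection (Q : QuadraticForm R M) (e u : M) : M →ₗ[R] M :=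
  LinearMap.id + (Q.polarBilin e).smulRight u -
    (Q.polarBilin u + Q u • Q.polarBilin e).smulRight e

lemma eichlerTransvection_apply (Q : QuadraticForm R M) (e u v : M) :
    eichlerTransvection Q e u v =
      v + polar Q e v • u - (polar Q u v + Q u * polar Q e v) • e := by
  simp [eichlerTransvection]

lemma eichlerTransvection_neg_apply_apply (he : Q e = 0) (hu : polar Q e u = 0) (v : M) :
    eichlerTransvection Q e (-u) (eichlerTransvection Q e u v) = v := by
  have hu' : polar Q u e = 0 := by rw [polar_comm, hu]
  simp only [eichlerTransvection_apply, polar_add_right, polar_sub_right, polar_smul_right,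
    polar_neg_left, polar_self, QuadraticMap.map_neg, he, hu, hu', smul_eq_mul, two_smul]
  module

lemma map_eichlerTransvection (he : Q e = 0) (hu : polar Q e u = 0) (v : M) :
    Q (eichlerTransvection Q e u v) = Q v := by
  simp only [eichlerTransvection_apply, sub_eq_add_neg, ← neg_smul, QuadraticMap.map_add Q,
    QuadraticMap.map_smul, polar_add_left, polar_smul_left, polar_smul_right, polar_comm Q v,
    polar_comm Q u e, he, hu, smul_eq_mul]
  ring

lemma areIsometric_eichlerTransvection (he : Q e = 0) (hu : polar Q e u = 0) (v : M) :
    AreIsometric Q v (eichlerTransvection Q e u v) := by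
  have hu' : polar Q e (-u) = 0 := by rw [polar_neg_right, hu, neg_zero]
  refine ⟨⟨.ofLinearMap (eichlerTransvection Q e u) (eichlerTransvection Q e (-u)) ?_ ?_,
    map_eichlerTransvection he hu⟩, rfl⟩
  · ext x
    simpa using eichlerTransvection_neg_apply_apply he hu' x
  · ext x
    exact eichlerTransvection_neg_apply_apply he hu x

end Isometries

section HyperbolicPlanes

open QuadraticMap MatrixGroups

variable {R M : Type*} [CommRing R] [AddCommGroup M] [Module R M] {Q : QuadraticForm R M}

/-- A hyperbolic pair: two isotropic vectors pairing to `1`, the standard basis of a hyperbolic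
plane. -/
structure IsHyperbolicPair (Q : QuadraticForm R M) (e f : M) : Prop where
  left : Q e = 0
  right : Q f = 0
  polar_eq_one : polar Q e f = 1

lemma IsHyperbolicPair.symm {e f : M} (h : IsHyperbolicPair Q e f) : IsHyperbolicPair Q f e :=
  ⟨h.right, h.left, by rw [polar_comm, h.polar_eq_one]⟩

/-- Two mutually orthogonal hyperbolic pairs `(e₁, f₁)` and `(e₂, f₂)`, the standard basis of a
copy of `U ⊕ U`. -/
structure IsHyperbolicFrame (Q : QuadraticForm R M) (e₁ f₁ e₂ f₂ : M) : Prop where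
  fst : IsHyperbolicPair Q e₁ f₁
  snd : IsHyperbolicPair Q e₂ f₂
  left_left : polar Q e₁ e₂ = 0
  left_right : polar Q e₁ f₂ = 0
  right_left : polar Q f₁ e₂ = 0
  right_right : polar Q f₁ f₂ = 0

variable {e₁ f₁ e₂ f₂ : M}

lemma IsHyperbolicFrame.swap_snd (h : IsHyperbolicFrame Q e₁ f₁ e₂ f₂) :
    IsHyperbolicFrame Q e₁ f₁ f₂ e₂ :=
  ⟨h.fst, h.snd.symm, h.left_right, h.left_left, h.right_right, h.right_left⟩

lemma IsHyperbolicFrame.symm (h : IsHyperbolicFrame Q e₁ f₁ e₂ f₂) :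
    IsHyperbolicFrame Q e₂ f₂ e₁ f₁ :=
  ⟨h.snd, h.fst, by rw [polar_comm, h.left_left], by rw [polar_comm, h.right_left],
    by rw [polar_comm, h.left_right], by rw [polar_comm, h.right_right]⟩

/-- The action of `SL₂` on `U ⊕ U` with basis `(e₁, f₁), (e₂, f₂)`, extended by the identity on the
orthogonal complement: `A` acts on the isotropic plane `⟨e₁, e₂⟩` and its inverse transpose on the
dual plane `⟨f₁, f₂⟩`. -/
def hyperbolicSL2 (Q : QuadraticForm R M) (e₁ f₁ e₂ f₂ : M) (A : SL(2, R)) : M →ₗ[R] M :=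
  LinearMap.id +
    ((A 0 0 - 1) • Q.polarBilin f₁ + A 0 1 • Q.polarBilin f₂).smulRight e₁ +
    (A 1 0 • Q.polarBilin f₁ + (A 1 1 - 1) • Q.polarBilin f₂).smulRight e₂ +
    ((A 1 1 - 1) • Q.polarBilin e₁ - A 1 0 • Q.polarBilin e₂).smulRight f₁ +
    ((A 0 0 - 1) • Q.polarBilin e₂ - A 0 1 • Q.polarBilin e₁).smulRight f₂

lemma hyperbolicSL2_apply (Q : QuadraticForm R M) (e₁ f₁ e₂ f₂ : M) (A : SL(2, R)) (v : M) :
    hyperbolicSL2 Q e₁ f₁ e₂ f₂ A v = v +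
      ((A 0 0 - 1) * polar Q f₁ v + A 0 1 * polar Q f₂ v) • e₁ +
      (A 1 0 * polar Q f₁ v + (A 1 1 - 1) * polar Q f₂ v) • e₂ +
      ((A 1 1 - 1) * polar Q e₁ v - A 1 0 * polar Q e₂ v) • f₁ +
      ((A 0 0 - 1) * polar Q e₂ v - A 0 1 * polar Q e₁ v) • f₂ := by
  simp [hyperbolicSL2]

namespace IsHyperbolicFrame

lemma hyperbolicSL2_mul_apply (h : IsHyperbolicFrame Q e₁ f₁ e₂ f₂) (A B : SL(2, R)) (v : M) :
    hyperbolicSL2 Q e₁ f₁ e₂ f₂ (A * B) v =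
      hyperbolicSL2 Q e₁ f₁ e₂ f₂ A (hyperbolicSL2 Q e₁ f₁ e₂ f₂ B v) := by
  simp only [hyperbolicSL2_apply, polar_add_right, polar_smul_right, polar_self, smul_eq_mul,
    h.fst.left, h.fst.right, h.fst.polar_eq_one, h.fst.symm.polar_eq_one,
    h.snd.left, h.snd.right, h.snd.polar_eq_one, h.snd.symm.polar_eq_one,
    h.left_left, h.left_right, h.right_left, h.right_right,
    h.symm.left_left, h.symm.left_right, h.symm.right_left, h.symm.right_right,
    Matrix.SpecialLinearGroup.coe_mul, Matrix.mul_apply, Fin.sum_univ_two]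
  module

lemma map_hyperbolicSL2 (h : IsHyperbolicFrame Q e₁ f₁ e₂ f₂) (A : SL(2, R)) (v : M) :
    Q (hyperbolicSL2 Q e₁ f₁ e₂ f₂ A v) = Q v := by
  have hdet : A 0 0 * A 1 1 - A 0 1 * A 1 0 = 1 := by rw [← Matrix.det_fin_two, A.det_coe]
  simp only [hyperbolicSL2_apply, QuadraticMap.map_add Q, QuadraticMap.map_smul, polar_add_left,
    polar_smul_left, polar_smul_right, smul_eq_mul, polar_comm Q v,
    h.fst.left, h.fst.right, h.fst.polar_eq_one, h.snd.left, h.snd.right,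
    h.snd.polar_eq_one, h.left_left, h.left_right, h.right_right, h.symm.left_right]
  linear_combination (polar Q e₁ v * polar Q f₁ v + polar Q e₂ v * polar Q f₂ v) * hdet

lemma areIsometric_hyperbolicSL2 (h : IsHyperbolicFrame Q e₁ f₁ e₂ f₂) (A : SL(2, R)) (v : M) :
    AreIsometric Q v (hyperbolicSL2 Q e₁ f₁ e₂ f₂ A v) := by
  have hone (x : M) : hyperbolicSL2 Q e₁ f₁ e₂ f₂ 1 x = x := by simp [hyperbolicSL2_apply]
  refine ⟨⟨.ofLinearMap (hyperbolicSL2 Q e₁ f₁ e₂ f₂ A) (hyperbolicSL2 Q e₁ f₁ e₂ f₂ A⁻¹) ?_ ?_,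
    h.map_hyperbolicSL2 A⟩, rfl⟩
  · ext x
    simp [← h.hyperbolicSL2_mul_apply, hone]
  · ext x
    simp [← h.hyperbolicSL2_mul_apply, hone]

lemma polar_hyperbolicSL2 (h : IsHyperbolicFrame Q e₁ f₁ e₂ f₂) (A : SL(2, R)) (v : M) :
    polar Q f₁ (hyperbolicSL2 Q e₁ f₁ e₂ f₂ A v) =
      A 0 0 * polar Q f₁ v + A 0 1 * polar Q f₂ v := by
  simp only [hyperbolicSL2_apply, polar_add_right, polar_smul_right, polar_self, smul_eq_mul,
    h.fst.right, h.fst.symm.polar_eq_one, h.right_left, h.right_right]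
  ring

end IsHyperbolicFrame

end HyperbolicPlanes

section EichlerCriterion

open QuadraticMap

lemma exists_isCoprime_mul_add_mul_dvd {R : Type*} [CommRing R] [IsDomain R] [IsBezout R]
    (a b : R) : ∃ x y : R, IsCoprime x y ∧ x * a + y * b ∣ a ∧ x * a + y * b ∣ b := by
  classical
  let := IsBezout.toGCDDomain R
  obtain ⟨a', b', ha, hb, hab⟩ := extract_gcd a b
  obtain ⟨x, y, hxy⟩ := (gcd_isUnit_iff a' b').1 hab
  have hgcd : x * a + y * b = gcd a b := by linear_combination x * ha + y * hb + gcd a b * hxy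
  exact ⟨x, y, ⟨a', b', by linear_combination hxy⟩, hgcd ▸ gcd_dvd_left a b,
    hgcd ▸ gcd_dvd_right a b⟩

variable {R M : Type*} [CommRing R] [AddCommGroup M] [Module R M] {Q : QuadraticForm R M}
  {e f e₁ f₁ e₂ f₂ v w x y : M}

/-- `v` minimises, for divisibility and within its orbit under the orthogonal group, the value of
the pairing with `f`. -/
def IsOrbitMinimal (Q : QuadraticForm R M) (f v : M) : Prop :=
  ∀ w, AreIsometric Q v w → polar Q f w ∣ polar Q f v → polar Q f v ∣ polar Q f w

lemma exists_areIsometric_isOrbitMinimal [IsDomain R] [WfDvdMonoid R] (Q : QuadraticForm R M)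
    (f v : M) : ∃ w, AreIsometric Q v w ∧ IsOrbitMinimal Q f w := by
  obtain ⟨w, hvw, hmin⟩ := (InvImage.wf (polar Q f) wellFounded_dvdNotUnit).has_min
    {w | AreIsometric Q v w} ⟨v, .refl Q v⟩
  refine ⟨w, hvw, fun w' hw' hdvd ↦ ?_⟩
  by_contra hndvd
  exact hmin w' (hvw.trans hw') (dvd_and_not_dvd_iff.1 ⟨hdvd, hndvd⟩)

lemma IsOrbitMinimal.polar_dvd [IsDomain R] [IsBezout R] (hv : IsOrbitMinimal Q f₁ v)
    (h : IsHyperbolicFrame Q e₁ f₁ e₂ f₂) : polar Q f₁ v ∣ polar Q f₂ v := by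
  obtain ⟨x, y, hxy, hdvd₁, hdvd₂⟩ :=
    exists_isCoprime_mul_add_mul_dvd (polar Q f₁ v) (polar Q f₂ v)
  obtain ⟨A, rfl, rfl⟩ := hxy.exists_SL2_row 0
  rw [← h.polar_hyperbolicSL2] at hdvd₁ hdvd₂
  exact (hv _ (h.areIsometric_hyperbolicSL2 A v) hdvd₁).trans hdvd₂

lemma IsOrbitMinimal.exists_areIsometric_polar_eq_zero [IsDomain R] [IsBezout R]
    (hv : IsOrbitMinimal Q f₁ v) (h : IsHyperbolicFrame Q e₁ f₁ e₂ f₂) :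
    ∃ w, AreIsometric Q v w ∧ polar Q e₂ w = 0 ∧ polar Q f₂ w = 0 := by
  obtain ⟨a, ha⟩ := hv.polar_dvd h.swap_snd
  obtain ⟨b, hb⟩ := hv.polar_dvd h
  refine ⟨_, areIsometric_eichlerTransvection (u := -(b • e₂ + a • f₂)) h.fst.right ?_ v, ?_, ?_⟩
  · simp [polar_add_right, h.right_left, h.right_right]
  · simp [eichlerTransvection_apply, polar_add_right, polar_sub_right, h.snd.left,
      h.snd.polar_eq_one, h.symm.left_right, ha, mul_comm]
  · simp [eichlerTransvection_apply, polar_add_right, polar_sub_right, h.snd.right,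
      h.snd.symm.polar_eq_one, h.symm.right_right, hb, mul_comm]

lemma IsHyperbolicPair.exists_areIsometric_polar_eq_one (h : IsHyperbolicPair Q e f)
    (he : polar Q e v = 0) (hf : polar Q f v = 0) (hx : polar Q x v = 1) :
    ∃ w, AreIsometric Q v w ∧ polar Q f w = 1 := by
  refine ⟨_, areIsometric_eichlerTransvection (u := polar Q e x • f - x) h.left ?_ v, ?_⟩
  · simp [polar_sub_right, h.polar_eq_one]
  · simp [eichlerTransvection_apply, polar_sub_left, h.symm.polar_eq_one, he, hf, hx]

lemma IsHyperbolicPair.map_add_smul (h : IsHyperbolicPair Q e f) (c : R) : Q (e + c • f) = c := by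
  simp [QuadraticMap.map_add Q, QuadraticMap.map_smul, h.left, h.right, h.polar_eq_one]

lemma IsHyperbolicPair.areIsometric_of_polar_eq_one (h : IsHyperbolicPair Q e f)
    (hf : polar Q f v = 1) : AreIsometric Q v (e + Q v • f) := by
  have hu : polar Q f (e - v) = 0 := by rw [polar_sub_right, h.symm.polar_eq_one, hf, sub_self]
  have hv := areIsometric_eichlerTransvection h.right hu v
  obtain ⟨c, hc⟩ : ∃ c : R, eichlerTransvection Q f (e - v) v = e + c • f :=
    ⟨-(polar Q (e - v) v + Q (e - v)), by rw [eichlerTransvection_apply, hf]; module⟩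
  rw [hc] at hv
  rwa [hv.map_eq, h.map_add_smul]

lemma IsHyperbolicFrame.areIsometric_of_polar_eq_one [IsDomain R] [IsPrincipalIdealRing R]
    (h : IsHyperbolicFrame Q e₁ f₁ e₂ f₂) (hx : polar Q x v = 1) :
    AreIsometric Q v (e₂ + Q v • f₂) := by
  obtain ⟨w₁, hvw₁, hmin⟩ := exists_areIsometric_isOrbitMinimal Q f₁ v
  obtain ⟨w₂, hw₁w₂, he₂, hf₂⟩ := hmin.exists_areIsometric_polar_eq_zero h
  have hvw₂ := hvw₁.trans hw₁w₂
  obtain ⟨y, hy⟩ := hvw₂.exists_polar_eq x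
  obtain ⟨w₃, hw₂w₃, hw₃⟩ := h.snd.exists_areIsometric_polar_eq_one he₂ hf₂ (hy.trans hx)
  have hvw₃ := hvw₂.trans hw₂w₃
  rw [hvw₃.map_eq]
  exact hvw₃.trans (h.snd.areIsometric_of_polar_eq_one hw₃)

theorem IsHyperbolicFrame.areIsometric_of_map_eq [IsDomain R] [IsPrincipalIdealRing R]
    (h : IsHyperbolicFrame Q e₁ f₁ e₂ f₂) (hx : polar Q x v = 1) (hy : polar Q y w = 1)
    (hvw : Q v = Q w) : AreIsometric Q v w := by
  have hv := h.areIsometric_of_polar_eq_one hx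
  rw [hvw] at hv
  exact hv.trans (h.areIsometric_of_polar_eq_one hy).symm

end EichlerCriterion

section GramMatrices

open QuadraticMap

lemma exists_quadraticForm_polarBilin_eq {R ι : Type*} [CommRing R] [Fintype ι] [LinearOrder ι]
    {G : Matrix ι ι R} (hG : G.IsSymm) (heven : ∀ i, Even (G i i)) :
    ∃ Q : QuadraticForm R (ι → R), Q.polarBilin = Matrix.toBilin' G := by
  choose a ha using heven
  let H : Matrix ι ι R := .of fun i j ↦ if i = j then a i else if i < j then G i j else 0
  have hH (i j : ι) : H i j + H j i = G i j := by
    rcases lt_trichotomy i j with hij | rfl | hij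
    · simp [H, hij, hij.ne, hij.ne', hij.not_gt]
    · simp [H, ha]
    · simp [H, hij, hij.ne, hij.ne', hij.not_gt, hG.apply]
  refine ⟨(Matrix.toBilin' H).toQuadraticMap, ?_⟩
  apply LinearMap.BilinForm.toMatrix'.injective
  ext i j
  simp [LinearMap.BilinMap.polar_toQuadraticMap, hH]

lemma gcd_eq_one_of_dotProduct_eq_one {R ι : Type*} [CommRing R] [NormalizedGCDMonoid R]
    [Fintype ι] {x v : ι → R} (h : x ⬝ᵥ v = 1) : Finset.univ.gcd v = 1 := by
  have hdvd : Finset.univ.gcd v ∣ 1 := h ▸ Finset.dvd_sum fun i hi ↦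
    (Finset.gcd_dvd hi).mul_left (x i)
  rw [← Finset.normalize_gcd]
  exact normalize_eq_one.2 (isUnit_of_dvd_one hdvd)

lemma exists_smul_eq_of_gcd_eq {R ι : Type*} [CommRing R] [NormalizedGCDMonoid R] [Fintype ι]
    {v : ι → R} {d : R} (hd : d ≠ 0) (hv : Finset.univ.gcd v = d) :
    ∃ u : ι → R, d • u = v ∧ Finset.univ.gcd u = 1 := by
  subst hv
  obtain ⟨i, hi, -⟩ : ∃ i ∈ Finset.univ, v i ≠ 0 := by
    simpa [Finset.gcd_eq_zero_iff] using hd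
  obtain ⟨u, hu, hgcd⟩ := Finset.extract_gcd v ⟨i, hi⟩
  exact ⟨u, funext fun j ↦ (hu j (Finset.mem_univ j)).symm, hgcd⟩

variable {R ι : Type*} [CommRing R] [Fintype ι] [DecidableEq ι] {G : Matrix ι ι R}
  {Q : QuadraticForm R (ι → R)} {e f e₁ f₁ e₂ f₂ v w : ι → R}

lemma exists_dotProduct_mulVec_eq_one [IsBezout R] [NormalizedGCDMonoid R] (hG : IsUnit G.det)
    (hv : Finset.univ.gcd v = 1) : ∃ x, x ⬝ᵥ G *ᵥ v = 1 := by
  obtain ⟨a, ha⟩ := Finset.univ.gcd_eq_sum_mul v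
  refine ⟨a ᵥ* G⁻¹, ?_⟩
  rw [← Matrix.dotProduct_mulVec, Matrix.mulVec_mulVec, Matrix.nonsing_inv_mul G hG,
    Matrix.one_mulVec, dotProduct_comm, dotProduct, ← ha, hv]

lemma polar_eq_dotProduct_mulVec (hQ : Q.polarBilin = Matrix.toBilin' G) (v w : ι → R) :
    polar Q v w = v ⬝ᵥ G *ᵥ w := by
  rw [← polarBilin_apply_apply, hQ, Matrix.toBilin'_apply']

lemma dotProduct_mulVec_self (hQ : Q.polarBilin = Matrix.toBilin' G) (v : ι → R) :
    v ⬝ᵥ G *ᵥ v = 2 * Q v := by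
  rw [← polar_eq_dotProduct_mulVec hQ, polar_self, two_smul, two_mul]

lemma IsHyperbolicPair.exists_map_eq_gcd_eq [StrongNormalizedGCDMonoid R]
    (hQ : Q.polarBilin = Matrix.toBilin' G) (h : IsHyperbolicPair Q e f) (c d : R) :
    ∃ v, Q v = d ^ 2 * c ∧ Finset.univ.gcd v = normalize d := by
  refine ⟨d • (e + c • f), ?_, ?_⟩
  · rw [QuadraticMap.map_smul, h.map_add_smul, smul_eq_mul, pow_two]
  · have hpolar : polar Q f (e + c • f) = 1 := by
      rw [polar_add_right, polar_smul_right, h.symm.polar_eq_one, polar_self, h.right, smul_zero,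
        smul_zero, add_zero]
    rw [polar_eq_dotProduct_mulVec hQ, Matrix.dotProduct_mulVec] at hpolar
    have hgcd := Finset.univ.gcd_mul_left (f := e + c • f) (a := d)
    rwa [gcd_eq_one_of_dotProduct_eq_one hpolar, mul_one] at hgcd

section PrincipalIdealDomain

variable [IsDomain R] [IsPrincipalIdealRing R] [NormalizedGCDMonoid R]

lemma IsHyperbolicFrame.areIsometric_of_gcd_eq_one (hQ : Q.polarBilin = Matrix.toBilin' G)
    (hG : IsUnit G.det) (h : IsHyperbolicFrame Q e₁ f₁ e₂ f₂) (hv : Finset.univ.gcd v = 1)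
    (hw : Finset.univ.gcd w = 1) (hvw : Q v = Q w) : AreIsometric Q v w := by
  obtain ⟨x, hx⟩ := exists_dotProduct_mulVec_eq_one hG hv
  obtain ⟨y, hy⟩ := exists_dotProduct_mulVec_eq_one hG hw
  rw [← polar_eq_dotProduct_mulVec hQ] at hx hy
  exact h.areIsometric_of_map_eq hx hy hvw

theorem IsHyperbolicFrame.areIsometric_of_gcd_eq (hQ : Q.polarBilin = Matrix.toBilin' G)
    (hG : IsUnit G.det) (h : IsHyperbolicFrame Q e₁ f₁ e₂ f₂)
    (hgcd : Finset.univ.gcd v = Finset.univ.gcd w) (hvw : Q v = Q w) : AreIsometric Q v w := by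
  obtain ⟨d, hd⟩ : ∃ d, Finset.univ.gcd w = d := ⟨_, rfl⟩
  rw [hd] at hgcd
  rcases eq_or_ne d 0 with rfl | hd₀
  · obtain rfl : v = w := by
      ext i
      rw [Finset.gcd_eq_zero_iff.1 hgcd i (Finset.mem_univ i),
        Finset.gcd_eq_zero_iff.1 hd i (Finset.mem_univ i)]
    exact .refl Q v
  obtain ⟨v', rfl, hv'⟩ := exists_smul_eq_of_gcd_eq hd₀ hgcd
  obtain ⟨w', rfl, hw'⟩ := exists_smul_eq_of_gcd_eq hd₀ hd
  rw [QuadraticMap.map_smul, QuadraticMap.map_smul] at hvw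
  have hvw' : Q v' = Q w' := by simpa [hd₀] using hvw
  exact (h.areIsometric_of_gcd_eq_one hQ hG hv' hw' hvw').smul d

end PrincipalIdealDomain

lemma AreIsometric.exists_isLatticeAut {n : ℕ} {G : Matrix (Fin n) (Fin n) ℤ}
    {Q : QuadraticForm ℤ (Fin n → ℤ)} {v w : Fin n → ℤ} (hQ : Q.polarBilin = Matrix.toBilin' G)
    (h : AreIsometric Q v w) :
    ∃ S : Matrix (Fin n) (Fin n) ℤ, IsLatticeAut G S ∧ S *ᵥ v = w := by
  obtain ⟨g, rfl⟩ := h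
  let S : (Fin n → ℤ) →ₗ[ℤ] (Fin n → ℤ) := g.toLinearEquiv
  have hS : (Matrix.toBilin' G).comp S S = Matrix.toBilin' G := by
    ext i j
    simp [← hQ, S, polar, ← map_add]
  refine ⟨LinearMap.toMatrix' S, ⟨?_, ?_⟩, ?_⟩
  · rw [LinearMap.det_toMatrix']
    exact g.toLinearEquiv.isUnit_det'
  · simpa [LinearMap.BilinForm.toMatrix'_comp] using congrArg LinearMap.BilinForm.toMatrix' hS
  · exact LinearMap.toMatrix'_mulVec S v

end GramMatrices

section EvenUnimodular

open QuadraticMap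

/-- The Gram matrix of an even unimodular lattice. Evenness is recorded on the standard basis only;
by symmetry it then holds for the norm of every vector. -/
structure IsEvenUnimodular {n : ℕ} (G : Matrix (Fin n) (Fin n) ℤ) : Prop where
  isSymm : G.IsSymm
  even_diag : ∀ i, Even (G i i)
  isUnit_det : IsUnit G.det

lemma IsEvenUnimodular.blockSum {a b : ℕ} {A : Matrix (Fin a) (Fin a) ℤ}
    {B : Matrix (Fin b) (Fin b) ℤ} (hA : IsEvenUnimodular A) (hB : IsEvenUnimodular B) :
    IsEvenUnimodular (blockSum A B) where
  isSymm := (hA.isSymm.fromBlocks Matrix.transpose_zero hB.isSymm).submatrix _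
  even_diag i := by
    obtain ⟨j | j, rfl⟩ := finSumFinEquiv.surjective i
    · simpa [_root_.blockSum] using hA.even_diag j
    · simpa [_root_.blockSum] using hB.even_diag j
  isUnit_det := by
    simpa [_root_.blockSum, Matrix.det_fromBlocks_zero₂₁] using ⟨hA.isUnit_det, hB.isUnit_det⟩

lemma isEvenUnimodular_matU : IsEvenUnimodular matU where
  isSymm := by decide
  even_diag := by decide
  isUnit_det := by decide

lemma matE8neg_eq_neg_E₈ : matE8neg = -CartanMatrix.E₈ := rfl

lemma isEvenUnimodular_matE8neg : IsEvenUnimodular matE8neg where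
  isSymm := CartanMatrix.E₈_isSymm.neg
  even_diag i := by simp [matE8neg_eq_neg_E₈]
  isUnit_det := by simp [matE8neg_eq_neg_E₈, Matrix.det_neg, CartanMatrix.E₈_det]

lemma exists_isHyperbolicFrame_of_blockSum {m : ℕ} {K : Matrix (Fin m) (Fin m) ℤ}
    {Q : QuadraticForm ℤ (Fin (2 + (2 + m)) → ℤ)}
    (hQ : Q.polarBilin = Matrix.toBilin' (blockSum matU (blockSum matU K))) :
    ∃ e₁ f₁ e₂ f₂, IsHyperbolicFrame Q e₁ f₁ e₂ f₂ := by
  have hpolar (i j : Fin (2 + (2 + m))) :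
      polar Q (Pi.single i 1) (Pi.single j 1) = blockSum matU (blockSum matU K) i j := by
    rw [← polarBilin_apply_apply, hQ, Matrix.toBilin'_single]
  have hself (i : Fin (2 + (2 + m))) (hi : blockSum matU (blockSum matU K) i i = 0) :
      Q (Pi.single i 1) = 0 := by
    simpa [polar_self, hi] using hpolar i i
  refine ⟨Pi.single (.castAdd _ 0) 1, Pi.single (.castAdd _ 1) 1,
    Pi.single (.natAdd _ (.castAdd _ 0)) 1, Pi.single (.natAdd _ (.castAdd _ 1)) 1,
    ⟨hself _ ?_, hself _ ?_, ?_⟩, ⟨hself _ ?_, hself _ ?_, ?_⟩, ?_, ?_, ?_, ?_⟩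
  all_goals simp [hpolar, blockSum, matU]

end EvenUnimodular

theorem gamma_vectors_classified_by_norm_and_divisor_general
    {m : ℕ} {K : Matrix (Fin m) (Fin m) ℤ} (hK : IsEvenUnimodular K)
    (ν : ℤ) (d : ℕ) (hdvd : (2 * (d : ℤ) ^ 2) ∣ ν) :
    (∃ v : Fin (2 + (2 + m)) → ℤ,
        v ⬝ᵥ (blockSum matU (blockSum matU K)).mulVec v = ν ∧ Finset.univ.gcd v = (d : ℤ)) ∧
      ∀ v w : Fin (2 + (2 + m)) → ℤ,
        v ⬝ᵥ (blockSum matU (blockSum matU K)).mulVec v = ν →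
        w ⬝ᵥ (blockSum matU (blockSum matU K)).mulVec w = ν →
        Finset.univ.gcd v = (d : ℤ) → Finset.univ.gcd w = (d : ℤ) →
          ∃ S : Matrix (Fin (2 + (2 + m))) (Fin (2 + (2 + m))) ℤ,
            IsLatticeAut (blockSum matU (blockSum matU K)) S ∧ S.mulVec v = w := by
  have hG := isEvenUnimodular_matU.blockSum (isEvenUnimodular_matU.blockSum hK)
  obtain ⟨Q, hQ⟩ := exists_quadraticForm_polarBilin_eq hG.isSymm hG.even_diag
  obtain ⟨e₁, f₁, e₂, f₂, h⟩ := exists_isHyperbolicFrame_of_blockSum hQ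
  obtain ⟨c, rfl⟩ := hdvd
  refine ⟨?_, fun v w hv hw hvd hwd ↦ ?_⟩
  · obtain ⟨v, hv, hvd⟩ := h.fst.exists_map_eq_gcd_eq hQ c d
    exact ⟨v, by rw [dotProduct_mulVec_self hQ, hv, mul_assoc], by rw [hvd, Int.normalize_coe_nat]⟩
  · rw [dotProduct_mulVec_self hQ] at hv hw
    have hvw : Q v = Q w := mul_left_cancel₀ two_ne_zero (hv.trans hw.symm)
    exact (h.areIsometric_of_gcd_eq hQ hG.isUnit_det (hvd.trans hwd.symm) hvw).exists_isLatticeAut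
      hQ

/-- In `Γ^{3,19}`: for every nonzero even `ν` and positive `d` with `2d² ∣ ν`, there is a
vector of norm `ν` whose coordinate gcd (divisor) is `d`; and any two vectors of the same
norm and divisor are related by an automorphism of `Γ^{3,19}`.  Hence equivalence classes
of vectors under automorphisms are uniquely identified by norm and divisor. -/
theorem gamma_vectors_classified_by_norm_and_divisor
    (ν : ℤ) (hν : ν ≠ 0) (d : ℕ) (hd : 0 < d) (hdvd : (2 * (d : ℤ) ^ 2) ∣ ν) :
    (∃ v : Fin 22 → ℤ, v ⬝ᵥ GammaGram.mulVec v = ν ∧ Finset.univ.gcd v = (d : ℤ)) ∧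
      ∀ v w : Fin 22 → ℤ,
        v ⬝ᵥ GammaGram.mulVec v = ν → w ⬝ᵥ GammaGram.mulVec w = ν →
        Finset.univ.gcd v = (d : ℤ) → Finset.univ.gcd w = (d : ℤ) →
          ∃ S : Matrix (Fin 22) (Fin 22) ℤ, IsLatticeAut GammaGram S ∧ S.mulVec v = w :=
  gamma_vectors_classified_by_norm_and_divisor_general (isEvenUnimodular_matU.blockSum
    (isEvenUnimodular_matE8neg.blockSum isEvenUnimodular_matE8neg)) ν d hdvd
end

section
/- (Wall) Let G be the 4×4 Gram matrix of U ⊕ U, the block-diagonal sum of two copies of U = [[0,1],[1,0]]. If v, w ∈ ℤ⁴ are primitive vectors with vᵀGv = wᵀGw, then there exists S ∈ GL(4,ℤ) with SᵀGS = G and Sv = w; i.e., any two primitive vectors of the same norm in U ⊕ U are related by a lattice automorphism. -/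
/-!
The map `x ↦ !![x 0, -x 2; x 3, x 1]` identifies `U ⊕ U` with the lattice of `2 × 2` matrices, half
the norm becoming the determinant. Hence `X ↦ P * X * Q` with `P, Q` in `SL₂` is an isometry, and
the theorem becomes uniqueness of the Smith normal form: a primitive matrix `X` can be brought to
`diag (1, det X)`. This works over any principal ideal domain. The entry `1` is found by taking,
among the upper left entries of all the matrices `P * X * Q`, one which is minimal for divisibility:
it divides every entry of its matrix, so it is a unit.
-/

open Matrix

/-- The Gram matrix of `U ⊕ U`. -/
def matUU : Matrix (Fin 4) (Fin 4) ℤ := blockSum matU matU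

open scoped MatrixGroups

section Primitive

/-- Primitivity of a vector `x` of an `R`-module: only units can be factored out of `x`. In a free
module over a principal ideal domain this means that the coordinates of `x` have gcd `1`. -/
def IsPrimitive (R : Type*) {M : Type*} [Monoid R] [SMul R M] (x : M) : Prop :=
  ∀ (r : R) (y : M), r • y = x → IsUnit r

lemma IsPrimitive.map_linearEquiv {R M N : Type*} [Semiring R] [AddCommMonoid M] [AddCommMonoid N]
    [Module R M] [Module R N] {x : M} (hx : IsPrimitive R x) (e : M ≃ₗ[R] N) :
    IsPrimitive R (e x) :=
  fun r y hy ↦ hx r (e.symm y) (by rw [← map_smul, hy, e.symm_apply_apply])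

lemma isPrimitive_of_gcd_eq_one {ι R : Type*} [Fintype ι] [CommMonoidWithZero R]
    [NormalizedGCDMonoid R] {v : ι → R} (hv : Finset.univ.gcd v = 1) : IsPrimitive R v := by
  rintro r y rfl
  exact isUnit_of_dvd_one (hv ▸ Finset.dvd_gcd fun i _ ↦ dvd_mul_right r (y i))

end Primitive

section SmithNormalForm

variable {R : Type*} [CommRing R]

section SpecialLinear

variable {n : Type*} [Fintype n] [DecidableEq n]

/-- The linear automorphism `X ↦ P * X * Q` of the space of square matrices, for `P` and `Q` of
determinant `1`. -/
def slMulMul (P Q : SpecialLinearGroup n R) : Matrix n n R ≃ₗ[R] Matrix n n R :=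
  (P.toGL.mulLeftLinearEquiv R (Matrix n n R)).trans (Q.toGL.mulRightLinearEquiv R)

lemma slMulMul_apply (P Q : SpecialLinearGroup n R) (X : Matrix n n R) :
    slMulMul P Q X = (P : Matrix n n R) * X * (Q : Matrix n n R) := rfl

lemma det_slMulMul (P Q : SpecialLinearGroup n R) (X : Matrix n n R) :
    (slMulMul P Q X).det = X.det := by
  rw [slMulMul_apply, det_mul, det_mul, P.det_coe, Q.det_coe, one_mul, mul_one]

lemma slMulMul_slMulMul (P P' Q Q' : SpecialLinearGroup n R) (X : Matrix n n R) :
    slMulMul P' Q' (slMulMul P Q X) = slMulMul (P' * P) (Q * Q') X := by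
  simp only [slMulMul_apply, Matrix.SpecialLinearGroup.coe_mul, mul_assoc]

end SpecialLinear

lemma exists_SL2_mulVec_zero_dvd [IsDomain R] [IsBezout R] (x : Fin 2 → R) :
    ∃ P : SL(2, R), ∀ i, (P.1 *ᵥ x) 0 ∣ x i := by
  classical
  let := IsBezout.toGCDDomain R
  obtain ⟨a, b, ha, hb, hab⟩ := extract_gcd (x 0) (x 1)
  obtain ⟨s, t, hst⟩ : IsCoprime a b := (gcd_isUnit_iff a b).mp hab
  obtain ⟨P, hPs, hPt⟩ :=
    IsCoprime.exists_SL2_row (a := s) (b := t) ⟨a, b, by linear_combination hst⟩ 0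
  have hPx : (P.1 *ᵥ x) 0 = gcd (x 0) (x 1) := by
    rw [mulVec, dotProduct, Fin.sum_univ_two, hPs, hPt]
    linear_combination s * ha + t * hb + gcd (x 0) (x 1) * hst
  refine ⟨P, Fin.forall_fin_two.mpr ?_⟩
  rw [hPx]
  exact ⟨gcd_dvd_left _ _, gcd_dvd_right _ _⟩

lemma dvd_of_forall_slMulMul_dvd [IsDomain R] [IsBezout R] {X : Matrix (Fin 2) (Fin 2) R}
    (hX : ∀ P Q : SL(2, R), slMulMul P Q X 0 0 ∣ X 0 0 → X 0 0 ∣ slMulMul P Q X 0 0)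
    (i j : Fin 2) : X 0 0 ∣ X i j := by
  have dvd_col (k) : X 0 0 ∣ X k 0 := by
    obtain ⟨P, hP⟩ := exists_SL2_mulVec_zero_dvd (X.col 0)
    have hPX : slMulMul P 1 X 0 0 = (P.1 *ᵥ X.col 0) 0 := by
      simp [slMulMul_apply, mul_apply, mulVec, dotProduct]
    exact (hX P 1 (hPX ▸ hP 0)).trans (hPX ▸ hP k)
  have dvd_row (P : SL(2, R)) (hP : (P.1 * X) 0 0 = X 0 0) (k) : X 0 0 ∣ (P.1 * X) 0 k := by
    obtain ⟨Q, hQ⟩ := exists_SL2_mulVec_zero_dvd ((P.1 * X).row 0)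
    have hQX : slMulMul P Q.transpose X 0 0 = (Q.1 *ᵥ (P.1 * X).row 0) 0 := by
      simp [slMulMul_apply, mul_apply, mulVec, dotProduct, mul_comm]
    exact (hX P _ (hQX ▸ hP ▸ hQ 0)).trans (hQX ▸ hQ k)
  obtain ⟨c, hc⟩ := dvd_col 1
  -- `P` moves the second row into the first one without changing the upper left entry.
  let P : SL(2, R) := ⟨!![1 - c, 1; -1, 0], by simp⟩
  have hP (k) : (P.1 * X) 0 k = (1 - c) * X 0 k + X 1 k := by
    simp [P, mul_apply]
  have h (k) : X 0 0 ∣ X 0 k ∧ X 0 0 ∣ X 1 k := by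
    have h0 : X 0 0 ∣ X 0 k := by simpa using dvd_row 1 (by simp) k
    have h1 := hP k ▸ dvd_row P (by rw [hP, hc]; ring) k
    exact ⟨h0, (dvd_add_right (h0.mul_left _)).mp h1⟩
  exact (Fin.forall_fin_two (p := (X 0 0 ∣ X · j))).mpr (h j) i

lemma exists_slMulMul_zero_zero_dvd [IsDomain R] [IsPrincipalIdealRing R]
    (X : Matrix (Fin 2) (Fin 2) R) :
    ∃ P Q : SL(2, R), ∀ i j, slMulMul P Q X 0 0 ∣ slMulMul P Q X i j := by
  obtain ⟨_, ⟨⟨P, Q⟩, rfl⟩, hmin⟩ := wellFounded_dvdNotUnit.has_min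
    (Set.range fun PQ : SL(2, R) × SL(2, R) ↦ slMulMul PQ.1 PQ.2 X 0 0) (Set.range_nonempty _)
  refine ⟨P, Q, dvd_of_forall_slMulMul_dvd fun P' Q' hdvd ↦ ?_⟩
  rw [slMulMul_slMulMul] at hdvd ⊢
  by_contra hndvd
  exact hmin _ ⟨(P' * P, Q * Q'), rfl⟩ (dvdNotUnit_of_dvd_of_not_dvd hdvd hndvd)

lemma exists_slMulMul_eq_diagonal_of_isUnit {X : Matrix (Fin 2) (Fin 2) R} (hX : IsUnit (X 0 0)) :
    ∃ P Q : SL(2, R), slMulMul P Q X = !![1, 0; 0, X.det] := by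
  obtain ⟨a, ha⟩ := hX.exists_left_inv
  let P : SL(2, R) := ⟨!![a, 0; -X 1 0, X 0 0], by simp [ha]⟩
  let Q : SL(2, R) := ⟨!![1, -(a * X 0 1); 0, 1], by simp⟩
  have hP : P * X = !![1, a * X 0 1; 0, X.det] := by
    ext i j
    fin_cases i <;> fin_cases j <;> simp [P, mul_apply, det_fin_two, ha] <;> ring
  refine ⟨P, Q, ?_⟩
  rw [slMulMul_apply, hP]
  simp [Q]

theorem IsPrimitive.exists_slMulMul_eq_diagonal [IsDomain R] [IsPrincipalIdealRing R]
    {X : Matrix (Fin 2) (Fin 2) R} (hX : IsPrimitive R X) :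
    ∃ P Q : SL(2, R), slMulMul P Q X = !![1, 0; 0, X.det] := by
  obtain ⟨P, Q, hdvd⟩ := exists_slMulMul_zero_zero_dvd X
  choose Y hY using hdvd
  have hunit : IsUnit (slMulMul P Q X 0 0) :=
    hX.map_linearEquiv (slMulMul P Q) _ (of Y) (ext fun i j ↦ (hY i j).symm)
  obtain ⟨P', Q', h⟩ := exists_slMulMul_eq_diagonal_of_isUnit hunit
  exact ⟨P' * P, Q * Q', by rw [← slMulMul_slMulMul, h, det_slMulMul]⟩

theorem IsPrimitive.exists_slMulMul_eq [IsDomain R] [IsPrincipalIdealRing R]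
    {X Y : Matrix (Fin 2) (Fin 2) R} (hX : IsPrimitive R X) (hY : IsPrimitive R Y)
    (hdet : X.det = Y.det) : ∃ P Q : SL(2, R), slMulMul P Q X = Y := by
  obtain ⟨P, Q, hPQ⟩ := hX.exists_slMulMul_eq_diagonal
  obtain ⟨P', Q', hPQ'⟩ := hY.exists_slMulMul_eq_diagonal
  refine ⟨P'⁻¹ * P, Q * Q'⁻¹, (slMulMul P' Q').injective ?_⟩
  rw [slMulMul_slMulMul, mul_inv_cancel_left, inv_mul_cancel_right, hPQ, hPQ', hdet]

end SmithNormalForm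

section Isometry

variable {R : Type*} [CommRing R]

lemma transpose_toMatrix'_mul_polarBilin_mul {m n : Type*} [Fintype m] [DecidableEq m] [Fintype n]
    [DecidableEq n] {Q₁ : QuadraticForm R (m → R)} {Q₂ : QuadraticForm R (n → R)} (f : Q₁ →qᵢ Q₂) :
    (LinearMap.toMatrix' f.toLinearMap)ᵀ * LinearMap.toMatrix₂' R Q₂.polarBilin *
      LinearMap.toMatrix' f.toLinearMap = LinearMap.toMatrix₂' R Q₁.polarBilin := by
  have hf : Q₂.comp f.toLinearMap = Q₁ := QuadraticMap.ext f.map_app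
  rw [← LinearMap.toMatrix₂'_compl₁₂, ← QuadraticMap.polarBilin_comp, hf]

lemma dotProduct_polarBilin_mulVec_self {n : Type*} [Fintype n] [DecidableEq n]
    (Q : QuadraticForm R (n → R)) (x : n → R) :
    x ⬝ᵥ LinearMap.toMatrix₂' R Q.polarBilin *ᵥ x = 2 * Q x := by
  rw [← toLinearMap₂'_apply', toLinearMap₂'_toMatrix', QuadraticMap.polarBilin_apply_apply,
    QuadraticMap.polar_self, two_nsmul, two_mul]

end Isometry

section UU

variable (R : Type*) [CommRing R]

/-- The quadratic form of `U ⊕ U` over `R`, i.e. half the norm. -/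
def formUU : QuadraticForm R (Fin 4 → R) :=
  QuadraticMap.proj 0 1 + QuadraticMap.proj 2 3

/-- The coordinates on `R⁴` in which `formUU R` is the determinant of a `2 × 2` matrix. -/
def matrixEquivUU : (Fin 4 → R) ≃ₗ[R] Matrix (Fin 2) (Fin 2) R where
  toFun x := !![x 0, -x 2; x 3, x 1]
  invFun X := ![X 0 0, X 1 1, -X 0 1, X 1 0]
  map_add' x y := by ext i j; fin_cases i <;> fin_cases j <;> simp [add_comm]
  map_smul' r x := by simp [smul_of]
  left_inv x := by ext i; fin_cases i <;> simp
  right_inv X := by simp [← eta_fin_two X]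

lemma det_matrixEquivUU (x : Fin 4 → R) : (matrixEquivUU R x).det = formUU R x := by
  simp [matrixEquivUU, formUU]

lemma toMatrix₂'_polarBilin_formUU :
    LinearMap.toMatrix₂' ℤ (formUU ℤ).polarBilin = matUU := by
  have hmatUU : matUU = !![0, 1, 0, 0; 1, 0, 0, 0; 0, 0, 0, 1; 0, 0, 1, 0] := by decide
  rw [hmatUU]
  ext i j
  fin_cases i <;> fin_cases j <;> simp [formUU, QuadraticMap.polar]

variable {R}

/-- The isometry of `U ⊕ U` that is `X ↦ P * X * Q` in the coordinates `matrixEquivUU R`. -/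
def isometryUU (P Q : SL(2, R)) : (formUU R).IsometryEquiv (formUU R) where
  toLinearEquiv := (matrixEquivUU R).trans ((slMulMul P Q).trans (matrixEquivUU R).symm)
  map_app' x := by simp [← det_matrixEquivUU, det_slMulMul]

end UU

theorem wall_UU_general {R : Type*} [CommRing R] [IsDomain R] [IsPrincipalIdealRing R]
    {v w : Fin 4 → R} (hv : IsPrimitive R v) (hw : IsPrimitive R w)
    (hnorm : formUU R v = formUU R w) :
    ∃ f : (formUU R).IsometryEquiv (formUU R), f v = w := by
  obtain ⟨P, Q, hPQ⟩ := (hv.map_linearEquiv (matrixEquivUU R)).exists_slMulMul_eq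
    (hw.map_linearEquiv (matrixEquivUU R)) (by simpa only [det_matrixEquivUU] using hnorm)
  exact ⟨isometryUU P Q, (LinearEquiv.symm_apply_eq _).mpr hPQ⟩

/-- Wall's theorem for `U ⊕ U`: any two primitive vectors of the same norm are related
by a lattice automorphism. -/
theorem wall_UU (v w : Fin 4 → ℤ)
    (hv : Finset.univ.gcd v = 1) (hw : Finset.univ.gcd w = 1)
    (hnorm : v ⬝ᵥ matUU.mulVec v = w ⬝ᵥ matUU.mulVec w) :
    ∃ S : Matrix (Fin 4) (Fin 4) ℤ,
      IsUnit S.det ∧ Sᵀ * matUU * S = matUU ∧ S.mulVec v = w := by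
  have hform : formUU ℤ v = formUU ℤ w := by
    simpa [← toMatrix₂'_polarBilin_formUU, dotProduct_polarBilin_mulVec_self] using hnorm
  obtain ⟨f, hf⟩ := wall_UU_general
    (isPrimitive_of_gcd_eq_one hv) (isPrimitive_of_gcd_eq_one hw) hform
  refine ⟨LinearMap.toMatrix' f.toLinearEquiv, ?_, ?_, ?_⟩
  · rw [LinearMap.det_toMatrix']
    exact f.toLinearEquiv.isUnit_det'
  · rw [← toMatrix₂'_polarBilin_formUU]
    exact transpose_toMatrix'_mul_polarBilin_mul f.toIsometry
  · rwa [LinearMap.toMatrix'_mulVec]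
end

section
/- Let K ≥ 1, let N₁,…,N_K be positive integers, and let t₁,…,t_K be integers satisfying the tadpole condition Σ_a N_a·t_a = −24. Set M = 16 − Σ_a N_a, and define n_V = Σ_a N_a² + M(2M−1) and n_H = −Σ_{a≠b} N_a N_b (2 + t_a + t_b) − Σ_a N_a(N_a−1)(1 + 2t_a) − 2M·Σ_a N_a(2 + t_a), where the first sum is over ordered pairs (a,b) with a ≠ b. Then n_H − n_V = 224. -/
/-!
The difference `n_H - n_V` sees the stacks only through the total rank `R = M + Σ N_a` and the
charge `T = Σ N_a t_a`: the quadratic moments `Σ N_a²` and `Σ N_a² t_a` coming from the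
bifundamentals, from the antisymmetrics and from the gauge bosons cancel, which leaves
`-dim SO(2R) - 2 (R - 1) T`. For `R = 16` and `T = -24` this is `-496 + 720 = 224`.
-/

namespace MagnetizedBranes

open Finset

variable {ι A : Type*} [Fintype ι] [CommRing A]

/-- The number `n_V` of vector multiplets of the gauge group `Π U(N_a) × SO(2M)`. The ranks lie in
an arbitrary commutative ring, because the anomaly computation is polynomial in them. -/
def vectorMultiplets (N : ι → A) (M : A) : A :=
  ∑ a, N a ^ 2 + M * (2 * M - 1)

/-- The number `n_H` of charged hypermultiplets: bifundamentals, antisymmetrics and vectors, in this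
order. The bifundamental multiplicities `-2 - (f_a - f_b)²` and `-2 - (f_a + f_b)²` of an unordered
pair add up to `-2 (2 + t_a + t_b)`, so the fluxes enter only through `t_a = f_a²`, and the factor
`2` is absorbed by summing over ordered pairs. -/
def chargedHypermultiplets [DecidableEq ι] (N t : ι → A) (M : A) : A :=
  -(∑ a, ∑ b ∈ univ.erase a, N a * N b * (2 + t a + t b))
    - ∑ a, N a * (N a - 1) * (1 + 2 * t a)
    - 2 * M * ∑ a, N a * (2 + t a)

theorem sum_sum_mul_mul_two_add_add (N t : ι → A) :
    ∑ a, ∑ b, N a * N b * (2 + t a + t b) =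
      2 * (∑ a, N a) * (∑ a, N a + ∑ a, N a * t a) := by
  have split (a b : ι) : N a * N b * (2 + t a + t b) =
      2 * (N a * N b) + N a * t a * N b + N a * (N b * t b) := by ring
  simp only [split, sum_add_distrib, ← mul_sum, ← sum_mul]
  ring

theorem sum_sum_erase_mul_mul_two_add_add [DecidableEq ι] (N t : ι → A) :
    ∑ a, ∑ b ∈ univ.erase a, N a * N b * (2 + t a + t b) =
      2 * (∑ a, N a) * (∑ a, N a + ∑ a, N a * t a)
        - 2 * (∑ a, N a ^ 2 + ∑ a, N a ^ 2 * t a) := by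
  have diagonal (a : ι) : N a * N a * (2 + t a + t a) = 2 * (N a ^ 2 + N a ^ 2 * t a) := by ring
  simp only [sum_erase_eq_sub (mem_univ _), sum_sub_distrib, sum_sum_mul_mul_two_add_add, diagonal,
    ← mul_sum, sum_add_distrib]

theorem sum_mul_sub_one_mul_one_add_two_mul (N t : ι → A) :
    ∑ a, N a * (N a - 1) * (1 + 2 * t a) =
      ∑ a, N a ^ 2 + 2 * ∑ a, N a ^ 2 * t a - (∑ a, N a + 2 * ∑ a, N a * t a) := by
  simp only [mul_sum, ← sum_add_distrib, ← sum_sub_distrib]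
  exact sum_congr rfl fun a _ ↦ by ring

theorem sum_mul_two_add (N t : ι → A) :
    ∑ a, N a * (2 + t a) = 2 * ∑ a, N a + ∑ a, N a * t a := by
  simp only [mul_add, sum_add_distrib, ← sum_mul, mul_comm]

theorem chargedHypermultiplets_sub_vectorMultiplets [DecidableEq ι] (N t : ι → A) (M : A) :
    chargedHypermultiplets N t M - vectorMultiplets N M =
      -((M + ∑ a, N a) * (2 * (M + ∑ a, N a) - 1))
        - 2 * (M + ∑ a, N a - 1) * ∑ a, N a * t a := by
  rw [chargedHypermultiplets, vectorMultiplets, sum_sum_erase_mul_mul_two_add_add,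
    sum_mul_sub_one_mul_one_add_two_mul, sum_mul_two_add]
  ring

end MagnetizedBranes

open MagnetizedBranes in
theorem anomaly_nH_sub_nV_eq_224_general {ι A : Type*} [Fintype ι] [DecidableEq ι] [CommRing A]
    (N t : ι → A) (M : A) (htadpole : ∑ a, N a * t a = -24) (hrank : M + ∑ a, N a = 16) :
    chargedHypermultiplets N t M - vectorMultiplets N M = 224 := by
  rw [chargedHypermultiplets_sub_vectorMultiplets, hrank, htadpole]
  norm_num

/-- Gravitational anomaly cancellation: for `K` stacks of `N_a` branes with flux
self-intersections `t_a` satisfying the tadpole condition `Σ N_a t_a = −24`, setting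
`M = 16 − Σ N_a`, the numbers `n_V` of vector multiplets and `n_H` of charged
hypermultiplets satisfy `n_H − n_V = 224`. -/
theorem anomaly_nH_sub_nV_eq_224 (K : ℕ) (hK : 1 ≤ K)
    (N : Fin K → ℕ) (hN : ∀ a, 0 < N a) (t : Fin K → ℤ)
    (htadpole : ∑ a, (N a : ℤ) * t a = -24)
    (M : ℤ) (hM : M = 16 - ∑ a, (N a : ℤ))
    (nV : ℤ) (hnV : nV = ∑ a, (N a : ℤ) ^ 2 + M * (2 * M - 1))
    (nH : ℤ) (hnH : nH =
      -(∑ a, ∑ b ∈ Finset.univ.erase a, (N a : ℤ) * (N b : ℤ) * (2 + t a + t b))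
      - ∑ a, (N a : ℤ) * ((N a : ℤ) - 1) * (1 + 2 * t a)
      - 2 * M * ∑ a, (N a : ℤ) * (2 + t a)) :
    nH - nV = 224 := by
  rw [hnH, hnV]
  exact anomaly_nH_sub_nV_eq_224_general (fun a ↦ (N a : ℤ)) t M htadpole (by rw [hM]; ring)
end

section
/- Every subset S of 𝔽₂⁴ with |S| ≥ 12 contains an affine hyperplane: there exist a nonzero 𝔽₂-linear functional φ on 𝔽₂⁴ and c ∈ 𝔽₂ such that {x ∈ 𝔽₂⁴ : φ(x) = c} ⊆ S. -/
/-!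
At most `dim V` points span a proper affine subspace of `V ≠ 0`, so they lie in an affine
hyperplane `{x : φ x = c}`. Applied to the complement of `S`, this puts the parallel hyperplane
`{x : φ x = c + 1}` inside `S`. In `𝔽₂⁴` the complement has at most `16 - 12 = 4` points.
-/

section VectorSpan

variable (K : Type*) {V P : Type*} [DivisionRing K] [AddCommGroup V] [Module K V]

theorem finrank_vectorSpan_lt_ncard [AddTorsor V P] {s : Set P} (hs : s.Finite)
    (hne : s.Nonempty) : Module.finrank K (vectorSpan K s) < s.ncard := by
  have := hs.fintype
  have := hne.to_subtype
  have hrange := finrank_vectorSpan_range_add_one_le K ((↑) : s → P)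
  rwa [Subtype.range_coe, ← Nat.card_eq_fintype_card, Nat.card_coe_set_eq] at hrange

variable {K}

theorem vectorSpan_lt_top_of_ncard_le_rank [Nontrivial V] [AddTorsor V P] {s : Set P}
    (hs : s.Finite) (hcard : (s.ncard : Cardinal) ≤ Module.rank K V) : vectorSpan K s < ⊤ := by
  obtain rfl | hne := s.eq_empty_or_nonempty
  · simp only [vectorSpan_empty, bot_lt_top]
  have := finiteDimensional_vectorSpan_of_finite K hs
  refine lt_top_iff_ne_top.mpr fun htop ↦ lt_irrefl (s.ncard : Cardinal) ?_
  calc (s.ncard : Cardinal) ≤ Module.rank K V := hcard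
    _ = Module.rank K (vectorSpan K s) := by rw [htop, rank_top]
    _ = Module.finrank K (vectorSpan K s) := (Module.finrank_eq_rank K _).symm
    _ < s.ncard := mod_cast finrank_vectorSpan_lt_ncard K hs hne

theorem exists_ne_zero_forall_mem_eq_of_vectorSpan_lt_top {s : Set V} (hs : vectorSpan K s < ⊤) :
    ∃ (φ : V →ₗ[K] K) (c : K), φ ≠ 0 ∧ ∀ x ∈ s, φ x = c := by
  obtain ⟨φ, hφ, hker⟩ := (vectorSpan K s).exists_le_ker_of_lt_top hs
  obtain rfl | ⟨a, ha⟩ := s.eq_empty_or_nonempty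
  · exact ⟨φ, 0, hφ, by simp⟩
  refine ⟨φ, φ a, hφ, fun x hx ↦ LinearMap.sub_mem_ker_iff.mp ?_⟩
  exact hker (vsub_mem_vectorSpan K hx ha)

theorem twelve_points_contain_hyperplane_general [Nontrivial V] {S : Set V} (hfin : Sᶜ.Finite)
    (hcard : (Sᶜ.ncard : Cardinal) ≤ Module.rank K V) :
    ∃ (φ : V →ₗ[K] K) (c : K), φ ≠ 0 ∧ ∀ x, φ x = c → x ∈ S := by
  obtain ⟨φ, c, hφ, hc⟩ := exists_ne_zero_forall_mem_eq_of_vectorSpan_lt_top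
    (vectorSpan_lt_top_of_ncard_le_rank hfin hcard)
  refine ⟨φ, c + 1, hφ, fun x hx ↦ by_contra fun hxS ↦ ?_⟩
  have hparallel : c + 1 = c := hx.symm.trans (hc x hxS)
  exact one_ne_zero (add_eq_left.mp hparallel)

end VectorSpan

/-- Every subset of `𝔽₂⁴` with at least 12 elements contains an affine hyperplane
`{x : φ(x) = c}` for some nonzero linear functional `φ` and constant `c`. -/
theorem twelve_points_contain_hyperplane (S : Finset (Fin 4 → ZMod 2))
    (hS : 12 ≤ S.card) :
    ∃ (φ : (Fin 4 → ZMod 2) →ₗ[ZMod 2] ZMod 2) (c : ZMod 2),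
      φ ≠ 0 ∧ ∀ x : Fin 4 → ZMod 2, φ x = c → x ∈ S := by
  have hcompl : (S : Set (Fin 4 → ZMod 2))ᶜ.ncard ≤ 4 := by
    rw [Set.ncard_compl, Set.ncard_coe_finset, Nat.card_fun, Nat.card_zmod, Nat.card_fin]
    omega
  refine twelve_points_contain_hyperplane_general (Set.toFinite _) ?_
  rw [rank_fin_fun]
  exact mod_cast hcompl
end

section
/- There exists an 11-element subset of 𝔽₂⁴ containing no affine hyperplane. Explicitly, the set S = {(0,0,0,0), (1,0,0,0), (0,1,0,0), (0,0,1,0), (1,0,1,0), (0,1,1,0), (1,1,1,0), (0,0,0,1), (1,0,0,1), (0,1,0,1), (0,0,1,1)} ⊆ 𝔽₂⁴ contains no affine hyperplane: for every nonzero 𝔽₂-linear functional φ and every c ∈ 𝔽₂, the set {x : φ(x) = c} is not a subset of S. -/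
/-!
A hyperplane `φ = c` over `𝔽₂` has only one other parallel, `φ = c + 1`. Hence if `φ = c` lies in
`S`, then `φ` is constant on the complement of `S`, so it vanishes on all differences of points of
the complement. The five points missing from `elevenPoints` affinely span `𝔽₂⁴`, which forces
`φ = 0`.
-/

/-- The explicit 11-point subset of `𝔽₂⁴`. -/
def elevenPoints : Set (Fin 4 → ZMod 2) :=
  {![0,0,0,0], ![1,0,0,0], ![0,1,0,0], ![0,0,1,0], ![1,0,1,0], ![0,1,1,0],
    ![1,1,1,0], ![0,0,0,1], ![1,0,0,1], ![0,1,0,1], ![0,0,1,1]}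

theorem linearMap_eq_zero_of_vectorSpan_eq_top {k V W : Type*} [Ring k] [AddCommGroup V]
    [Module k V] [AddCommGroup W] [Module k W] {T : Set V} (hT : vectorSpan k T = ⊤)
    {f : V →ₗ[k] W} {a : W} (hf : ∀ x ∈ T, f x = a) : f = 0 := by
  refine LinearMap.ext_on hT ?_
  rintro _ ⟨x, hx, y, hy, rfl⟩
  simp [hf x hx, hf y hy]

theorem not_hyperplane_subset_of_vectorSpan_compl_eq_top {V : Type*} [AddCommGroup V]
    [Module (ZMod 2) V] {S : Set V} (hS : vectorSpan (ZMod 2) Sᶜ = ⊤)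
    {φ : V →ₗ[ZMod 2] ZMod 2} (hφ : φ ≠ 0) (c : ZMod 2) : ¬ {x | φ x = c} ⊆ S := by
  intro hsub
  have eq_add_one_of_ne : ∀ a b : ZMod 2, a ≠ b → a = b + 1 := by decide
  have apply_compl : ∀ x ∈ Sᶜ, φ x = c + 1 := fun x hx =>
    eq_add_one_of_ne _ _ fun hxc => hx (hsub hxc)
  exact hφ (linearMap_eq_zero_of_vectorSpan_eq_top hS apply_compl)

theorem vectorSpan_eq_top_of_forall_single {k ι : Type*} [Ring k] [Finite ι] [DecidableEq ι]
    {T : Set (ι → k)} (hT : ∀ i, ∃ p ∈ T, ∃ q ∈ T, p - q = Pi.single i 1) :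
    vectorSpan k T = ⊤ := by
  rw [eq_top_iff, ← (Pi.basisFun k ι).span_eq, Submodule.span_le, Set.range_subset_iff]
  intro i
  obtain ⟨p, hp, q, hq, hpq⟩ := hT i
  rw [Pi.basisFun_apply, ← hpq]
  exact vsub_mem_vectorSpan k hp hq

theorem compl_elevenPoints :
    elevenPointsᶜ = {![1,1,0,0], ![1,1,0,1], ![1,0,1,1], ![0,1,1,1], ![1,1,1,1]} := by
  ext x
  simp only [elevenPoints, Set.mem_compl_iff, Set.mem_insert_iff, Set.mem_singleton_iff]
  revert x
  decide

theorem ncard_elevenPoints : elevenPoints.ncard = 11 := by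
  rw [elevenPoints, Set.ncard_eq_toFinset_card']
  decide

theorem vectorSpan_compl_elevenPoints : vectorSpan (ZMod 2) elevenPointsᶜ = ⊤ := by
  rw [compl_elevenPoints]
  refine vectorSpan_eq_top_of_forall_single fun i => ?_
  fin_cases i
  · exact ⟨![1,1,1,1], by simp, ![0,1,1,1], by simp, by decide⟩
  · exact ⟨![1,1,1,1], by simp, ![1,0,1,1], by simp, by decide⟩
  · exact ⟨![1,1,1,1], by simp, ![1,1,0,1], by simp, by decide⟩
  · exact ⟨![1,1,0,1], by simp, ![1,1,0,0], by simp, by decide⟩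

/-- The explicit set `elevenPoints` has 11 elements and contains no affine hyperplane:
for every nonzero linear functional `φ` on `𝔽₂⁴` and every `c ∈ 𝔽₂`, the hyperplane
`{x : φ(x) = c}` is not a subset of it. -/
theorem eleven_points_no_hyperplane :
    elevenPoints.ncard = 11 ∧
      ∀ (φ : (Fin 4 → ZMod 2) →ₗ[ZMod 2] ZMod 2), φ ≠ 0 → ∀ c : ZMod 2,
        ¬ ({x : Fin 4 → ZMod 2 | φ x = c} ⊆ elevenPoints) :=
  ⟨ncard_elevenPoints, fun _ hφ c =>
    not_hyperplane_subset_of_vectorSpan_compl_eq_top vectorSpan_compl_elevenPoints hφ c⟩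
end
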